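/- For n ≥ 1, if G ∈ G_{n,n+3} is not a weak subdivision of K_{3,3}, then there exists a bridgeless graph H ∈ G_{n,n+3} such that d_2(H) ≤ d_2(G), d_3(H) < d_3(G) and d_4(H) < d_4(G). Hence, for every p ∈ (0,1), any p-optimal (n,n+3)-graph is a weak subdivision of K_{3,3}. -/

import Mathlib

open Classical Finset

noncomputable section

/-- A finite multigraph: edges carry two (possibly equal) endpoints. -/
structure Multigraph where
  V : Type
  E : Type
  [fintV : Fintype V]
  [fintE : Fintype E]
  src : E → V
  tgt : E → V

attribute [instance] Multigraph.fintV Multigraph.fintE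

namespace Multigraph

variable (G : Multigraph)

/-- Number of vertices. -/
def nV : ℕ := Fintype.card G.V

/-- Number of edges (with multiplicity). -/
def nE : ℕ := Fintype.card G.E

/-- One step along an edge belonging to the edge set `S`. -/
def stepOn (S : Finset G.E) (u v : G.V) : Prop :=
  ∃ e ∈ S, (G.src e = u ∧ G.tgt e = v) ∨ (G.src e = v ∧ G.tgt e = u)

/-- The spanning subgraph with edge set `S` is connected. -/
def ConnOn (S : Finset G.E) : Prop :=
  ∀ u v : G.V, Relation.ReflTransGen (G.stepOn S) u v

/-- `G` is connected. -/
def Connected : Prop := G.ConnOn Finset.univ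

/-- The edge set `F` disconnects `G` (i.e. is a disconnection). -/
def Disconnects (F : Finset G.E) : Prop := ¬ G.ConnOn (Finset.univ \ F)

/-- `d i G`: the number of `i`-disconnections of `G`. -/
def d (i : ℕ) : ℕ :=
  ((Finset.univ : Finset (Finset G.E)).filter fun F => F.card = i ∧ G.Disconnects F).card

/-- The all-terminal reliability `R(G,p)`: each edge is independently retained with
probability `p`; this is the probability that the retained spanning subgraph is connected. -/
def rel (p : ℝ) : ℝ :=
  ∑ S : Finset G.E, if G.ConnOn S then p ^ S.card * (1 - p) ^ (G.nE - S.card) else 0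

/-- `e` is a bridge. -/
def IsBridge (e : G.E) : Prop := G.Disconnects {e}

def Bridgeless : Prop := ∀ e : G.E, ¬ G.IsBridge e

/-- The number of spanning trees of `G` (connected spanning subgraphs with `nV - 1` edges). -/
def treeCount : ℕ :=
  ((Finset.univ : Finset (Finset G.E)).filter fun S => S.card + 1 = G.nV ∧ G.ConnOn S).card

/-- The edge-connectivity: the least size of a disconnecting set of edges. -/
def edgeConnectivity : ℕ :=
  sInf {i : ℕ | ∃ F : Finset G.E, F.card = i ∧ G.Disconnects F}

/-- Degree of a vertex (a loop counts twice). -/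
def deg (v : G.V) : ℕ :=
  (Finset.univ.filter fun e => G.src e = v).card +
    (Finset.univ.filter fun e => G.tgt e = v).card

/-- The edges crossing the vertex set `A`. -/
def cutEdges (A : Finset G.V) : Finset G.E :=
  Finset.univ.filter fun e =>
    (G.src e ∈ A ∧ G.tgt e ∉ A) ∨ (G.src e ∉ A ∧ G.tgt e ∈ A)

/-- `F` is a cut: the set of edges crossing a nontrivial bipartition of the vertices. -/
def IsCut (F : Finset G.E) : Prop :=
  ∃ A : Finset G.V, A.Nonempty ∧ A ≠ Finset.univ ∧ F = G.cutEdges A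

/-- `F` is a bond: a minimal cut. -/
def IsBond (F : Finset G.E) : Prop :=
  G.IsCut F ∧ ∀ F' ⊆ F, G.IsCut F' → F' = F

/-- Number of `s`-bonds of `G`. -/
def bondCount (s : ℕ) : ℕ :=
  ((Finset.univ : Finset (Finset G.E)).filter fun F => F.card = s ∧ G.IsBond F).card

/-- Adjacency of vertices. -/
def Adj (u v : G.V) : Prop :=
  ∃ e : G.E, (G.src e = u ∧ G.tgt e = v) ∨ (G.src e = v ∧ G.tgt e = u)

/-- `G` is simple: no loops and no parallel edges. -/
def IsSimple : Prop :=
  (∀ e : G.E, G.src e ≠ G.tgt e) ∧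
    ∀ e f : G.E,
      ((G.src e = G.src f ∧ G.tgt e = G.tgt f) ∨ (G.src e = G.tgt f ∧ G.tgt e = G.src f)) →
        e = f

end Multigraph

/-- `G ∈ 𝒢_{n,m}`: connected with `n` vertices and `m` edges. -/
def memG (G : Multigraph) (n m : ℕ) : Prop :=
  G.nV = n ∧ G.nE = m ∧ G.Connected

/-- Isomorphism of multigraphs. -/
structure MGIso (G H : Multigraph) where
  vMap : G.V ≃ H.V
  eMap : G.E ≃ H.E
  ends_eq : ∀ e : G.E,
    (H.src (eMap e) = vMap (G.src e) ∧ H.tgt (eMap e) = vMap (G.tgt e)) ∨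
    (H.src (eMap e) = vMap (G.tgt e) ∧ H.tgt (eMap e) = vMap (G.src e))

def IsIso (G H : Multigraph) : Prop := Nonempty (MGIso G H)

/-- `G` is `p`-optimal in `𝒢_{n,m}`. -/
def pOptimal (G : Multigraph) (n m : ℕ) (p : ℝ) : Prop :=
  memG G n m ∧ ∀ H : Multigraph, memG H n m → H.rel p ≤ G.rel p

/-- `G` is uniquely optimal in `𝒢_{n,m}`: strictly more reliable than every
non-isomorphic member, for every `p ∈ (0,1)`. -/
def UniquelyOptimal (G : Multigraph) (n m : ℕ) : Prop :=
  memG G n m ∧ ∀ H : Multigraph, memG H n m → ¬ IsIso G H →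
    ∀ p : ℝ, 0 < p → p < 1 → H.rel p < G.rel p

noncomputable instance quotFintype {α : Type} [Fintype α] {r : α → α → Prop} :
    Fintype (Quot r) :=
  letI := Classical.decEq (Quot r)
  Fintype.ofSurjective (Quot.mk r) fun q => Quot.exists_rep q

/-- Identification of the endpoints of zero-weight edges. -/
def zeroRel (D : Multigraph) (w : D.E → ℕ) : D.V → D.V → Prop :=
  fun u v => ∃ e : D.E, w e = 0 ∧ D.src e = u ∧ D.tgt e = v

/-- The `j`-th node along the chain replacing the edge `e` (whose chain has `w e` edges). -/
def chainNode (D : Multigraph) (w : D.E → ℕ) (e : D.E) (j : ℕ) :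
    Quot (zeroRel D w) ⊕ (Σ f : D.E, Fin (w f - 1)) :=
  if h : 0 < j ∧ j < w e then Sum.inr ⟨e, ⟨j - 1, by omega⟩⟩
  else if j = 0 then Sum.inl (Quot.mk _ (D.src e))
  else Sum.inl (Quot.mk _ (D.tgt e))

/-- The weak subdivision of `D` determined by the chain lengths `w`: each edge `e` is
replaced by a chain with `w e` edges; zero-weight edges are contracted. -/
def subdivide (D : Multigraph) (w : D.E → ℕ) : Multigraph where
  V := Quot (zeroRel D w) ⊕ (Σ f : D.E, Fin (w f - 1))
  E := Σ f : D.E, Fin (w f)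
  src f := chainNode D w f.1 f.2.val
  tgt f := chainNode D w f.1 (f.2.val + 1)

/-- The zero-weight edges contain no cycle (no "zero cycle"): they form a forest. -/
def ZeroAcyclic (D : Multigraph) (w : D.E → ℕ) : Prop :=
  Fintype.card (Quot (zeroRel D w)) +
      (Finset.univ.filter fun e : D.E => w e = 0).card = Fintype.card D.V

/-- `G` is a weak subdivision of `D` with chain lengths `w`. -/
def IsWeakSubdivision (G D : Multigraph) (w : D.E → ℕ) : Prop :=
  ZeroAcyclic D w ∧ IsIso G (subdivide D w)

/-- `D` is a weak distillation of `G`. -/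
def IsWeakDistillation (D G : Multigraph) : Prop :=
  ∃ w : D.E → ℕ, IsWeakSubdivision G D w

/-- The chain lengths differ pairwise by at most one. -/
def BalancedWeights {E : Type} (w : E → ℕ) : Prop := ∀ e f : E, w e ≤ w f + 1

/-- `D ∈ 𝒟_k`: connected, cubic, 3-edge-connected, of exceedance `k`. -/
def memDk (k : ℕ) (D : Multigraph) : Prop :=
  D.Connected ∧ (∀ v : D.V, D.deg v = 3) ∧
    (∀ F : Finset D.E, D.Disconnects F → 3 ≤ F.card) ∧ D.nE = D.nV + k

/-- Identification of the two endpoints of the edge `e`. -/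
def contractRel (G : Multigraph) (e : G.E) : G.V → G.V → Prop :=
  fun u v => u = G.src e ∧ v = G.tgt e

/-- Contraction of the edge `e`. -/
def Multigraph.contract (G : Multigraph) (e : G.E) : Multigraph :=
  letI := Classical.decEq G.E
  { V := Quot (contractRel G e)
    E := {f : G.E // f ≠ e}
    src := fun f => Quot.mk _ (G.src f.1)
    tgt := fun f => Quot.mk _ (G.tgt f.1) }

/-- `G'` is obtained from `G` by shifting an edge: in an intermediate graph `H`
(the expansion of `G` at a vertex by the new edge `e'`), the edges `e, e'` form a
2-bond; contracting `e'` gives back `G`, while contracting `e` gives `G'`. -/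
def IsShiftOf (G G' : Multigraph) : Prop :=
  ∃ (H : Multigraph) (e e' : H.E), e ≠ e' ∧
    H.src e ≠ H.tgt e ∧ H.src e' ≠ H.tgt e' ∧
    H.IsBond {e, e'} ∧
    IsIso (H.contract e') G ∧ IsIso (H.contract e) G'

/-- Equivalence of graphs: repeated edge shifting. -/
def EquivalentGraphs (G G' : Multigraph) : Prop :=
  Relation.ReflTransGen IsShiftOf G G'

/-- `G'` is obtained from `G` by moving the (non-loop) edge `e`: contracting `e` and
expanding a new edge, identified with `e` via `φ`, at an arbitrary vertex.
Equivalently, `G/e` and `G'/φ e` agree, compatibly with the edge identification `φ`. -/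
def MovedEdge (G G' : Multigraph) (φ : G.E ≃ G'.E) (e : G.E) : Prop :=
  G.src e ≠ G.tgt e ∧ G'.src (φ e) ≠ G'.tgt (φ e) ∧
  ∃ ψ : Quot (contractRel G e) ≃ Quot (contractRel G' (φ e)),
    ∀ f : G.E, f ≠ e →
      ((ψ (Quot.mk _ (G.src f)) = Quot.mk _ (G'.src (φ f)) ∧
        ψ (Quot.mk _ (G.tgt f)) = Quot.mk _ (G'.tgt (φ f))) ∨
       (ψ (Quot.mk _ (G.src f)) = Quot.mk _ (G'.tgt (φ f)) ∧
        ψ (Quot.mk _ (G.tgt f)) = Quot.mk _ (G'.src (φ f))))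

/-- Move one edge from the chain `a` to the chain `b`. -/
def moveWeight {E : Type} (w : E → ℕ) (a b : E) : E → ℕ :=
  fun g => if g = b then w b + 1 else if g = a then w a - 1 else w g

/-- The chains of maximal length. -/
def maxChains (D : Multigraph) (w : D.E → ℕ) : Finset D.E :=
  Finset.univ.filter fun e => ∀ f : D.E, w f ≤ w e

/-- The chains of minimal length. -/
def minChains (D : Multigraph) (w : D.E → ℕ) : Finset D.E :=
  Finset.univ.filter fun e => ∀ f : D.E, w e ≤ w f

/-- Degree of `v` within the edge set `S`. -/
def degIn (D : Multigraph) (S : Finset D.E) (v : D.V) : ℕ :=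
  (S.filter fun e => D.src e = v).card + (S.filter fun e => D.tgt e = v).card

/-- `S` is a matching (pairwise non-adjacent edges). -/
def IsMatchingIn (D : Multigraph) (S : Finset D.E) : Prop := ∀ v : D.V, degIn D S v ≤ 1

/-- `S` is a path with three edges. -/
def IsPath3In (D : Multigraph) (S : Finset D.E) : Prop :=
  S.card = 3 ∧ (∀ v : D.V, degIn D S v ≤ 2) ∧
    (Finset.univ.filter fun v : D.V => degIn D S v = 1).card = 2

/-- `S` is the disjoint union of a path with three edges and a single edge. -/
def IsPath3PlusEdgeIn (D : Multigraph) (S : Finset D.E) : Prop :=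
  S.card = 4 ∧ (∀ v : D.V, degIn D S v ≤ 2) ∧
    (Finset.univ.filter fun v : D.V => degIn D S v = 1).card = 4 ∧
    ∃ e ∈ S, degIn D S (D.src e) = 2 ∧ degIn D S (D.tgt e) = 2

/-- `S` is the disjoint union of two paths with two edges each. -/
def IsTwoPlusTwoIn (D : Multigraph) (S : Finset D.E) : Prop :=
  S.card = 4 ∧ (∀ v : D.V, degIn D S v ≤ 2) ∧
    (Finset.univ.filter fun v : D.V => degIn D S v = 1).card = 4 ∧
    ∀ e ∈ S, degIn D S (D.src e) = 1 ∨ degIn D S (D.tgt e) = 1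

/-- Two edges sharing a vertex. -/
def AdjEdges (D : Multigraph) (a b : D.E) : Prop :=
  ∃ v : D.V, (D.src a = v ∨ D.tgt a = v) ∧ (D.src b = v ∨ D.tgt b = v)

/-- The number of incidences of edges of weight `c` at the vertex `u`. -/
def incCount (D : Multigraph) (w : D.E → ℕ) (u : D.V) (c : ℕ) : ℕ :=
  (Finset.univ.filter fun e : D.E => D.src e = u ∧ w e = c).card +
    (Finset.univ.filter fun e : D.E => D.tgt e = u ∧ w e = c).card

/-- The `π^v`-value of the vertex `u`: the number of incident edges of weight `q + 1`
minus the number of incident edges of weight `q - 1`. -/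
def piV (D : Multigraph) (w : D.E → ℕ) (q : ℕ) (u : D.V) : ℤ :=
  (incCount D w u (q + 1) : ℤ) -
    (if q = 0 then 0 else (incCount D w u (q - 1) : ℤ))

/-- The `π^v`-values are balanced: pairwise differences at most one. -/
def BalancedPiV (D : Multigraph) (w : D.E → ℕ) (q : ℕ) : Prop :=
  ∀ u v : D.V, piV D w q u ≤ piV D w q v + 1

/-- The standard weight `q`, where `m = 3kq + r` with `-3k/2 < r ≤ 3k/2`. -/
def stdWeight (m k : ℕ) : ℕ := (2 * m + 3 * k - 1) / (6 * k)

/-- `w` is a balanced weighting of `D` of total size `m` (the implied weak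
subdivision is the generic member of `ℬ_m(D)`). -/
def IsBalancedWeighting (D : Multigraph) (w : D.E → ℕ) (m : ℕ) : Prop :=
  (∑ e : D.E, w e) = m ∧ BalancedWeights w ∧ ZeroAcyclic D w

/-- Every 3-bond of `D` is trivial (consists of the three edges at a single vertex). -/
def OnlyTrivialThreeBonds (D : Multigraph) : Prop :=
  ∀ F : Finset D.E, D.IsBond F → F.card = 3 →
    ∃ u : D.V, F = Finset.univ.filter fun e => D.src e = u ∨ D.tgt e = u

/-- The 3-dipole: two vertices joined by three parallel edges. -/
def dipole3 : Multigraph where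
  V := Fin 2
  E := Fin 3
  src _ := 0
  tgt _ := 1

/-- The complete graph `K₄`. -/
def K4 : Multigraph where
  V := Fin 4
  E := {p : Fin 4 × Fin 4 // p.1 < p.2}
  src p := p.1.1
  tgt p := p.1.2

/-- The complete bipartite graph `K_{3,3}`. -/
def K33 : Multigraph where
  V := Fin 3 ⊕ Fin 3
  E := Fin 3 × Fin 3
  src p := Sum.inl p.1
  tgt p := Sum.inr p.2

/-- The triangular prism `Π₃`; the edges `Sum.inr i` are the rungs. -/
def prism : Multigraph where
  V := Fin 3 × Bool
  E := (Fin 3 × Bool) ⊕ Fin 3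
  src := fun e => match e with
    | Sum.inl (i, b) => (i, b)
    | Sum.inr i => (i, false)
  tgt := fun e => match e with
    | Sum.inl (i, b) => (i + 1, b)
    | Sum.inr i => (i, true)

/-- The Wagner graph (the 4-Möbius ladder): the edges `Sum.inl i` are the rails
(the 8-cycle) and the edges `Sum.inr j` are the rungs. -/
def wagner : Multigraph where
  V := Fin 8
  E := Fin 8 ⊕ Fin 4
  src := fun e => match e with
    | Sum.inl i => i
    | Sum.inr j => ⟨j.val, by omega⟩
  tgt := fun e => match e with
    | Sum.inl i => i + 1
    | Sum.inr j => ⟨j.val + 4, by omega⟩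

/-- The Petersen graph. -/
def petersen : Multigraph where
  V := Fin 5 × Bool
  E := Fin 5 ⊕ Fin 5 ⊕ Fin 5
  src := fun e => match e with
    | Sum.inl i => (i, false)
    | Sum.inr (Sum.inl i) => (i, false)
    | Sum.inr (Sum.inr i) => (i, true)
  tgt := fun e => match e with
    | Sum.inl i => (i + 1, false)
    | Sum.inr (Sum.inl i) => (i, true)
    | Sum.inr (Sum.inr i) => (i + 2, true)

/-!
Deleting edges of a weak subdivision keeps it connected exactly when at most one edge is deleted
from each chain and the chains that are hit can be deleted from the distillation. So the number of
sets of `i` edges whose deletion keeps a weak subdivision connected (its coindependent `i`-sets) is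
a polynomial in the chain lengths, and `d i` is the complementary count.

A bridge of `G` can be contracted and reinserted into another edge, which creates coindependent sets
and destroys none, until no bridge is left. A bridgeless `G` of exceedance 3 is built from a cycle
by three ears, hence is a weak subdivision of one of the five bridgeless cubic multigraphs on six
vertices: `K₃,₃`, the prism, and three that have digons. Re-expanding empty chains leads from each
of them towards `K₃,₃`, so if `G` is not a weak subdivision of `K₃,₃`, certain chains are nonempty.
The coindependence polynomial of a multigraph with digons is a specialisation of that of the prism,
and the prism is compared with `K₃,₃` by exchanging the ends of two triangle edges or by shifting a
unit of length between the triangles, with induction on their imbalance.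
-/

namespace Multigraph

variable {G H : Multigraph}

/-! ### Connectivity and colourings -/

section Colourings

variable {S T : Finset G.E}

theorem ConnOn.eq_of_forall_edge (h : G.ConnOn S) {α : Type*} (c : G.V → α)
    (hc : ∀ e ∈ S, c (G.src e) = c (G.tgt e)) (u v : G.V) : c u = c v := by
  induction h u v with
  | refl => rfl
  | tail _ hstep ih =>
    obtain ⟨e, he, ⟨rfl, rfl⟩ | ⟨rfl, rfl⟩⟩ := hstep
    · exact ih.trans (hc e he)
    · exact ih.trans (hc e he).symm

theorem connOn_of_forall_prop
    (h : ∀ c : G.V → Prop, (∀ e ∈ S, c (G.src e) = c (G.tgt e)) → ∀ u v, c u = c v) :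
    G.ConnOn S := by
  intro u v
  refine (h (Relation.ReflTransGen (G.stepOn S) u)
    (fun e he => propext ⟨fun hu => ?_, fun hu => ?_⟩) u v).mp .refl
  · exact hu.tail ⟨e, he, .inl ⟨rfl, rfl⟩⟩
  · exact hu.tail ⟨e, he, .inr ⟨rfl, rfl⟩⟩

theorem connOn_of_forall_colouring {α : Type*} [Nontrivial α]
    (h : ∀ c : G.V → α, (∀ e ∈ S, c (G.src e) = c (G.tgt e)) → ∀ u v, c u = c v) :
    G.ConnOn S := by
  obtain ⟨a, b, hab⟩ := exists_pair_ne α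
  refine connOn_of_forall_prop fun c hc u v => ?_
  have := h (fun x => if c x then a else b) (fun e he => by simp only [hc e he]) u v
  by_cases hu : c u <;> by_cases hv : c v <;> simp_all [hab.symm]

theorem ConnOn.mono (h : G.ConnOn S) (hST : S ⊆ T) : G.ConnOn T :=
  connOn_of_forall_prop fun c hc => h.eq_of_forall_edge c fun e he => hc e (hST he)

end Colourings

section Coboundary

variable {S : Finset G.E}

variable (G) in
/-- The mod-2 coboundary of `G` restricted to the edge set `S`: a vertex colouring is sent to the
colour differences along the edges of `S`. Its kernel consists of the colourings that are constant
on the components of `(V, S)`, which turns counting components into linear algebra. -/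
def coboundary (S : Finset G.E) : (G.V → ZMod 2) →ₗ[ZMod 2] (S → ZMod 2) where
  toFun c e := c (G.src e) - c (G.tgt e)
  map_add' a b := by ext e; simp only [Pi.add_apply]; ring
  map_smul' a b := by ext e; simp only [Pi.smul_apply, RingHom.id_apply, smul_sub]

theorem coboundary_apply (c : G.V → ZMod 2) (e : S) :
    G.coboundary S c e = c (G.src e) - c (G.tgt e) := rfl

theorem mem_ker_coboundary {c : G.V → ZMod 2} :
    c ∈ LinearMap.ker (G.coboundary S) ↔ ∀ e ∈ S, c (G.src e) = c (G.tgt e) := by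
  simp only [LinearMap.mem_ker, funext_iff, coboundary_apply, Pi.zero_apply, sub_eq_zero,
    Subtype.forall]

variable [Nonempty G.V]

theorem ConnOn.finrank_ker_coboundary (h : G.ConnOn S) :
    Module.finrank (ZMod 2) (LinearMap.ker (G.coboundary S)) = 1 := by
  obtain ⟨v⟩ := ‹Nonempty G.V›
  have hker : LinearMap.ker (G.coboundary S) =
      Submodule.span (ZMod 2) {(fun _ => 1 : G.V → ZMod 2)} := by
    ext c
    rw [mem_ker_coboundary, Submodule.mem_span_singleton]
    constructor
    · exact fun hc => ⟨c v, funext fun u => by simp [h.eq_of_forall_edge c hc u v]⟩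
    · rintro ⟨a, rfl⟩ e _
      rfl
  rw [hker]
  exact finrank_span_singleton fun h0 => one_ne_zero (congrFun h0 v)

theorem ConnOn.finrank_range_coboundary (h : G.ConnOn S) :
    Module.finrank (ZMod 2) (LinearMap.range (G.coboundary S)) + 1 = G.nV := by
  have := LinearMap.finrank_range_add_finrank_ker (G.coboundary S)
  rwa [h.finrank_ker_coboundary, Module.finrank_fintype_fun_eq_card] at this

theorem ConnOn.nV_le_card_add_one (h : G.ConnOn S) : G.nV ≤ #S + 1 := by
  have hle := Submodule.finrank_le (LinearMap.range (G.coboundary S))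
  rw [Module.finrank_fintype_fun_eq_card, Fintype.card_coe] at hle
  have := h.finrank_range_coboundary
  omega

theorem ConnOn.surjective_coboundary (h : G.ConnOn S) (hcard : #S + 1 = G.nV) :
    Function.Surjective (G.coboundary S) := by
  refine LinearMap.range_eq_top.1 (Submodule.eq_top_of_finrank_eq ?_)
  have := h.finrank_range_coboundary
  rw [Module.finrank_fintype_fun_eq_card, Fintype.card_coe]
  omega

omit [Nonempty G.V] in
theorem single_mem_range_coboundary {e : G.E} (he : e ∈ S) (hS : G.ConnOn S)
    (hSe : ¬ G.ConnOn (S.erase e)) :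
    Pi.single ⟨e, he⟩ 1 ∈ LinearMap.range (G.coboundary S) := by
  obtain ⟨c, hc, u, v, huv⟩ : ∃ c : G.V → ZMod 2,
      (∀ f ∈ S.erase e, c (G.src f) = c (G.tgt f)) ∧ ∃ u v, c u ≠ c v := by
    by_contra! hcon
    exact hSe (connOn_of_forall_colouring hcon)
  have hne : c (G.src e) ≠ c (G.tgt e) := fun heq =>
    huv <| hS.eq_of_forall_edge c (fun f hf => by
      by_cases hfe : f = e
      · rwa [hfe]
      · exact hc f (mem_erase.2 ⟨hfe, hf⟩)) u v
  refine ⟨c, funext fun f => ?_⟩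
  rw [coboundary_apply]
  by_cases hfe : f.1 = e
  · obtain rfl : f = ⟨e, he⟩ := Subtype.ext hfe
    rw [Pi.single_eq_same]
    exact (show ∀ a b : ZMod 2, a ≠ b → a - b = 1 by decide) _ _ hne
  · rw [Pi.single_eq_of_ne fun h => hfe (congrArg Subtype.val h),
      hc f (mem_erase.2 ⟨hfe, f.2⟩), sub_self]

theorem ConnOn.exists_spanning_tree (h : G.ConnOn S) :
    ∃ T ⊆ S, G.ConnOn T ∧ #T + 1 = G.nV := by
  obtain ⟨T, hT⟩ := (S.powerset.filter fun T => G.ConnOn T).exists_minimal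
    ⟨S, mem_filter.2 ⟨mem_powerset_self S, h⟩⟩
  obtain ⟨hTS, hTconn⟩ := mem_filter.1 hT.prop
  rw [mem_powerset] at hTS
  have hmin (e : G.E) (he : e ∈ T) : ¬ G.ConnOn (T.erase e) := fun hcon =>
    notMem_erase e T (hT.le_of_le (mem_filter.2
      ⟨mem_powerset.2 ((erase_subset e T).trans hTS), hcon⟩) (erase_subset e T) he)
  have htop : LinearMap.range (G.coboundary T) = ⊤ := by
    rw [eq_top_iff, ← (Pi.basisFun (ZMod 2) T).span_eq, Submodule.span_le]
    rintro _ ⟨e, rfl⟩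
    rw [Pi.basisFun_apply]
    exact single_mem_range_coboundary e.2 hTconn (hmin e e.2)
  have hrank := hTconn.finrank_range_coboundary
  rw [htop, finrank_top, Module.finrank_fintype_fun_eq_card, Fintype.card_coe] at hrank
  exact ⟨T, hTS, hTconn, hrank⟩

end Coboundary

/-! ### Coindependent sets and reliability -/

section Coindependence

variable (G) in
/-- The coindependent `i`-sets of `G` (in the sense of its cycle matroid): the sets of `i` edges
whose deletion leaves `G` connected. They are the complement of the `i`-disconnections. -/
def coindep (i : ℕ) : Finset (Finset G.E) :=
  univ.filter fun F => #F = i ∧ G.ConnOn (univ \ F)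

theorem mem_coindep {i : ℕ} {F : Finset G.E} :
    F ∈ G.coindep i ↔ #F = i ∧ G.ConnOn (univ \ F) := by
  simp only [coindep, mem_filter, mem_univ, true_and]

theorem d_add_card_coindep (i : ℕ) : G.d i + #(G.coindep i) = G.nE.choose i := by
  have hpow : (univ.filter fun F : Finset G.E => #F = i) = powersetCard i univ := by
    ext F
    simp only [mem_filter, mem_univ, true_and, mem_powersetCard_univ]
  have hsplit := card_filter_add_card_filter_not (s := univ.filter fun F : Finset G.E => #F = i)
    (p := fun F => G.Disconnects F)
  rw [filter_filter, filter_filter] at hsplit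
  simp only [Disconnects, not_not] at hsplit
  rw [nE, ← card_univ, ← card_powersetCard, ← hpow, ← hsplit]
  rfl

theorem d_le_d_of_card_coindep_le {i : ℕ} (hE : H.nE = G.nE)
    (h : #(G.coindep i) ≤ #(H.coindep i)) : H.d i ≤ G.d i := by
  have hG := G.d_add_card_coindep i
  have hH := H.d_add_card_coindep i
  rw [hE] at hH
  omega

theorem d_lt_d_of_card_coindep_lt {i : ℕ} (hE : H.nE = G.nE)
    (h : #(G.coindep i) < #(H.coindep i)) : H.d i < G.d i := by
  have hG := G.d_add_card_coindep i
  have hH := H.d_add_card_coindep i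
  rw [hE] at hH
  omega

theorem card_coindep_le_of_le_one (hconn : H.Connected) (hb : H.Bridgeless) (hE : G.nE = H.nE)
    {i : ℕ} (hi : i ≤ 1) : #(G.coindep i) ≤ #(H.coindep i) := by
  have hHd : H.d i = 0 := by
    refine card_eq_zero.2 (filter_eq_empty_iff.2 ?_)
    rintro F - ⟨hF, hdisc⟩
    obtain rfl | rfl : i = 0 ∨ i = 1 := by omega
    · rw [card_eq_zero.1 hF, Disconnects, sdiff_empty] at hdisc
      exact hdisc hconn
    · obtain ⟨e, rfl⟩ := card_eq_one.1 hF
      exact hb e hdisc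
  have hG := G.d_add_card_coindep i
  have hH := H.d_add_card_coindep i
  rw [hE] at hG
  omega

theorem card_add_nV_le_of_mem_coindep [Nonempty G.V] {i : ℕ} {F : Finset G.E}
    (hF : F ∈ G.coindep i) : i + G.nV ≤ G.nE + 1 := by
  obtain ⟨rfl, hconn⟩ := mem_coindep.1 hF
  have h1 := hconn.nV_le_card_add_one
  have h2 := card_sdiff_add_card_eq_card (subset_univ F)
  rw [card_univ] at h2
  rw [nE]
  omega

theorem map_mem_coindep (f : MGIso G H) {i : ℕ} {F : Finset G.E} (hF : F ∈ G.coindep i) :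
    F.map f.eMap.toEmbedding ∈ H.coindep i := by
  obtain ⟨hcard, hconn⟩ := mem_coindep.1 hF
  refine mem_coindep.2 ⟨by rwa [card_map], connOn_of_forall_prop fun c hc u v => ?_⟩
  have hedge (e : G.E) (he : e ∈ univ \ F) : c (f.vMap (G.src e)) = c (f.vMap (G.tgt e)) := by
    have hce := hc (f.eMap e) (by simpa using he)
    rcases f.ends_eq e with ⟨h1, h2⟩ | ⟨h1, h2⟩ <;> rw [h1, h2] at hce
    exacts [hce, hce.symm]
  simpa using hconn.eq_of_forall_edge (c ∘ f.vMap) hedge (f.vMap.symm u) (f.vMap.symm v)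

/-- The inverse of an isomorphism of multigraphs. -/
def _root_.MGIso.symm (f : MGIso G H) : MGIso H G where
  vMap := f.vMap.symm
  eMap := f.eMap.symm
  ends_eq e := by
    have := f.ends_eq (f.eMap.symm e)
    simp only [Equiv.apply_symm_apply] at this
    simp only [Equiv.eq_symm_apply]
    tauto

/-- The generating polynomial of the coindependent `i`-sets of `D`, evaluated at edge weights `x`.
At chain lengths it counts the coindependent `i`-sets of the corresponding weak subdivision. -/
def coindepPoly {R : Type*} [CommSemiring R] (D : Multigraph) (i : ℕ) (x : D.E → R) : R :=
  ∑ T ∈ D.coindep i, ∏ e ∈ T, x e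

theorem coindepPoly_comp_eMap {R : Type*} [CommSemiring R] (f : MGIso G H) (i : ℕ)
    (x : H.E → R) : G.coindepPoly i (x ∘ f.eMap) = H.coindepPoly i x := by
  refine sum_bij' (fun F _ => F.map f.eMap.toEmbedding) (fun F _ => F.map f.symm.eMap.toEmbedding)
    (fun F hF => map_mem_coindep f hF) (fun F hF => map_mem_coindep f.symm hF)
    (fun F _ => ?_) (fun F _ => ?_) fun F _ => (prod_map F f.eMap.toEmbedding x).symm
  · rw [map_map]
    exact (map_eq_image ..).trans (by simp [MGIso.symm, Function.comp_def])
  · rw [map_map]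
    exact (map_eq_image ..).trans (by simp [MGIso.symm, Function.comp_def])

theorem card_coindep_eq_of_iso (f : MGIso G H) (i : ℕ) : #(G.coindep i) = #(H.coindep i) := by
  simpa [coindepPoly] using coindepPoly_comp_eMap f i fun _ => (1 : ℕ)

end Coindependence

section Reliability

theorem rel_eq_sum_compl (G : Multigraph) (p : ℝ) :
    G.rel p = ∑ F : Finset G.E, if G.ConnOn (univ \ F) then
      p ^ (G.nE - #F) * (1 - p) ^ #F else 0 := by
  have hinv : Function.Involutive (fun S : Finset G.E => univ \ S) := fun S =>
    Finset.sdiff_sdiff_eq_self (subset_univ S)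
  refine Fintype.sum_bijective _ hinv.bijective _ _ fun S => ?_
  have hS : #S ≤ G.nE := card_le_univ S
  have hcompl : #(univ \ S) = G.nE - #S := by
    rw [card_sdiff_of_subset (subset_univ S), card_univ, nE]
  rw [hcompl, show univ \ (univ \ S) = S from hinv S, Nat.sub_sub_self hS]

theorem rel_eq_sum_coindep (G : Multigraph) (p : ℝ) :
    G.rel p = ∑ i ∈ range (G.nE + 1), #(G.coindep i) * (p ^ (G.nE - i) * (1 - p) ^ i) := by
  have hmaps : ∀ F ∈ (univ : Finset (Finset G.E)), #F ∈ range (G.nE + 1) := fun F _ =>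
    mem_range_succ_iff.2 (card_le_univ F)
  rw [rel_eq_sum_compl, ← sum_fiberwise_of_maps_to hmaps]
  refine sum_congr rfl fun i _ => ?_
  rw [← sum_filter, filter_filter, ← nsmul_eq_mul]
  refine sum_eq_card_nsmul fun F hF => ?_
  rw [(mem_filter.1 hF).2.1]

theorem rel_lt_rel_of_card_coindep {p : ℝ} (hp : 0 < p) (hp1 : p < 1) (hE : H.nE = G.nE)
    (hle : ∀ i, #(G.coindep i) ≤ #(H.coindep i)) {j : ℕ} (hj : j ≤ G.nE)
    (hlt : #(G.coindep j) < #(H.coindep j)) : G.rel p < H.rel p := by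
  have hpos (i : ℕ) : 0 < p ^ (G.nE - i) * (1 - p) ^ i :=
    mul_pos (pow_pos hp _) (pow_pos (sub_pos.2 hp1) _)
  rw [rel_eq_sum_coindep, rel_eq_sum_coindep, hE]
  exact sum_lt_sum
    (fun i _ => mul_le_mul_of_nonneg_right (Nat.cast_le.2 (hle i)) (hpos i).le)
    ⟨j, mem_range_succ_iff.2 hj, mul_lt_mul_of_pos_right (Nat.cast_lt.2 hlt) (hpos j)⟩

end Reliability

/-! ### Removing bridges -/

section Bridges

variable (G) in
/-- The map on vertices that contracts the edge `e` onto its source. -/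
def contractTgt (e : G.E) (u : G.V) : G.V := if u = G.tgt e then G.src e else u

variable (G) in
/-- The multigraph in which the edge `e` of `G` is contracted onto its source and then expanded
again inside the edge `f`: the former target of `e` becomes a vertex of degree two whose incident
edges are `e` and `f`. -/
abbrev insertIntoEdge (e f : G.E) : Multigraph where
  V := G.V
  E := G.E
  src g := if g = e then G.tgt e else G.contractTgt e (G.src g)
  tgt g := if g = f then G.tgt e else G.contractTgt e (G.tgt (if g = e then f else g))

variable {e f : G.E} {F : Finset G.E}

theorem ConnOn.eq_of_contractTgt {S : Finset G.E} (hS : G.ConnOn S) {c : G.V → Prop}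
    (hc : ∀ g ∈ S, g ≠ e → c (G.contractTgt e (G.src g)) = c (G.contractTgt e (G.tgt g)))
    {x : G.V} (hx : c (G.tgt e) = c (G.contractTgt e x)) (u v : G.V) : c u = c v := by
  have hcontr := hS.eq_of_forall_edge (fun y => c (G.contractTgt e y)) fun g hg => by
    by_cases hge : g = e
    · subst hge
      simp only [contractTgt, if_true, ite_self]
    · exact hc g hg hge
  have htgt (y : G.V) : c y = c (G.tgt e) := by
    by_cases hy : y = G.tgt e
    · rw [hy]
    · rw [hx, ← hcontr y x, contractTgt, if_neg hy]
  exact (htgt u).trans (htgt v).symm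

theorem ConnOn.insertIntoEdge (hfe : f ≠ e) (heF : e ∉ F) (h : G.ConnOn (univ \ F)) :
    (G.insertIntoEdge e f).ConnOn (univ \ F) := by
  refine connOn_of_forall_prop fun c hc => ?_
  have he : c (G.tgt e) = c (G.contractTgt e (G.tgt f)) := by
    simpa [hfe.symm] using hc e (mem_sdiff.2 ⟨mem_univ _, heF⟩)
  refine h.eq_of_contractTgt (fun g hg hge => ?_) he
  have hcg := hc g hg
  by_cases hgf : g = f
  · subst hgf
    simp only [hfe, if_true, if_false] at hcg
    exact hcg.trans he
  · simpa [hge, hgf] using hcg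

theorem ConnOn.insertIntoEdge_exchange (hfe : f ≠ e) (hfF : f ∈ F) (h : G.ConnOn (univ \ F)) :
    (G.insertIntoEdge e f).ConnOn (univ \ insert e (F.erase f)) := by
  refine connOn_of_forall_prop fun c hc => ?_
  have hf : c (G.contractTgt e (G.src f)) = c (G.tgt e) := by
    simpa [hfe] using hc f (by simp [hfe])
  refine h.eq_of_contractTgt (fun g hg hge => ?_) hf.symm
  have hgF : g ∉ F := (mem_sdiff.1 hg).2
  have hgf : g ≠ f := fun h => hgF (h ▸ hfF)
  simpa [hge, hgf] using hc g (by simp [hge, hgF])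

theorem IsBridge.notMem_of_connOn (he : G.IsBridge e) (h : G.ConnOn (univ \ F)) : e ∉ F :=
  fun heF => he (h.mono (sdiff_subset_sdiff subset_rfl (singleton_subset_iff.2 heF)))

theorem card_coindep_le_insertIntoEdge (he : G.IsBridge e) (hfe : f ≠ e) (i : ℕ) :
    #(G.coindep i) ≤ #((G.insertIntoEdge e f).coindep i) :=
  card_le_card fun _ hF =>
    have ⟨hcard, hconn⟩ := mem_coindep.1 hF
    mem_coindep.2 ⟨hcard, hconn.insertIntoEdge hfe (he.notMem_of_connOn hconn)⟩

theorem card_coindep_lt_insertIntoEdge (he : G.IsBridge e) (hfe : f ≠ e) (hfF : f ∈ F)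
    (hF : G.ConnOn (univ \ F)) : #(G.coindep #F) < #((G.insertIntoEdge e f).coindep #F) := by
  have heF := he.notMem_of_connOn hF
  refine card_lt_card ⟨fun F' hF' => ?_, fun hsub => ?_⟩
  · have ⟨hcard, hconn⟩ := mem_coindep.1 hF'
    exact mem_coindep.2 ⟨hcard, hconn.insertIntoEdge hfe (he.notMem_of_connOn hconn)⟩
  · have hcard : #(insert e (F.erase f)) = #F := by
      rw [card_insert_of_notMem fun h => heF (mem_of_mem_erase h), card_erase_add_one hfF]
    have hmem := hsub (mem_coindep.2 ⟨hcard, hF.insertIntoEdge_exchange hfe hfF⟩)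
    exact he.notMem_of_connOn (mem_coindep.1 hmem).2 (mem_insert_self e _)

variable (G) in
/-- The set of bridges of `G`. -/
def bridges : Finset G.E := univ.filter G.IsBridge

theorem mem_bridges : e ∈ G.bridges ↔ G.IsBridge e := by
  simp only [bridges, mem_filter, mem_univ, true_and]

theorem card_bridges_insertIntoEdge_lt (he : G.IsBridge e) (hfe : f ≠ e)
    (hf : ¬ G.IsBridge f) : #(G.insertIntoEdge e f).bridges < #G.bridges := by
  refine card_lt_card ((ssubset_iff_of_subset fun g hg => ?_).2 ⟨e, mem_bridges.2 he, ?_⟩)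
  · rw [mem_bridges] at hg ⊢
    exact fun hconn => hg (hconn.insertIntoEdge hfe (he.notMem_of_connOn hconn))
  · rw [mem_bridges, IsBridge, Disconnects, not_not]
    have := (not_not.1 hf).insertIntoEdge_exchange hfe (mem_singleton_self f)
    rwa [erase_singleton, insert_empty_eq] at this

theorem Connected.exists_mem_coindep [Nonempty G.V] (hconn : G.Connected) {r : ℕ}
    (hr : G.nE + 1 = G.nV + r) : ∃ X ∈ G.coindep r, ∀ F ⊆ X, G.ConnOn (univ \ F) := by
  obtain ⟨T, -, hT, hcard⟩ := hconn.exists_spanning_tree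
  have hcompl : univ \ (univ \ T) = T := Finset.sdiff_sdiff_eq_self (subset_univ T)
  have hX := card_sdiff_add_card_eq_card (subset_univ T)
  rw [card_univ] at hX
  rw [nE] at hr
  refine ⟨univ \ T, mem_coindep.2 ⟨by omega, hcompl.symm ▸ hT⟩, fun F hF => hT.mono ?_⟩
  rw [← hcompl]
  exact sdiff_subset_sdiff subset_rfl hF

theorem exists_fewer_bridges [Nonempty G.V] (hconn : G.Connected) {r : ℕ}
    (hr : G.nE + 1 = G.nV + r) (hr0 : 0 < r) (he : G.IsBridge e) :
    ∃ H : Multigraph, H.nV = G.nV ∧ H.nE = G.nE ∧ H.Connected ∧ #H.bridges < #G.bridges ∧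
      (∀ i, #(G.coindep i) ≤ #(H.coindep i)) ∧
      ∀ i, 1 ≤ i → i ≤ r → #(G.coindep i) < #(H.coindep i) := by
  obtain ⟨X, hX, hsub⟩ := hconn.exists_mem_coindep hr
  have hXcard := (mem_coindep.1 hX).1
  obtain ⟨f, hf⟩ : X.Nonempty := card_pos.1 (hXcard ▸ hr0)
  have hf_conn : G.ConnOn (univ \ {f}) := hsub _ (singleton_subset_iff.2 hf)
  have hfe : f ≠ e := fun h => he (h ▸ hf_conn)
  refine ⟨G.insertIntoEdge e f, rfl, rfl, ?_,
    card_bridges_insertIntoEdge_lt he hfe (not_not_intro hf_conn),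
    card_coindep_le_insertIntoEdge he hfe, fun i hi hir => ?_⟩
  · have := (hsub ∅ (empty_subset X)).insertIntoEdge hfe (notMem_empty e)
    rwa [sdiff_empty] at this
  · obtain ⟨F, hfF, hFX, rfl⟩ := exists_subsuperset_card_eq (singleton_subset_iff.2 hf)
      (by rwa [card_singleton]) (hXcard ▸ hir)
    exact card_coindep_lt_insertIntoEdge he hfe (singleton_subset_iff.1 hfF) (hsub F hFX)

theorem exists_bridgeless_improvement {r : ℕ} (hr0 : 0 < r) (G : Multigraph)
    (hconn : G.Connected) (hr : G.nE + 1 = G.nV + r) (hV : 0 < G.nV) (hb : ¬ G.Bridgeless) :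
    ∃ H : Multigraph, H.nV = G.nV ∧ H.nE = G.nE ∧ H.Connected ∧ H.Bridgeless ∧
      ∀ i, 1 ≤ i → i ≤ r → #(G.coindep i) < #(H.coindep i) := by
  induction hN : #G.bridges using Nat.strong_induction_on generalizing G with
  | _ N ih =>
    have : Nonempty G.V := Fintype.card_pos_iff.1 hV
    obtain ⟨e, he⟩ : ∃ e, G.IsBridge e := by simpa only [Bridgeless, not_forall, not_not] using hb
    obtain ⟨H, hHV, hHE, hHconn, hlt, hle, hHlt⟩ := exists_fewer_bridges hconn hr hr0 he
    by_cases hH : H.Bridgeless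
    · exact ⟨H, hHV, hHE, hHconn, hH, hHlt⟩
    · obtain ⟨K, hKV, hKE, hKconn, hK, hKlt⟩ :=
        ih _ (hN ▸ hlt) H hHconn (by omega) (by omega) hH rfl
      exact ⟨K, hKV.trans hHV, hKE.trans hHE, hKconn, hK, fun i hi hir =>
        (hle i).trans_lt (hKlt i hi hir)⟩

end Bridges

/-! ### Subdivisions -/

section Subdivision

variable (D : Multigraph) (w : D.E → ℕ)

theorem chainNode_zero (e : D.E) : chainNode D w e 0 = Sum.inl (Quot.mk _ (D.src e)) := by
  simp [chainNode]

theorem chainNode_self (e : D.E) : chainNode D w e (w e) = Sum.inl (Quot.mk _ (D.tgt e)) := by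
  by_cases h : w e = 0
  · simp only [chainNode, h, lt_irrefl, and_false, dite_false, if_true]
    exact congrArg Sum.inl (Quot.sound ⟨e, h, rfl, rfl⟩)
  · simp [chainNode, h]

theorem chainNode_succ (e : D.E) (k : Fin (w e - 1)) :
    chainNode D w e (k + 1) = Sum.inr ⟨e, k⟩ := by
  rw [chainNode, dif_pos (by omega)]
  rfl

/-- The `k`-th edge of the chain replacing the edge `e` of `D`. -/
def chainEdge (e : D.E) (k : Fin (w e)) : (subdivide D w).E := Sigma.mk e k

/-- The edge of `D` whose chain contains the given edge of the weak subdivision. -/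
def chainOf (x : (subdivide D w).E) : D.E := Sigma.fst x

variable {D w} {F : Finset (subdivide D w).E}

theorem eq_chainNode_of_forall_notMem {c : (subdivide D w).V → Prop}
    (hc : ∀ x ∈ univ \ F, c ((subdivide D w).src x) = c ((subdivide D w).tgt x))
    {e : D.E} {i j : ℕ} (hij : i ≤ j) (hj : j ≤ w e)
    (hF : ∀ k : Fin (w e), i ≤ k → k < j → chainEdge D w e k ∉ F) :
    c (chainNode D w e i) = c (chainNode D w e j) := by
  induction j, hij using Nat.le_induction with
  | base => rfl
  | succ j hij ih =>
    rw [ih (by omega) fun k hik hkj => hF k hik (by omega)]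
    exact hc (chainEdge D w e ⟨j, hj⟩)
      (mem_sdiff.2 ⟨mem_univ _, hF ⟨j, hj⟩ hij (Nat.lt_succ_self j)⟩)

/-- A chain with at most one deleted edge keeps each of its nodes attached to one of its ends. -/
theorem exists_eq_of_injOn_chainOf (hF : Set.InjOn (chainOf D w) F)
    {c : (subdivide D w).V → Prop}
    (hc : ∀ x ∈ univ \ F, c ((subdivide D w).src x) = c ((subdivide D w).tgt x))
    (x : (subdivide D w).V) : ∃ v : D.V, c x = c (Sum.inl (Quot.mk _ v)) := by
  rcases x with q | ⟨e, k⟩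
  · obtain ⟨v, rfl⟩ := Quot.exists_rep q
    exact ⟨v, rfl⟩
  rw [← chainNode_succ]
  by_cases h : ∃ i : Fin (w e), i ≤ k.val ∧ chainEdge D w e i ∈ F
  · obtain ⟨i, hik, hi⟩ := h
    refine ⟨D.tgt e, ?_⟩
    rw [← chainNode_self]
    refine eq_chainNode_of_forall_notMem hc (by omega) le_rfl fun j hkj _ hj => ?_
    obtain rfl : i = j := eq_of_heq (Sigma.mk.inj (hF hi hj rfl)).2
    omega
  · push Not at h
    refine ⟨D.src e, ?_⟩
    rw [← chainNode_zero]
    exact (eq_chainNode_of_forall_notMem hc (Nat.zero_le _) (by omega) fun j _ hj =>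
      h j (by omega)).symm

theorem connOn_subdivide (hF : Set.InjOn (chainOf D w) F)
    (hD : D.ConnOn (univ \ F.image (chainOf D w))) : (subdivide D w).ConnOn (univ \ F) := by
  refine connOn_of_forall_prop fun c hc x y => ?_
  obtain ⟨u, hu⟩ := exists_eq_of_injOn_chainOf hF hc x
  obtain ⟨v, hv⟩ := exists_eq_of_injOn_chainOf hF hc y
  rw [hu, hv]
  refine hD.eq_of_forall_edge (fun v => c (Sum.inl (Quot.mk _ v))) (fun e he => ?_) u v
  rw [← chainNode_zero, ← chainNode_self]
  refine eq_chainNode_of_forall_notMem hc (Nat.zero_le _) le_rfl fun k _ _ hk => ?_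
  exact (mem_sdiff.1 he).2 (mem_image_of_mem (chainOf D w) hk)

/-- Deleting two edges of one chain cuts off the segment between them. -/
theorem notMem_of_connOn_subdivide (h : (subdivide D w).ConnOn (univ \ F)) {e : D.E}
    {i j : Fin (w e)} (hij : i < j) (hi : chainEdge D w e i ∈ F) : chainEdge D w e j ∉ F := by
  intro hj
  let c : (subdivide D w).V → Prop :=
    Sum.elim (fun _ => False) fun y => y.1 = e ∧ i.val ≤ y.2.val ∧ y.2.val < j.val
  have hc (f : D.E) (k : ℕ) : c (chainNode D w f k) = (f = e ∧ i.val < k ∧ k ≤ j.val) := by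
    rw [chainNode]
    split_ifs with hk hk0
    · exact propext (and_congr_right fun _ => by simp only; omega)
    · exact propext ⟨False.elim, fun hk' => by omega⟩
    · refine propext ⟨False.elim, ?_⟩
      rintro ⟨rfl, _, _⟩
      have := j.isLt
      omega
  have hedge (x : (subdivide D w).E) (hx : x ∈ univ \ F) :
      c (chainNode D w x.1 x.2) = c (chainNode D w x.1 (x.2 + 1)) := by
    obtain ⟨f, k⟩ := x
    rw [hc, hc]
    refine propext (and_congr_right fun hf => ?_)
    subst hf
    have hki : k.val ≠ i.val := fun h => (mem_sdiff.1 hx).2 (Fin.ext h ▸ hi)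
    have hkj : k.val ≠ j.val := fun h => (mem_sdiff.1 hx).2 (Fin.ext h ▸ hj)
    dsimp only
    omega
  have := h.eq_of_forall_edge c hedge (chainNode D w e 0) (chainNode D w e (i + 1))
  rw [hc, hc, eq_iff_iff] at this
  have := this.2 ⟨rfl, by omega, hij⟩
  omega

theorem injOn_chainOf_of_connOn_subdivide (h : (subdivide D w).ConnOn (univ \ F)) :
    Set.InjOn (chainOf D w) F := by
  rintro ⟨e, i⟩ hi ⟨f, j⟩ hj hef
  obtain rfl : e = f := hef
  rcases lt_trichotomy i j with hij | rfl | hij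
  · exact absurd hj (notMem_of_connOn_subdivide h hij hi)
  · rfl
  · exact absurd hi (notMem_of_connOn_subdivide h hij hj)

/-- A colouring of the vertices of `D` is extended along each chain by the colour of the source up
to the first deleted edge, and by the colour of the target from there on. -/
theorem connOn_of_connOn_subdivide (h : (subdivide D w).ConnOn (univ \ F)) :
    D.ConnOn (univ \ F.image (chainOf D w)) := by
  refine connOn_of_forall_prop fun c hc u v => ?_
  have hundeleted (e : D.E) (he : ∀ i : Fin (w e), chainEdge D w e i ∉ F) :
      c (D.src e) = c (D.tgt e) := by
    refine hc e ?_
    simp only [mem_sdiff, mem_univ, true_and, mem_image, not_exists, not_and]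
    rintro ⟨_, i⟩ hi rfl
    exact he i hi
  let col (e : D.E) (k : ℕ) : Prop :=
    if ∃ i : Fin (w e), i.val < k ∧ chainEdge D w e i ∈ F then c (D.tgt e) else c (D.src e)
  let c' : (subdivide D w).V → Prop := Sum.elim
    (Quot.lift c fun _ _ ⟨e, he, hu, hv⟩ =>
      hu ▸ hv ▸ hundeleted e fun i => absurd i.isLt (by omega))
    fun y => col y.1 (y.2 + 1)
  have hnode (e : D.E) (k : ℕ) (hk : k ≤ w e) : c' (chainNode D w e k) = col e k := by
    rw [chainNode]
    split_ifs with hk' hk0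
    · simp only [c', Sum.elim_inr, Nat.sub_add_cancel hk'.1]
    · simp [c', col, hk0]
    · obtain rfl : k = w e := by omega
      by_cases hF : ∃ i : Fin (w e), chainEdge D w e i ∈ F
      · simp [c', col, hF]
      · simp only [c', col, Sum.elim_inl, Fin.is_lt, true_and, if_neg hF]
        exact (hundeleted e (not_exists.1 hF)).symm
  have hedge (x : (subdivide D w).E) (hx : x ∈ univ \ F) :
      c' (chainNode D w x.1 x.2) = c' (chainNode D w x.1 (x.2 + 1)) := by
    obtain ⟨e, k⟩ := x
    rw [hnode e k (by omega), hnode e (k + 1) (by omega)]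
    refine if_congr (exists_congr fun i => and_congr_left fun hi => ?_) rfl rfl
    have hik : i.val ≠ k.val := fun h => (mem_sdiff.1 hx).2 (Fin.ext h ▸ hi)
    omega
  exact h.eq_of_forall_edge c' hedge (Sum.inl (Quot.mk _ u)) (Sum.inl (Quot.mk _ v))

theorem connOn_subdivide_iff : (subdivide D w).ConnOn (univ \ F) ↔
    Set.InjOn (chainOf D w) F ∧ D.ConnOn (univ \ F.image (chainOf D w)) :=
  ⟨fun h => ⟨injOn_chainOf_of_connOn_subdivide h, connOn_of_connOn_subdivide h⟩,
    fun h => connOn_subdivide h.1 h.2⟩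

theorem connected_subdivide (hD : D.Connected) : (subdivide D w).Connected := by
  have := connOn_subdivide (D := D) (w := w) (F := ∅) (by simp) (by rwa [image_empty, sdiff_empty])
  rwa [sdiff_empty] at this

variable (D w) in
theorem nE_subdivide : (subdivide D w).nE = ∑ e, w e :=
  (Fintype.card_sigma).trans (sum_congr rfl fun e _ => Fintype.card_fin (w e))

end Subdivision

section FiberSums

variable {ι κ R : Type*} [DecidableEq ι] [Fintype κ] [CommSemiring R]

theorem sum_prod_eq_prod_sum_of_mem_iff_section
    {π : κ → ι} {T : Finset ι} {S : Finset (Finset κ)}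
    (hS : ∀ F, F ∈ S ↔ Set.InjOn π (F : Set κ) ∧ F.image π = T) (x : κ → R) :
    ∑ F ∈ S, ∏ e ∈ F, x e = ∏ i ∈ T, ∑ e with π e = i, x e := by
  have hsection {g : T → κ} (hg : g ∈ Fintype.piFinset fun i : T => {e | π e = i}) (i : T) :
      π (g i) = i := (mem_filter.1 (Fintype.mem_piFinset.1 hg i)).2
  have hinj {g : T → κ} (hg : g ∈ Fintype.piFinset fun i : T => {e | π e = i}) :
      Function.Injective g := fun i j hij =>
    Subtype.ext ((hsection hg i).symm.trans ((congrArg π hij).trans (hsection hg j)))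
  rw [← prod_coe_sort, prod_univ_sum]
  refine (sum_bij (fun g _ => univ.image g) (fun g hg => ?_) (fun g hg g' hg' h => ?_)
    (fun F hF => ?_) fun g hg => (prod_image (hinj hg).injOn).symm).symm
  · refine (hS _).2 ⟨?_, ?_⟩
    · rw [coe_image, coe_univ, Set.image_univ]
      rintro _ ⟨i, rfl⟩ _ ⟨j, rfl⟩ hij
      rw [Subtype.ext ((hsection hg i).symm.trans (hij.trans (hsection hg j)))]
    · rw [image_image]
      exact (image_congr fun i _ => hsection hg i).trans attach_image_val
  · funext i
    obtain ⟨j, -, hj⟩ := mem_image.1 (h ▸ mem_image_of_mem g (mem_univ i) : g i ∈ univ.image g')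
    rw [← hj, Subtype.ext ((hsection hg' j).symm.trans ((congrArg π hj).trans (hsection hg i)))]
  · obtain ⟨hF, rfl⟩ := (hS F).1 hF
    choose g hgF hg using fun i : F.image π => mem_image.1 i.2
    refine ⟨g, Fintype.mem_piFinset.2 fun i => mem_filter.2 ⟨mem_univ _, hg i⟩,
      subset_antisymm (image_subset_iff.2 fun i _ => hgF i) fun e he => ?_⟩
    exact mem_image.2 ⟨⟨π e, mem_image_of_mem π he⟩, mem_univ _, hF (hgF _) he (hg _)⟩

theorem sum_prod_eq_sum_prod_of_mem_iff_image_mem {π : κ → ι} {S : Finset (Finset κ)}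
    {S' : Finset (Finset ι)}
    (hS : ∀ F, F ∈ S ↔ Set.InjOn π (F : Set κ) ∧ F.image π ∈ S') (x : κ → R) :
    ∑ F ∈ S, ∏ e ∈ F, x e = ∑ T ∈ S', ∏ i ∈ T, ∑ e with π e = i, x e := by
  rw [← sum_fiberwise_of_maps_to fun F hF => ((hS F).1 hF).2]
  refine sum_congr rfl fun T hT => sum_prod_eq_prod_sum_of_mem_iff_section (fun F => ?_) x
  rw [mem_filter, hS, and_assoc]
  exact and_congr_right fun _ => and_iff_right_of_imp fun hF => hF ▸ hT

end FiberSums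

theorem card_coindep_subdivide (D : Multigraph) (w : D.E → ℕ) (i : ℕ) :
    #((subdivide D w).coindep i) = D.coindepPoly i w := by
  have hmem (F : Finset (subdivide D w).E) : F ∈ (subdivide D w).coindep i ↔
      Set.InjOn (chainOf D w) F ∧ F.image (chainOf D w) ∈ D.coindep i := by
    rw [mem_coindep, mem_coindep, connOn_subdivide_iff, and_left_comm]
    exact and_congr_right fun hF => by rw [card_image_of_injOn hF]
  have hpoly := sum_prod_eq_sum_prod_of_mem_iff_image_mem hmem fun _ => (1 : ℕ)
  have hfiber (f : D.E) : ∑ e with chainOf D w e = f, 1 = w f := by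
    have hchain : ({e | chainOf D w e = f} : Finset (subdivide D w).E) =
        univ.image (chainEdge D w f) := by
      refine ext fun x => (mem_filter_univ x).trans (Iff.trans ⟨?_, ?_⟩ mem_image.symm)
      · rintro rfl
        exact ⟨x.2, mem_univ _, rfl⟩
      · rintro ⟨_, -, rfl⟩
        rfl
    have hinj : Function.Injective (chainEdge D w f) :=
      fun _ _ h => eq_of_heq (Sigma.mk.inj h).2
    rw [sum_const, smul_eq_mul, mul_one, hchain, card_image_of_injective univ hinj, card_univ,
      Fintype.card_fin]
  simp only [prod_const_one, sum_const, smul_eq_mul, mul_one, hfiber] at hpoly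
  exact hpoly

section ZeroAcyclic

variable {D : Multigraph} {w : D.E → ℕ}

variable (D w) in
/-- The edges of weight zero, i.e. those contracted in `subdivide D w`. -/
def zeroEdges : Finset D.E := univ.filter fun e => w e = 0

theorem mem_zeroEdges {e : D.E} : e ∈ D.zeroEdges w ↔ w e = 0 := by
  simp only [zeroEdges, mem_filter, mem_univ, true_and]

variable (D w) in
/-- Colourings of the contracted vertices, as the colourings of `D` without colour difference
along zero edges. -/
def quotColouringsEquiv :
    (Quot (zeroRel D w) → ZMod 2) ≃ₗ[ZMod 2] LinearMap.ker (D.coboundary (D.zeroEdges w)) where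
  toFun c := ⟨fun v => c (Quot.mk _ v), mem_ker_coboundary.2 fun e he =>
    congrArg c (Quot.sound ⟨e, mem_zeroEdges.1 he, rfl, rfl⟩)⟩
  invFun c := Quot.lift c.1 (by
    rintro _ _ ⟨e, he, rfl, rfl⟩
    exact mem_ker_coboundary.1 c.2 e (mem_zeroEdges.2 he))
  map_add' _ _ := rfl
  map_smul' _ _ := rfl
  left_inv c := funext (Quot.ind fun _ => rfl)
  right_inv _ := rfl

theorem zeroAcyclic_of_surjective_coboundary
    (h : Function.Surjective (D.coboundary (D.zeroEdges w))) : ZeroAcyclic D w := by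
  have hrank := LinearMap.finrank_range_add_finrank_ker (D.coboundary (D.zeroEdges w))
  rw [LinearMap.range_eq_top.2 h, finrank_top, ← (quotColouringsEquiv D w).finrank_eq] at hrank
  simp only [Module.finrank_fintype_fun_eq_card, Fintype.card_coe] at hrank
  rw [ZeroAcyclic, add_comm]
  exact hrank

theorem zeroAcyclic_of_mem_coindep [Nonempty D.V] {i : ℕ} (hi : D.nE + 1 = D.nV + i)
    {F : Finset D.E} (hF : F ∈ D.coindep i) (hw : ∀ e ∈ F, w e ≠ 0) : ZeroAcyclic D w := by
  obtain ⟨hcard, hconn⟩ := mem_coindep.1 hF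
  have hsurj := hconn.surjective_coboundary (by
    have := card_le_univ F
    rw [card_sdiff_of_subset (subset_univ F), card_univ]
    unfold nE at hi
    omega)
  refine zeroAcyclic_of_surjective_coboundary fun g => ?_
  obtain ⟨c, hc⟩ := hsurj fun e => if h : e.1 ∈ D.zeroEdges w then g ⟨e, h⟩ else 0
  refine ⟨c, funext fun e => ?_⟩
  have heF : e.1 ∈ univ \ F :=
    mem_sdiff.2 ⟨mem_univ _, fun h => hw e h (mem_zeroEdges.1 e.2)⟩
  simpa only [coboundary_apply, e.2, dif_pos] using congrFun hc ⟨e, heF⟩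

end ZeroAcyclic

/-! ### Walks -/

section Walks

variable {x : G.E} {u v w : G.V} {l l₁ l₂ : List G.E}

variable (G) in
/-- The edge `x` has endpoints `u` and `v`, in either order. -/
def Joins (x : G.E) (u v : G.V) : Prop :=
  (G.src x = u ∧ G.tgt x = v) ∨ (G.src x = v ∧ G.tgt x = u)

variable (G) in
/-- The vertex `v` is an endpoint of the edge `x`. -/
def Incident (x : G.E) (v : G.V) : Prop := G.src x = v ∨ G.tgt x = v

theorem joins_src_tgt (x : G.E) : G.Joins x (G.src x) (G.tgt x) := .inl ⟨rfl, rfl⟩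

theorem Joins.symm (h : G.Joins x u v) : G.Joins x v u := Or.symm h

theorem Joins.incident_left (h : G.Joins x u v) : G.Incident x u := h.imp And.left And.right

theorem Joins.incident_iff (h : G.Joins x u v) : G.Incident x w ↔ w = u ∨ w = v := by
  rcases h with ⟨rfl, rfl⟩ | ⟨rfl, rfl⟩
  · exact or_congr eq_comm eq_comm
  · exact (or_congr eq_comm eq_comm).trans or_comm

variable (G) in
/-- The edge list `l` is traversed by a walk from `u` to `v`. -/
def IsWalk : G.V → List G.E → G.V → Prop
  | u, [], v => u = v
  | u, x :: l, v => ∃ u', G.Joins x u u' ∧ IsWalk u' l v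

theorem IsWalk.append (h₁ : G.IsWalk u l₁ v) (h₂ : G.IsWalk v l₂ w) :
    G.IsWalk u (l₁ ++ l₂) w := by
  induction l₁ generalizing u with
  | nil => exact (show u = v from h₁) ▸ h₂
  | cons x l ih =>
    obtain ⟨u', hx, h⟩ := h₁
    exact ⟨u', hx, ih h⟩

theorem IsWalk.reverse (h : G.IsWalk u l v) : G.IsWalk v l.reverse u := by
  induction l generalizing u with
  | nil => exact (show u = v from h).symm
  | cons x l ih =>
    obtain ⟨u', hx, h⟩ := h
    rw [List.reverse_cons]
    exact (ih h).append ⟨u, hx.symm, rfl⟩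

theorem IsWalk.exists_eq_append (h : G.IsWalk u l v) (hx : x ∈ l) (hw : G.Incident x w) :
    ∃ l₁ l₂, l = l₁ ++ l₂ ∧ G.IsWalk u l₁ w ∧ G.IsWalk w l₂ v := by
  induction l generalizing u with
  | nil => exact absurd hx List.not_mem_nil
  | cons y l ih =>
    obtain ⟨u', hy, h⟩ := h
    rcases List.mem_cons.1 hx with rfl | hx
    · rcases hy.incident_iff.1 hw with rfl | rfl
      · exact ⟨[], x :: l, rfl, rfl, u', hy, h⟩
      · exact ⟨[x], l, rfl, ⟨w, hy, rfl⟩, h⟩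
    · obtain ⟨l₁, l₂, rfl, h₁, h₂⟩ := ih h hx
      exact ⟨y :: l₁, l₂, rfl, ⟨u', hy, h₁⟩, h₂⟩

theorem IsWalk.exists_nodes (h : G.IsWalk u l v) :
    ∃ node : ℕ → G.V, node 0 = u ∧ node l.length = v ∧
      ∀ i (hi : i < l.length), G.Joins l[i] (node i) (node (i + 1)) := by
  induction l generalizing u with
  | nil => exact ⟨fun _ => u, rfl, h, fun i hi => absurd hi (Nat.not_lt_zero i)⟩
  | cons x l ih =>
    obtain ⟨u', hx, h⟩ := h
    obtain ⟨node, rfl, hlast, hnode⟩ := ih h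
    refine ⟨fun i => i.casesOn u node, rfl, hlast, fun i hi => ?_⟩
    cases i with
    | zero => exact hx
    | succ i => exact hnode i (Nat.lt_of_succ_lt_succ hi)

end Walks

theorem nV_subdivide {D : Multigraph} {w : D.E → ℕ} (hw : ZeroAcyclic D w) :
    (subdivide D w).nV + D.nE = D.nV + ∑ e, w e := by
  have hsum : ∑ e, (w e - 1) + D.nE = ∑ e, w e + #(D.zeroEdges w) := by
    rw [nE, ← card_univ, card_eq_sum_ones, zeroEdges, card_filter, ← sum_add_distrib,
      ← sum_add_distrib]
    refine sum_congr rfl fun e _ => ?_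
    split_ifs <;> omega
  have hcard : (subdivide D w).nV = Fintype.card (Quot (zeroRel D w)) + ∑ e, (w e - 1) := by
    change Fintype.card (Quot (zeroRel D w) ⊕ (Σ f : D.E, Fin (w f - 1))) = _
    simp only [Fintype.card_sum, Fintype.card_sigma, Fintype.card_fin]
  change Fintype.card (Quot (zeroRel D w)) + #(D.zeroEdges w) = D.nV at hw
  omega

section WalksToSubdivision

variable {D : Multigraph} {φ : D.V → G.V} {chain : D.E → List G.E}

theorem exists_vertexMap_subdivide
    (hwalk : ∀ e, G.IsWalk (φ (D.src e)) (chain e) (φ (D.tgt e))) :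
    ∃ ψ : (subdivide D fun e => (chain e).length).V → G.V,
      ∀ e (i : Fin (chain e).length), G.Joins ((chain e).get i)
        (ψ ((subdivide D fun e => (chain e).length).src ⟨e, i⟩))
        (ψ ((subdivide D fun e => (chain e).length).tgt ⟨e, i⟩)) := by
  choose node hfirst hlast hnode using fun e => (hwalk e).exists_nodes
  let ψ : (subdivide D fun e => (chain e).length).V → G.V := Sum.elim
    (Quot.lift φ (by
      rintro _ _ ⟨e, he, rfl, rfl⟩
      have h := hwalk e
      rwa [List.length_eq_zero_iff.1 he] at h))
    fun y => node y.1 (y.2 + 1)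
  have hψ (e j) (hj : j ≤ (chain e).length) :
      ψ (chainNode D (fun e => (chain e).length) e j) = node e j := by
    unfold chainNode
    split_ifs with hin h0
    · change node e (j - 1 + 1) = node e j
      rw [Nat.sub_add_cancel hin.1]
    · exact h0 ▸ (hfirst e).symm
    · obtain rfl : j = (chain e).length :=
        hj.antisymm (not_lt.1 fun h => hin ⟨Nat.pos_of_ne_zero h0, h⟩)
      exact (hlast e).symm
  refine ⟨ψ, fun e i => ?_⟩
  change G.Joins _ (ψ (chainNode D _ e i)) (ψ (chainNode D _ e (i + 1)))
  rw [hψ e i i.2.le, hψ e (i + 1) i.2]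
  exact hnode e i i.2

theorem isIso_of_joins {H : Multigraph} (ψ : H.V ≃ G.V) (ε : H.E ≃ G.E)
    (h : ∀ y, G.Joins (ε y) (ψ (H.src y)) (ψ (H.tgt y))) : IsIso G H :=
  ⟨MGIso.symm ⟨ψ, ε, fun y => (h y).imp id id⟩⟩

/-- Since `G` is connected, the walks reach every vertex; the edge count then shows that they
meet only where the subdivision prescribes. -/
theorem isWeakSubdivision_of_walks [Nonempty D.V] (hG : G.Connected)
    (hcard : G.nE + D.nV = G.nV + D.nE)
    (hwalk : ∀ e, G.IsWalk (φ (D.src e)) (chain e) (φ (D.tgt e)))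
    (hbij : Function.Bijective
      fun y : (Σ e : D.E, Fin (chain e).length) => (chain y.1).get y.2)
    (hZ : ZeroAcyclic D fun e => (chain e).length) :
    IsWeakSubdivision G D fun e => (chain e).length := by
  obtain ⟨ψ, hψ⟩ := exists_vertexMap_subdivide hwalk
  have hsurj : Function.Surjective ψ := by
    obtain ⟨v₀⟩ := ‹Nonempty D.V›
    refine fun v => (ConnOn.eq_of_forall_edge hG (· ∈ Set.range ψ) (fun x _ => ?_)
      (ψ (.inl (Quot.mk _ v₀))) v).mp ⟨_, rfl⟩
    obtain ⟨⟨e, i⟩, rfl⟩ := hbij.2 x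
    rcases hψ e i with ⟨h₁, h₂⟩ | ⟨h₁, h₂⟩ <;>
    · simp only [h₁, h₂, Set.mem_range_self]
  have hcardV : (subdivide D fun e => (chain e).length).nV = G.nV := by
    have hE : G.nE = ∑ e, (chain e).length := by
      rw [nE, ← Fintype.card_of_bijective hbij, Fintype.card_sigma]
      simp only [Fintype.card_fin]
    have := nV_subdivide hZ
    omega
  have hψbij := (Fintype.bijective_iff_surjective_and_card ψ).2 ⟨hsurj, hcardV⟩
  exact ⟨hZ, isIso_of_joins (.ofBijective ψ hψbij) (.ofBijective _ hbij) fun y => hψ y.1 y.2⟩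

end WalksToSubdivision

/-! ### Ear decompositions -/

section Ears

variable {S R : Finset G.E} {W A : Finset G.V} {P : List G.E} {v : G.V} {j : ℕ}

variable (G) in
/-- `PathInto G W R v P A`: the edges `P ⊆ R` form a path from `v` to the vertex set `W` that stops
as soon as it reaches `W`, and `A` is the set of its vertices outside `W`. -/
inductive PathInto (W : Finset G.V) (R : Finset G.E) : G.V → List G.E → Finset G.V → Prop
  | nil {v : G.V} : v ∈ W → PathInto W R v [] ∅
  | cons {x : G.E} {v v' : G.V} {P : List G.E} {A : Finset G.V} : v ∉ W → v ∉ A → x ∈ R →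
      G.Joins x v v' → PathInto W R v' P A → PathInto W R v (x :: P) (insert v A)

namespace PathInto

theorem exists_of_mem (h : G.PathInto W R v P A) {y : G.V} (hy : y ∈ A) :
    ∃ P' A', G.PathInto W R y P' A' := by
  induction h with
  | nil => exact absurd hy (notMem_empty y)
  | cons hvW hvA hx hj h ih =>
    rcases mem_insert.1 hy with rfl | hy
    · exact ⟨_, _, .cons hvW hvA hx hj h⟩
    · exact ih hy

theorem exists_of_connOn (hR : G.ConnOn R) (hW : W.Nonempty) (v : G.V) :
    ∃ P A, G.PathInto W R v P A := by
  have hstep (x) (hx : x ∈ R) (u u' : G.V) (hj : G.Joins x u u') :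
      (∃ P A, G.PathInto W R u' P A) → ∃ P A, G.PathInto W R u P A := by
    rintro ⟨P, A, h⟩
    by_cases huW : u ∈ W
    · exact ⟨_, _, .nil huW⟩
    by_cases huA : u ∈ A
    · exact h.exists_of_mem huA
    · exact ⟨_, _, .cons huW huA hx hj h⟩
  obtain ⟨u, hu⟩ := hW
  exact (hR.eq_of_forall_edge (fun v => ∃ P A, G.PathInto W R v P A) (fun x hx => propext
    ⟨hstep x hx _ _ (joins_src_tgt x).symm, hstep x hx _ _ (joins_src_tgt x)⟩) u v).mp
      ⟨_, _, .nil hu⟩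

variable (h : G.PathInto W R v P A)
include h

theorem start_mem : v ∈ W ∪ A := by
  cases h with
  | nil hv => exact mem_union_left _ hv
  | cons => exact mem_union_right _ (mem_insert_self _ _)

theorem exists_isWalk : ∃ u ∈ W, G.IsWalk v P u := by
  induction h with
  | nil hv => exact ⟨_, hv, rfl⟩
  | cons _ _ _ hj _ ih =>
    obtain ⟨u, hu, hwalk⟩ := ih
    exact ⟨u, hu, _, hj, hwalk⟩

theorem card_eq : #A = P.length := by
  induction h with
  | nil => rfl
  | cons _ hvA _ _ _ ih => rw [card_insert_of_notMem hvA, ih, List.length_cons]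

theorem disjoint : Disjoint W A := by
  induction h with
  | nil => exact disjoint_empty_right W
  | cons hvW _ _ _ _ ih => exact disjoint_insert_right.2 ⟨hvW, ih⟩

theorem edge_mem {x : G.E} (hx : x ∈ P) : x ∈ R := by
  induction h with
  | nil => exact absurd hx List.not_mem_nil
  | cons _ _ hxR _ _ ih => exact (List.mem_cons.1 hx).elim (fun h => h ▸ hxR) ih

theorem incident_mem {x : G.E} (hx : x ∈ P) {y : G.V} (hy : G.Incident x y) : y ∈ W ∪ A := by
  induction h with
  | nil => exact absurd hx List.not_mem_nil
  | cons _ _ _ hj h ih =>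
    rw [union_insert, mem_insert]
    rcases List.mem_cons.1 hx with rfl | hx
    · rcases hj.incident_iff.1 hy with rfl | rfl
      exacts [.inl rfl, .inr h.start_mem]
    · exact .inr (ih hx)

theorem exists_incident_notMem {x : G.E} (hx : x ∈ P) : ∃ y, G.Incident x y ∧ y ∉ W := by
  induction h with
  | nil => exact absurd hx List.not_mem_nil
  | cons hvW _ _ hj _ ih =>
    exact (List.mem_cons.1 hx).elim (fun h => h ▸ ⟨_, hj.incident_left, hvW⟩) ih

theorem exists_incident {y : G.V} (hy : y ∈ A) : ∃ x ∈ P, G.Incident x y := by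
  induction h with
  | nil => exact absurd hy (notMem_empty y)
  | cons _ _ _ hj _ ih =>
    rcases mem_insert.1 hy with rfl | hy
    · exact ⟨_, List.mem_cons_self, hj.incident_left⟩
    · exact (ih hy).imp fun x hx => ⟨List.mem_cons_of_mem _ hx.1, hx.2⟩

theorem nodup : P.Nodup := by
  induction h with
  | nil => exact List.nodup_nil
  | cons hvW hvA _ hj h ih =>
    exact List.nodup_cons.2 ⟨fun hx => (mem_union.1 (h.incident_mem hx hj.incident_left)).elim
      hvW hvA, ih⟩

end PathInto

variable (G) in
/-- A subgraph with edge set `S` and vertex set `W` obtained from a single vertex by adding `j`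
ears (paths or cycles attached at their ends). Only the numerical consequence `card` of this
history is recorded. -/
structure EarSubgraph (S : Finset G.E) (W : Finset G.V) (j : ℕ) : Prop where
  nonempty : W.Nonempty
  incident_mem : ∀ x ∈ S, ∀ y, G.Incident x y → y ∈ W
  exists_incident : S.Nonempty → ∀ y ∈ W, ∃ x ∈ S, G.Incident x y
  card : #W + j = #S + 1

namespace EarSubgraph

theorem singleton (v : G.V) : G.EarSubgraph ∅ {v} 0 :=
  ⟨singleton_nonempty v, by simp, by simp, by simp⟩

variable (h : G.EarSubgraph S W j)
include h

theorem exists_adjacent_edge (hG : G.Connected) (hS : S ≠ univ) :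
    ∃ x ∉ S, ∃ u ∈ W, ∃ v, G.Joins x u v := by
  by_contra! hcon
  obtain ⟨x, hx⟩ : ∃ x, x ∉ S := by
    by_contra! hall
    exact hS (eq_univ_of_forall hall)
  obtain ⟨u, hu⟩ := h.nonempty
  refine hcon x hx (G.src x) ((ConnOn.eq_of_forall_edge hG (· ∈ W) (fun e _ => ?_) u _).mp hu) _
    (joins_src_tgt x)
  by_cases he : e ∈ S
  · exact propext
      (iff_of_true (h.incident_mem e he _ (.inl rfl)) (h.incident_mem e he _ (.inr rfl)))
  · exact propext (iff_of_false (fun hW => hcon e he _ hW _ (joins_src_tgt e))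
      fun hW => hcon e he _ hW _ (joins_src_tgt e).symm)

theorem exists_incident_insert {x : G.E} {u : G.V} (hu : u ∈ W) (hxu : G.Incident x u) {y : G.V}
    (hy : y ∈ W) : ∃ z ∈ insert x S, G.Incident z y := by
  rcases S.eq_empty_or_nonempty with rfl | hS
  · have hcard := h.card
    rw [card_empty] at hcard
    obtain rfl := card_le_one.1 (by omega) u hu y hy
    exact ⟨x, mem_insert_self _ _, hxu⟩
  · exact (h.exists_incident hS y hy).imp fun z hz => ⟨mem_insert_of_mem hz.1, hz.2⟩

theorem notMem_of_mem_pathInto (hP : G.PathInto W R v P A) {x : G.E} (hx : x ∈ P) : x ∉ S := by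
  obtain ⟨y, hxy, hyW⟩ := hP.exists_incident_notMem hx
  exact fun hxS => hyW (h.incident_mem x hxS y hxy)

theorem addEar {x : G.E} {u v : G.V} (hx : x ∉ S) (hu : u ∈ W) (hj : G.Joins x u v)
    (hP : G.PathInto W R v P A) (hxP : x ∉ P) :
    G.EarSubgraph (S ∪ (x :: P).toFinset) (W ∪ A) (j + 1) := by
  have hdisj : Disjoint S (x :: P).toFinset := by
    rw [disjoint_right]
    intro y hy
    rcases List.mem_cons.1 (List.mem_toFinset.1 hy) with rfl | hy
    · exact hx
    · exact h.notMem_of_mem_pathInto hP hy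
  refine ⟨h.nonempty.mono subset_union_left, fun y hy z hz => ?_, fun _ y hy => ?_, ?_⟩
  · rw [mem_union, List.mem_toFinset, List.mem_cons] at hy
    rcases hy with hy | rfl | hy
    · exact mem_union_left _ (h.incident_mem y hy z hz)
    · rcases hj.incident_iff.1 hz with rfl | rfl
      · exact mem_union_left _ hu
      · exact hP.start_mem
    · exact hP.incident_mem hy hz
  · simp only [mem_union, List.mem_toFinset, List.mem_cons]
    rcases mem_union.1 hy with hy | hy
    · obtain ⟨z, hz, hzy⟩ := h.exists_incident_insert hu hj.incident_left hy
      exact ⟨z, (mem_insert.1 hz).elim (fun h => .inr (.inl h)) .inl, hzy⟩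
    · obtain ⟨z, hz, hzy⟩ := hP.exists_incident hy
      exact ⟨z, .inr (.inr hz), hzy⟩
  · rw [card_union_of_disjoint hP.disjoint, card_union_of_disjoint hdisj, hP.card_eq,
      List.toFinset_card_of_nodup (List.nodup_cons.2 ⟨hxP, hP.nodup⟩), List.length_cons]
    have := h.card
    omega

theorem exists_ear (hG : G.Connected) (hb : G.Bridgeless) (hS : S ≠ univ) :
    ∃ u ∈ W, ∃ v ∈ W, ∃ P, P ≠ [] ∧ G.IsWalk u P v ∧ P.Nodup ∧ (∀ x ∈ P, x ∉ S) ∧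
      ∃ W', G.EarSubgraph (S ∪ P.toFinset) W' (j + 1) := by
  obtain ⟨x, hx, u, hu, v, hj⟩ := h.exists_adjacent_edge hG hS
  obtain ⟨P, A, hP⟩ := PathInto.exists_of_connOn (not_not.1 (hb x)) h.nonempty v
  obtain ⟨w, hw, hwalk⟩ := hP.exists_isWalk
  have hxP : x ∉ P := fun hmem => (mem_sdiff.1 (hP.edge_mem hmem)).2 (mem_singleton_self x)
  refine ⟨u, hu, w, hw, x :: P, List.cons_ne_nil x P, ⟨v, hj, hwalk⟩,
    List.nodup_cons.2 ⟨hxP, hP.nodup⟩, fun y hy => ?_, _, h.addEar hx hu hj hP hxP⟩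
  rcases List.mem_cons.1 hy with rfl | hy
  · exact hx
  · exact h.notMem_of_mem_pathInto hP hy

theorem nV_add_eq_of_eq_univ (hG : G.Connected) (hS : S = univ) : G.nV + j = G.nE + 1 := by
  obtain ⟨u, hu⟩ := h.nonempty
  have hW : W = univ := eq_univ_of_forall fun v =>
    (ConnOn.eq_of_forall_edge hG (· ∈ W) (fun e _ => propext <| iff_of_true
      (h.incident_mem e (hS ▸ mem_univ e) _ (.inl rfl))
      (h.incident_mem e (hS ▸ mem_univ e) _ (.inr rfl))) u v).mp hu
  have := h.card
  rwa [hW, hS, card_univ, card_univ] at this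

theorem nV_add_le (hG : G.Connected) (hb : G.Bridgeless) : G.nV + j ≤ G.nE + 1 := by
  induction hk : #(univ \ S) using Nat.strong_induction_on generalizing S W j with
  | _ k ih =>
    by_cases hS : S = univ
    · exact (h.nV_add_eq_of_eq_univ hG hS).le
    obtain ⟨u, -, v, -, P, hP, -, -, hPS, W', h'⟩ := h.exists_ear hG hb hS
    obtain ⟨x, hx⟩ := List.exists_mem_of_ne_nil P hP
    have hlt : #(univ \ (S ∪ P.toFinset)) < k := hk ▸ card_lt_card
      ((ssubset_iff_of_subset (sdiff_subset_sdiff le_rfl subset_union_left)).2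
        ⟨x, by simp [hPS x hx], by simp [hx]⟩)
    have := ih _ hlt h' rfl
    omega

theorem eq_univ_iff (hG : G.Connected) (hb : G.Bridgeless) :
    S = univ ↔ G.nV + j = G.nE + 1 := by
  refine ⟨h.nV_add_eq_of_eq_univ hG, fun heq => ?_⟩
  by_contra hS
  obtain ⟨_, -, _, -, _, -, -, -, -, _, h'⟩ := h.exists_ear hG hb hS
  have := h'.nV_add_le hG hb
  omega

end EarSubgraph

end Ears

/-! ### Chain models -/

/-- The multigraph whose edge `i` joins the two entries of `σ i`; such a map `σ` is called a
*shape*. -/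
def ofEnds {α ι : Type} [Fintype α] [Fintype ι] (σ : ι → α × α) : Multigraph where
  V := α
  E := ι
  src i := (σ i).1
  tgt i := (σ i).2

/-- The unordered pair of ends of the edge `i` of the shape `σ`. -/
def ends {α ι : Type} (σ : ι → α × α) (i : ι) : Sym2 α := s((σ i).1, (σ i).2)

section ChainModel

variable {S : Finset G.E} {α α' ι ι' : Type} [Fintype ι] [Fintype ι']
  {σ : ι → α × α} {τ : ι' → α' × α'}

variable (G) in
/-- A realisation of the shape `σ` by edge-disjoint, possibly empty, chains of `G` with union `S`.
The last field says over `ZMod 2` that the edges of `σ` with empty chain form a forest. -/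
structure ChainModel (σ : ι → α × α) (S : Finset G.E) where
  node : α → G.V
  chain : ι → List G.E
  isWalk : ∀ i, G.IsWalk (node (σ i).1) (chain i) (node (σ i).2)
  count_eq : ∀ x, ∑ i, (chain i).count x = if x ∈ S then 1 else 0
  acyclic : ∀ g : ι → ZMod 2, ∃ c : α → ZMod 2, ∀ i, chain i = [] → c (σ i).1 + c (σ i).2 = g i

theorem exists_equiv_of_map_univ_eq {γ : Type} {f : ι → γ} {g : ι' → γ}
    (h : (univ.val.map f : Multiset γ) = univ.val.map g) : ∃ ε : ι ≃ ι', ∀ i, g (ε i) = f i := by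
  have hcard (c : γ) : Fintype.card {i // f i = c} = Fintype.card {i // g i = c} := by
    simpa only [Multiset.count_map, Fintype.card_subtype, eq_comm (a := c), card_def, filter_val]
      using congrArg (Multiset.count c) h
  exact ⟨Equiv.ofFiberEquiv fun c => Fintype.equivOfCardEq (hcard c), Equiv.ofFiberEquiv_map _⟩

omit [Fintype ι] [Fintype ι'] in
theorem add_eq_add_of_ends_eq {M : Type} [AddCommMagma M] {i : ι} {j : ι'} {f : α → M}
    {g : α' → M} (h : (ends σ i).map f = (ends τ j).map g) :
    f (σ i).1 + f (σ i).2 = g (τ j).1 + g (τ j).2 := by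
  rcases Sym2.eq_iff.1 h with ⟨h₁, h₂⟩ | ⟨h₁, h₂⟩ <;> rw [h₁, h₂]
  exact add_comm _ _

namespace ChainModel

theorem exists_mem_chain (M : G.ChainModel σ S) {x : G.E} (hx : x ∈ S) : ∃ i, x ∈ M.chain i := by
  by_contra! h
  have hcount := M.count_eq x
  rw [sum_eq_zero fun i _ => List.count_eq_zero.2 (h i), if_pos hx] at hcount
  exact zero_ne_one hcount

theorem transfer (M : G.ChainModel σ S) (ε : ι' ≃ ι) (node' : α' → G.V)
    (h : ∀ i, (ends τ i).map node' = (ends σ (ε i)).map M.node)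
    (hacyc : ∀ g : ι' → ZMod 2, ∃ c : α' → ZMod 2, ∀ i, M.chain (ε i) = [] →
      c (τ i).1 + c (τ i).2 = g i) :
    Nonempty (G.ChainModel τ S) := by
  have hchain (i : ι') : ∃ l, l.Perm (M.chain (ε i)) ∧
      G.IsWalk (node' (τ i).1) l (node' (τ i).2) := by
    rcases Sym2.eq_iff.1 (h i) with ⟨h₁, h₂⟩ | ⟨h₁, h₂⟩ <;> rw [h₁, h₂]
    · exact ⟨_, .refl _, M.isWalk _⟩
    · exact ⟨_, List.reverse_perm _, (M.isWalk _).reverse⟩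
  choose chain hperm hwalk using hchain
  refine ⟨⟨node', chain, hwalk, fun x => ?_, fun g => ?_⟩⟩
  · rw [← M.count_eq, ← ε.sum_comp]
    exact sum_congr rfl fun i _ => (hperm i).count_eq x
  · obtain ⟨c, hc⟩ := hacyc g
    exact ⟨c, fun i hi => hc i (hi ▸ hperm i).nil_eq.symm⟩

theorem relabel (M : G.ChainModel σ S) (θ : α' → α)
    (h : (univ.val.map fun i => (ends τ i).map θ) = univ.val.map (ends σ)) :
    Nonempty (G.ChainModel τ S) := by
  obtain ⟨ε, hε⟩ := exists_equiv_of_map_univ_eq h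
  refine M.transfer ε (M.node ∘ θ) (fun i => by rw [hε, Sym2.map_map]) fun g => ?_
  obtain ⟨c, hc⟩ := M.acyclic (g ∘ ε.symm)
  refine ⟨c ∘ θ, fun i hi => ?_⟩
  have hsum := add_eq_add_of_ends_eq (i := i) (f := c ∘ θ) (g := c) (by rw [hε, Sym2.map_map])
  rw [hsum, hc (ε i) hi, Function.comp_apply, ε.symm_apply_apply]

/-- Contracting the edge `j₀`, whose chain is empty, and expanding a new edge `i₀` instead. -/
theorem reexpand [DecidableEq α] [DecidableEq ι] [DecidableEq ι'] (M : G.ChainModel σ S) {j₀ : ι}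
    (hj₀ : M.chain j₀ = []) (i₀ : ι') (hi₀ : (τ i₀).1 ≠ (τ i₀).2) (θ : α' → α)
    (h : (univ.val.map fun i => (decide (i = i₀),
        (ends τ i).map (Function.update id (σ j₀).2 (σ j₀).1 ∘ θ))) =
      univ.val.map fun j => (decide (j = j₀),
        (ends σ j).map (Function.update id (σ j₀).2 (σ j₀).1))) :
    Nonempty (G.ChainModel τ S) := by
  set κ := Function.update id (σ j₀).2 (σ j₀).1
  have hκ {γ : Type} {f : α → γ} (hf : f (σ j₀).1 = f (σ j₀).2) : f ∘ κ = f := by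
    rw [Function.comp_update, Function.comp_id, hf, Function.update_eq_self]
  obtain ⟨ε, hε⟩ := exists_equiv_of_map_univ_eq h
  obtain ⟨hεj, hεends⟩ := forall_and.1 fun i => Prod.ext_iff.1 (hε i)
  simp only [decide_eq_decide] at hεj hεends
  have hends {γ : Type} {f : α → γ} (hf : f (σ j₀).1 = f (σ j₀).2) (i : ι') :
      (ends τ i).map (f ∘ θ) = (ends σ (ε i)).map f := by
    rw [← hκ hf, Function.comp_assoc, ← Sym2.map_map, ← hεends, Sym2.map_map]
  have hnode : M.node (σ j₀).1 = M.node (σ j₀).2 := by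
    have hwalk := M.isWalk j₀
    rwa [hj₀] at hwalk
  refine M.transfer ε (M.node ∘ θ) (hends hnode) fun g => ?_
  let b (x : α') : ZMod 2 := if x = (τ i₀).2 then g i₀ else 0
  obtain ⟨c, hc⟩ := M.acyclic fun j => g (ε.symm j) + (b (τ (ε.symm j)).1 + b (τ (ε.symm j)).2)
  have hb : b (τ i₀).1 + b (τ i₀).2 = g i₀ := by
    simp only [b, if_neg hi₀, if_true, zero_add]
  have hcj₀ : c (σ j₀).1 = c (σ j₀).2 := by
    have := hc j₀ hj₀
    rwa [ε.symm_apply_eq.2 ((hεj i₀).2 rfl).symm, hb, CharTwo.add_self_eq_zero,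
      CharTwo.add_eq_zero] at this
  refine ⟨fun x => c (θ x) + b x, fun i hi => ?_⟩
  have hsum := add_eq_add_of_ends_eq (f := c ∘ θ) (hends hcj₀ i)
  simp only [Function.comp_apply] at hsum
  rw [add_add_add_comm, hsum, hc _ hi, ε.symm_apply_apply, CharTwo.add_cancel_right]

end ChainModel

/-- The shape `σ` with the edge `i` split by the new vertex `none`; the second half of `i` is the
new edge `none`. -/
def splitEdge [DecidableEq ι] (σ : ι → α × α) (i : ι) : Option ι → Option α × Option α
  | some j => (some (σ j).1, if j = i then none else some (σ j).2)
  | none => (none, some (σ i).2)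

/-- The shape `σ` with an additional edge `none` from `p` to `q`. -/
def addEdge (σ : ι → α × α) (p q : α) : Option ι → α × α
  | some j => σ j
  | none => (p, q)

namespace ChainModel

theorem sum_count_update [DecidableEq ι] (chain : ι → List G.E) {i : ι} {l₁ l₂ : List G.E}
    (h : chain i = l₁ ++ l₂) (x : G.E) :
    l₂.count x + ∑ j, (Function.update chain i l₁ j).count x = ∑ j, (chain j).count x := by
  rw [← add_sum_erase _ _ (mem_univ i), ← add_sum_erase _ _ (mem_univ i), Function.update_self, h,
    List.count_append, add_left_comm, add_assoc]
  congr 2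
  exact sum_congr rfl fun j hj => by rw [Function.update_of_ne (ne_of_mem_erase hj)]

theorem exists_splitEdge [DecidableEq ι] (M : G.ChainModel σ S) {x : G.E} (hx : x ∈ S) {v : G.V}
    (hv : G.Incident x v) :
    ∃ i, ∃ M' : G.ChainModel (splitEdge σ i) S,
      M'.node none = v ∧ ∀ a, M'.node (some a) = M.node a := by
  obtain ⟨i, hi⟩ := M.exists_mem_chain hx
  obtain ⟨l₁, l₂, hl, h₁, h₂⟩ := (M.isWalk i).exists_eq_append hi hv
  have hne : l₁ ++ l₂ ≠ [] := hl ▸ List.ne_nil_of_mem hi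
  refine ⟨i, ⟨fun a => a.elim v M.node, fun j => j.elim l₂ (Function.update M.chain i l₁), ?_,
    fun y => ?_, fun g => ?_⟩, rfl, fun a => rfl⟩
  · rintro (_ | j)
    · exact h₂
    · rcases eq_or_ne j i with rfl | hj
      · simpa [splitEdge] using h₁
      · simpa [splitEdge, hj] using M.isWalk j
  · rw [← M.count_eq, Fintype.sum_option]
    exact sum_count_update M.chain hl y
  · obtain ⟨c, hc⟩ := M.acyclic (g ∘ some)
    let c₀ := if l₁ = [] then c (σ i).1 + g (some i) else c (σ i).2 + g none
    refine ⟨fun a => a.elim c₀ c, ?_⟩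
    rintro (_ | j) hj
    · have hl₁ : l₁ ≠ [] := fun h => hne (by rw [h, show l₂ = [] from hj, List.nil_append])
      simp [splitEdge, c₀, hl₁, add_right_comm, CharTwo.add_self_eq_zero]
    · rcases eq_or_ne j i with rfl | hji
      · have hl₁ : l₁ = [] := by simpa using hj
        simp [splitEdge, c₀, hl₁, ← add_assoc, CharTwo.add_self_eq_zero]
      · simpa [splitEdge, hji] using hc j (by simpa [hji] using hj)

theorem exists_addEdge (M : G.ChainModel σ S) {p q : α} {P : List G.E}
    (hP : G.IsWalk (M.node p) P (M.node q)) (hne : P ≠ []) (hnodup : P.Nodup)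
    (hdisj : ∀ x ∈ P, x ∉ S) : Nonempty (G.ChainModel (addEdge σ p q) (S ∪ P.toFinset)) := by
  refine ⟨⟨M.node, fun j => j.elim P M.chain, ?_, fun x => ?_, fun g => ?_⟩⟩
  · rintro (_ | j)
    · exact hP
    · exact M.isWalk j
  · simp only [Fintype.sum_option, Option.elim_none, Option.elim_some, M.count_eq,
      hnodup.count, mem_union, List.mem_toFinset]
    grind
  · obtain ⟨c, hc⟩ := M.acyclic (g ∘ some)
    refine ⟨c, ?_⟩
    rintro (_ | j) hj
    · exact absurd hj hne
    · exact hc j hj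

end ChainModel

/-- The shape `σ` with a new edge joining a new vertex on the edge `i` to a new vertex on the
edge `j` of the resulting shape. -/
def earExtension [DecidableEq ι] (σ : ι → α × α) (i : ι) (j : Option ι) :
    Option (Option (Option ι)) → Option (Option α) × Option (Option α) :=
  addEdge (splitEdge (splitEdge σ i) j) (some none) none

theorem ChainModel.exists_earExtension [DecidableEq ι] (M : G.ChainModel σ S) {W : Finset G.V}
    {j : ℕ} (hW : G.EarSubgraph S W j) (hSne : S.Nonempty) (hG : G.Connected) (hb : G.Bridgeless)
    (hS : S ≠ univ) :
    ∃ S' W', G.EarSubgraph S' W' (j + 1) ∧ S'.Nonempty ∧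
      ∃ i i', Nonempty (G.ChainModel (earExtension σ i i') S') := by
  obtain ⟨u, hu, v, hv, P, hne, hP, hnodup, hdisj, W', hW'⟩ := hW.exists_ear hG hb hS
  obtain ⟨x, hx, hxu⟩ := hW.exists_incident hSne u hu
  obtain ⟨y, hy, hyv⟩ := hW.exists_incident hSne v hv
  obtain ⟨i, M₁, hu₁, -⟩ := M.exists_splitEdge hx hxu
  obtain ⟨i', M₂, hv₂, hM₂⟩ := M₁.exists_splitEdge hy hyv
  refine ⟨_, W', hW', hSne.mono subset_union_left, i, i', M₂.exists_addEdge ?_ hne hnodup hdisj⟩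
  rwa [hM₂, hu₁, hv₂]

end ChainModel

section Shapes

/-- The theta graph: three edges between two vertices. -/
def thetaShape : Fin 3 → Fin 2 × Fin 2 := ![(0, 1), (0, 1), (1, 0)]

/-- The complete graph on four vertices. -/
def k4Shape : Fin 6 → Fin 4 × Fin 4 := ![(0, 1), (0, 2), (0, 3), (1, 2), (1, 3), (2, 3)]

/-- The cyclic necklace with two digons: a 4-cycle with two opposite edges doubled. -/
def necklace2Shape : Fin 6 → Fin 4 × Fin 4 := ![(0, 1), (0, 1), (1, 2), (2, 3), (2, 3), (3, 0)]

/-- The graph `K₃,₃` on the labels `0, …, 5`; the edge `3 * i + j` joins `i` to `3 + j`. -/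
def k33Shape : Fin 9 → Fin 6 × Fin 6 :=
  ![(0, 3), (0, 4), (0, 5), (1, 3), (1, 4), (1, 5), (2, 3), (2, 4), (2, 5)]

/-- The triangular prism: the triangles are `0, 1, 2` and `3, 4, 5`, the rungs `6, 7, 8`; the edge
`i` is opposite to the end of the rung `6 + i` in the first triangle, and `3 + i` in the second. -/
def prismShape : Fin 9 → Fin 6 × Fin 6 :=
  ![(1, 2), (0, 2), (0, 1), (4, 5), (3, 5), (3, 4), (0, 3), (1, 4), (2, 5)]

/-- The graph `K₄` with the interior of one edge replaced by a digon. -/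
def k4DigonShape : Fin 9 → Fin 6 × Fin 6 :=
  ![(0, 4), (4, 5), (4, 5), (5, 1), (0, 2), (0, 3), (1, 2), (1, 3), (2, 3)]

/-- The cyclic necklace with three digons: a 6-cycle with three alternate edges doubled. -/
def necklace3Shape : Fin 9 → Fin 6 × Fin 6 :=
  ![(0, 1), (0, 1), (1, 2), (2, 3), (2, 3), (3, 4), (4, 5), (4, 5), (5, 0)]

/-- The theta graph with the interiors of two edges replaced by digons. -/
def thetaDigonsShape : Fin 9 → Fin 6 × Fin 6 :=
  ![(0, 2), (2, 3), (2, 3), (3, 1), (0, 4), (4, 5), (4, 5), (5, 1), (0, 1)]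

/-- The vertex relabelling `θ` carries the edges of the shape `τ` to those of the shape `σ`. -/
abbrev Relabels {α α' ι ι' : Type} [Fintype ι] [Fintype ι'] (θ : α' → α) (τ : ι' → α' × α')
    (σ : ι → α × α) : Prop :=
  (univ.val.map fun i => (ends τ i).map θ) = univ.val.map (ends σ)

/-- The vertices of an ear extension of a shape on `Fin m`, the two new ones being numbered last. -/
def earVertex {m : ℕ} (a : Fin (m + 2)) : Option (Option (Fin m)) :=
  (finSuccEquivLast a).map finSuccEquivLast

/-- The ear extensions of `thetaShape`, with relabellings realising them. -/
def thetaEars : List ((Fin 6 → Fin 4 × Fin 4) × List (Fin 4 → Fin 4)) :=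
  [(k4Shape, [![0, 1, 2, 3]]), (necklace2Shape, [![0, 1, 2, 3], ![0, 1, 3, 2]])]

/-- The ear extensions of `k4Shape`, with relabellings realising them. -/
def k4Ears : List ((Fin 9 → Fin 6 × Fin 6) × List (Fin 6 → Fin 6)) :=
  [(k33Shape,
    [![0, 1, 4, 2, 3, 5], ![0, 1, 5, 2, 3, 4], ![0, 2, 4, 1, 3, 5], ![0, 2, 5, 1, 3, 4],
    ![0, 3, 4, 1, 2, 5], ![0, 3, 5, 1, 2, 4]]),
  (prismShape,
    [![0, 1, 2, 3, 4, 5], ![0, 1, 2, 3, 5, 4], ![0, 1, 2, 4, 3, 5], ![0, 1, 2, 4, 5, 3],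
    ![0, 1, 2, 5, 3, 4], ![0, 1, 2, 5, 4, 3], ![0, 1, 3, 2, 4, 5], ![0, 1, 3, 2, 5, 4],
    ![0, 1, 3, 4, 2, 5], ![0, 1, 3, 4, 5, 2], ![0, 1, 3, 5, 2, 4], ![0, 1, 3, 5, 4, 2],
    ![0, 2, 3, 1, 4, 5], ![0, 2, 3, 1, 5, 4], ![0, 2, 3, 4, 1, 5], ![0, 2, 3, 4, 5, 1],
    ![0, 2, 3, 5, 1, 4], ![0, 2, 3, 5, 4, 1], ![0, 4, 5, 1, 2, 3], ![0, 4, 5, 1, 3, 2],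
    ![0, 4, 5, 2, 1, 3], ![0, 4, 5, 2, 3, 1], ![0, 4, 5, 3, 1, 2], ![0, 4, 5, 3, 2, 1]]),
  (k4DigonShape,
    [![0, 1, 2, 3, 4, 5], ![0, 1, 2, 3, 5, 4], ![0, 2, 1, 3, 4, 5], ![0, 2, 1, 3, 5, 4],
    ![0, 3, 1, 2, 4, 5], ![0, 3, 1, 2, 5, 4], ![1, 2, 0, 3, 4, 5], ![1, 2, 0, 3, 5, 4],
    ![1, 3, 0, 2, 4, 5], ![1, 3, 0, 2, 5, 4], ![2, 3, 0, 1, 4, 5], ![2, 3, 0, 1, 5, 4]])]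

/-- The ear extensions of `necklace2Shape`, with relabellings realising them. -/
def necklace2Ears : List ((Fin 9 → Fin 6 × Fin 6) × List (Fin 6 → Fin 6)) :=
  [(prismShape, [![0, 1, 4, 3, 2, 5], ![0, 1, 5, 3, 2, 4]]),
  (k4DigonShape,
    [![0, 1, 4, 5, 3, 2], ![0, 4, 1, 5, 3, 2], ![0, 5, 1, 4, 3, 2], ![1, 4, 0, 5, 2, 3],
    ![1, 5, 0, 4, 2, 3], ![2, 3, 4, 5, 1, 0], ![2, 4, 3, 5, 1, 0], ![2, 5, 3, 4, 1, 0],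
    ![3, 4, 2, 5, 0, 1], ![3, 5, 2, 4, 0, 1]]),
  (necklace3Shape,
    [![0, 1, 2, 3, 4, 5], ![0, 1, 2, 3, 5, 4], ![0, 1, 4, 5, 2, 3], ![0, 1, 5, 4, 2, 3]]),
  (thetaDigonsShape,
    [![0, 1, 3, 2, 4, 5], ![0, 1, 3, 2, 5, 4], ![2, 3, 1, 0, 4, 5], ![2, 3, 1, 0, 5, 4],
    ![4, 5, 0, 1, 3, 2], ![4, 5, 1, 0, 2, 3]])]

theorem exists_mem_thetaEars (i : Fin 3) (j : Option (Fin 3)) :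
    ∃ p ∈ thetaEars, ∃ θ ∈ p.2, Relabels (earVertex ∘ θ) p.1 (earExtension thetaShape i j) := by
  revert i j
  decide +kernel

theorem exists_mem_k4Ears (i : Fin 6) (j : Option (Fin 6)) :
    ∃ p ∈ k4Ears, ∃ θ ∈ p.2, Relabels (earVertex ∘ θ) p.1 (earExtension k4Shape i j) := by
  revert i j
  decide +kernel

theorem exists_mem_necklace2Ears (i : Fin 6) (j : Option (Fin 6)) :
    ∃ p ∈ necklace2Ears, ∃ θ ∈ p.2,
      Relabels (earVertex ∘ θ) p.1 (earExtension necklace2Shape i j) := by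
  revert i j
  decide +kernel

end Shapes

/-! ### Bridgeless multigraphs of exceedance 3 -/

section Classification

theorem ChainModel.isWeakSubdivision {α ι : Type} [Fintype α] [Fintype ι] [Nonempty α]
    {σ : ι → α × α} (M : G.ChainModel σ univ) (hG : G.Connected)
    (hcard : G.nE + (ofEnds σ).nV = G.nV + (ofEnds σ).nE) :
    IsWeakSubdivision G (ofEnds σ) fun i => (M.chain i).length := by
  have : Nonempty (ofEnds σ).V := ‹Nonempty α›
  refine isWeakSubdivision_of_walks hG hcard M.isWalk ?_
    (zeroAcyclic_of_surjective_coboundary fun g => ?_)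
  · refine (Fintype.bijective_iff_surjective_and_card _).2 ⟨fun x => ?_, ?_⟩
    · obtain ⟨i, hi⟩ := M.exists_mem_chain (mem_univ x)
      obtain ⟨k, hk⟩ := List.get_of_mem hi
      exact ⟨⟨i, k⟩, hk⟩
    · simp only [Fintype.card_sigma, Fintype.card_fin]
      change ∑ i, (M.chain i).length = _
      have hlength (i : ι) : (M.chain i).length = ∑ x, (M.chain i).count x := by
        simpa only [Multiset.coe_count, Multiset.coe_card] using
          (Multiset.sum_count_eq_card (m := (M.chain i : Multiset G.E)) fun x _ => mem_univ x).symm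
      simp only [hlength]
      rw [sum_comm]
      simp only [M.count_eq, mem_univ, if_true, sum_const, smul_eq_mul, mul_one, card_univ]
  · obtain ⟨c, hc⟩ := M.acyclic fun i => if h : i ∈ (ofEnds σ).zeroEdges _ then g ⟨i, h⟩ else 0
    refine ⟨c, funext fun ⟨i, hi⟩ => ?_⟩
    exact (CharTwo.sub_eq_add _ _).trans
      ((hc i (List.length_eq_zero_iff.1 (mem_zeroEdges.1 hi))).trans (dif_pos hi))

theorem IsWalk.exists_rotate {u v : G.V} {P : List G.E} (h : G.IsWalk u P u) {x : G.E}
    (hx : x ∈ P) (hv : G.Incident x v) : ∃ P', G.IsWalk v P' v ∧ P'.Perm P := by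
  obtain ⟨l₁, l₂, rfl, h₁, h₂⟩ := h.exists_eq_append hx hv
  exact ⟨l₂ ++ l₁, h₂.append h₁, List.perm_append_comm⟩

/-- The shape of a cycle: one vertex with a loop. -/
def loopShape : Unit → Unit × Unit := fun _ => ((), ())

theorem exists_thetaModel (hG : G.Connected) (hb : G.Bridgeless) (hr : G.nV < G.nE) :
    ∃ S W, G.EarSubgraph S W 2 ∧ S.Nonempty ∧ Nonempty (G.ChainModel thetaShape S) := by
  obtain ⟨e⟩ : Nonempty G.E := Fintype.card_pos_iff.1 (Nat.zero_lt_of_lt hr)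
  have h₀ := EarSubgraph.singleton (G.src e)
  have hS₀ : (∅ : Finset G.E) ≠ univ := fun h => notMem_empty e (h ▸ mem_univ e)
  obtain ⟨b, hb₀, b', hb', P, hne, hP, hnodup, -, W₁, h₁⟩ := h₀.exists_ear hG hb hS₀
  obtain rfl := (mem_singleton.1 hb₀).trans (mem_singleton.1 hb').symm
  have hS₁ : ∅ ∪ P.toFinset ≠ univ := fun h => by
    have := (h₁.eq_univ_iff hG hb).1 h
    omega
  have hS₁ne : (∅ ∪ P.toFinset).Nonempty := by
    rwa [empty_union, List.toFinset_nonempty_iff]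
  obtain ⟨u, hu, v, hv, Q, hQne, hQ, hQnodup, hQS, W₂, h₂⟩ := h₁.exists_ear hG hb hS₁
  obtain ⟨x, hx, hxu⟩ := h₁.exists_incident hS₁ne u hu
  obtain ⟨y, hy, hyv⟩ := h₁.exists_incident hS₁ne v hv
  obtain ⟨P', hP', hperm⟩ := hP.exists_rotate (by simpa using hx) hxu
  let M : G.ChainModel loopShape (∅ ∪ P.toFinset) :=
    { node _ := u
      chain _ := P'
      isWalk _ := hP'
      count_eq x := by simp [hperm.count_eq, hnodup.count]
      acyclic g := ⟨0, fun _ h => absurd (h ▸ hperm).nil_eq.symm hne⟩ }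
  obtain ⟨i, M', hv', hM'⟩ := M.exists_splitEdge hy hyv
  obtain ⟨M''⟩ := M'.exists_addEdge (p := some ()) (q := none) (by rwa [hM', hv']) hQne hQnodup hQS
  have hrel : ∀ i, Relabels ![some (), none] thetaShape
      (addEdge (splitEdge loopShape i) (some ()) none) := by decide
  exact ⟨_, W₂, h₂, hS₁ne.mono subset_union_left, M''.relabel _ (hrel i)⟩

theorem ChainModel.exists_ear_of_table {m k : ℕ} {ι : Type} [Fintype ι]
    {σ : Fin m → Fin k × Fin k}
    {t : List ((ι → Fin (k + 2) × Fin (k + 2)) × List (Fin (k + 2) → Fin (k + 2)))}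
    (ht : ∀ i j, ∃ p ∈ t, ∃ θ ∈ p.2, Relabels (earVertex ∘ θ) p.1 (earExtension σ i j))
    (hG : G.Connected) (hb : G.Bridgeless) {S : Finset G.E} {W : Finset G.V} {j : ℕ}
    (hW : G.EarSubgraph S W j) (hS : S.Nonempty) (M : G.ChainModel σ S) (hj : G.nV + j ≤ G.nE) :
    ∃ S' W', G.EarSubgraph S' W' (j + 1) ∧ S'.Nonempty ∧
      ∃ p ∈ t, Nonempty (G.ChainModel p.1 S') := by
  have hSuniv : S ≠ univ := fun h => by
    have := (hW.eq_univ_iff hG hb).1 h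
    omega
  obtain ⟨S', W', hW', hS', i, i', ⟨M'⟩⟩ := M.exists_earExtension hW hS hG hb hSuniv
  obtain ⟨p, hp, θ, -, hθ⟩ := ht i i'
  exact ⟨S', W', hW', hS', p, hp, M'.relabel _ hθ⟩

theorem exists_cubicModel (hG : G.Connected) (hb : G.Bridgeless) (hr : G.nE = G.nV + 3) :
    ∃ σ ∈ [k33Shape, prismShape, k4DigonShape, necklace3Shape, thetaDigonsShape],
      Nonempty (G.ChainModel σ univ) := by
  obtain ⟨S₂, W₂, h₂, hS₂, ⟨M₂⟩⟩ := exists_thetaModel hG hb (by omega)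
  obtain ⟨S₃, W₃, h₃, hS₃, p, hp, ⟨M₃⟩⟩ :=
    M₂.exists_ear_of_table exists_mem_thetaEars hG hb h₂ hS₂ (by omega)
  have huniv {S : Finset G.E} {W : Finset G.V} (h : G.EarSubgraph S W 4) : S = univ :=
    (h.eq_univ_iff hG hb).2 (by omega)
  simp only [thetaEars, List.mem_cons, List.not_mem_nil, or_false] at hp
  rcases hp with rfl | rfl
  · obtain ⟨S₄, W₄, h₄, -, q, hq, hM₄⟩ :=
      M₃.exists_ear_of_table exists_mem_k4Ears hG hb h₃ hS₃ (by omega)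
    refine ⟨q.1, ?_, huniv h₄ ▸ hM₄⟩
    revert q
    simp +contextual [k4Ears]
  · obtain ⟨S₄, W₄, h₄, -, q, hq, hM₄⟩ :=
      M₃.exists_ear_of_table exists_mem_necklace2Ears hG hb h₃ hS₃ (by omega)
    refine ⟨q.1, ?_, huniv h₄ ▸ hM₄⟩
    revert q
    simp +contextual [necklace2Ears]

end Classification

section ReducedModels

variable {S : Finset G.E}

namespace ChainModel

theorem nonempty_k33_of_prism (M : G.ChainModel prismShape S)
    (h : M.chain 6 = [] ∨ M.chain 7 = [] ∨ M.chain 8 = []) :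
    Nonempty (G.ChainModel k33Shape S) := by
  rcases h with h | h | h
  · exact M.reexpand h 1 (by decide) ![0, 1, 5, 2, 3, 4] (by decide +kernel)
  · exact M.reexpand h 5 (by decide) ![0, 1, 5, 2, 3, 4] (by decide +kernel)
  · exact M.reexpand h 5 (by decide) ![0, 2, 4, 1, 3, 5] (by decide +kernel)

theorem nonempty_prism_of_k4Digon (M : G.ChainModel k4DigonShape S)
    (h : M.chain 0 = [] ∨ M.chain 3 = []) : Nonempty (G.ChainModel prismShape S) := by
  rcases h with h | h
  · exact M.reexpand h 1 (by decide) ![0, 5, 4, 2, 1, 3] (by decide +kernel)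
  · exact M.reexpand h 3 (by decide) ![0, 2, 3, 4, 1, 5] (by decide +kernel)

theorem nonempty_k4Digon_of_necklace3 (M : G.ChainModel necklace3Shape S)
    (h : M.chain 2 = [] ∨ M.chain 5 = []) : Nonempty (G.ChainModel k4DigonShape S) := by
  rcases h with h | h
  · exact M.reexpand h 8 (by decide) ![0, 3, 1, 2, 5, 4] (by decide +kernel)
  · exact M.reexpand h 8 (by decide) ![5, 2, 3, 4, 0, 1] (by decide +kernel)

theorem nonempty_k4Digon_of_thetaDigons (M : G.ChainModel thetaDigonsShape S)
    (h : M.chain 4 = [] ∨ M.chain 7 = []) : Nonempty (G.ChainModel k4DigonShape S) := by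
  rcases h with h | h
  · exact M.reexpand h 4 (by decide) ![0, 1, 4, 5, 2, 3] (by decide +kernel)
  · exact M.reexpand h 7 (by decide) ![0, 1, 4, 5, 2, 3] (by decide +kernel)

theorem exists_isWeakSubdivision_K33 (M : G.ChainModel k33Shape univ) (hG : G.Connected)
    (hr : G.nE = G.nV + 3) : ∃ w, IsWeakSubdivision G K33 w := by
  obtain ⟨M'⟩ := M.relabel (τ := fun e : Fin 3 × Fin 3 => (Sum.inl e.1, Sum.inr e.2))
    (Sum.elim ![0, 1, 2] ![3, 4, 5]) (by decide +kernel)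
  refine ⟨_, M'.isWeakSubdivision hG ?_⟩
  rw [hr, add_assoc]
  rfl

end ChainModel

/-- An empty chain at one of these positions lets the edges around it be re-paired, giving a model
of another shape nearer to `K₃,₃`. -/
theorem exists_reducedModel (hG : G.Connected) (hb : G.Bridgeless) (hr : G.nE = G.nV + 3)
    (hK : ¬ ∃ w, IsWeakSubdivision G K33 w) :
    (∃ M : G.ChainModel prismShape univ, M.chain 6 ≠ [] ∧ M.chain 7 ≠ [] ∧ M.chain 8 ≠ []) ∨
      (∃ M : G.ChainModel k4DigonShape univ, M.chain 0 ≠ [] ∧ M.chain 3 ≠ []) ∨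
      (∃ M : G.ChainModel necklace3Shape univ, M.chain 2 ≠ [] ∧ M.chain 5 ≠ []) ∨
      (∃ M : G.ChainModel thetaDigonsShape univ, M.chain 4 ≠ [] ∧ M.chain 7 ≠ []) := by
  by_contra! ⟨hprism, hk4, hneck, htheta⟩
  have not_prism (M : G.ChainModel prismShape univ) : False := by
    obtain ⟨M'⟩ := M.nonempty_k33_of_prism (by have := hprism M; tauto)
    exact hK (M'.exists_isWeakSubdivision_K33 hG hr)
  have not_k4Digon (M : G.ChainModel k4DigonShape univ) : False := by
    obtain ⟨M'⟩ := M.nonempty_prism_of_k4Digon (by have := hk4 M; tauto)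
    exact not_prism M'
  obtain ⟨σ, hσ, ⟨M⟩⟩ := exists_cubicModel hG hb hr
  simp only [List.mem_cons, List.not_mem_nil, or_false] at hσ
  rcases hσ with rfl | rfl | rfl | rfl | rfl
  · exact hK (M.exists_isWeakSubdivision_K33 hG hr)
  · exact not_prism M
  · exact not_k4Digon M
  · obtain ⟨M'⟩ := M.nonempty_k4Digon_of_necklace3 (by have := hneck M; tauto)
    exact not_k4Digon M'
  · obtain ⟨M'⟩ := M.nonempty_k4Digon_of_thetaDigons (by have := htheta M; tauto)
    exact not_k4Digon M'

end ReducedModels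

/-! ### Coindependence polynomials of shapes -/

section MergeEnds

variable {α ι : Type} [DecidableEq α]

/-- Identifies the two ends of each edge of a list: two vertices get the same label if and only if
the edges in the list connect them. -/
def mergeEnds (σ : ι → α × α) : List ι → α → α
  | [], a => a
  | i :: l, a =>
    if mergeEnds σ l a = mergeEnds σ l (σ i).1 then mergeEnds σ l (σ i).2 else mergeEnds σ l a

variable {σ : ι → α × α} {l : List ι}

theorem mergeEnds_fst_eq_snd {i : ι} (hi : i ∈ l) :
    mergeEnds σ l (σ i).1 = mergeEnds σ l (σ i).2 := by
  induction l with
  | nil => exact absurd hi List.not_mem_nil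
  | cons j l ih =>
    rcases List.mem_cons.1 hi with rfl | hi
    · simp only [mergeEnds, if_true, ite_self]
    · simp only [mergeEnds, ih hi]

theorem apply_mergeEnds {γ : Type} {f : α → γ} (hf : ∀ i ∈ l, f (σ i).1 = f (σ i).2) (a : α) :
    f (mergeEnds σ l a) = f a := by
  induction l generalizing a with
  | nil => rfl
  | cons j l ih =>
    obtain ⟨hj, hf⟩ := List.forall_mem_cons.1 hf
    rw [mergeEnds]
    split_ifs with h
    · rw [ih hf, ← hj, ← ih hf (σ j).1, ← h, ih hf]
    · exact ih hf a

theorem connOn_ofEnds_iff [Fintype α] [Fintype ι] {S : Finset ι} (hS : ∀ i, i ∈ S ↔ i ∈ l) :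
    (ofEnds σ).ConnOn S ↔ ∀ a b, mergeEnds σ l a = mergeEnds σ l b := by
  let c : α → α := mergeEnds σ l
  refine ⟨fun h a b => ConnOn.eq_of_forall_edge h c (fun i hi => ?_) a b,
    fun h => connOn_of_forall_colouring fun (c : α → Bool) hc a b => ?_⟩
  · exact mergeEnds_fst_eq_snd ((hS i).1 hi)
  · have hc' (i : ι) (hi : i ∈ l) := hc i ((hS i).2 hi)
    exact (apply_mergeEnds hc' a).symm.trans ((congrArg c (h a b)).trans (apply_mergeEnds hc' b))

end MergeEnds

section ShapePoly

variable {m n m' n' : ℕ} {σ : Fin m → Fin n × Fin n} {σ' : Fin m' → Fin n' × Fin n'}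

/-- The shape `σ` is connected after deletion of the edges in `s`; a decidable form of `ConnOn`. -/
abbrev ConnectedWithout (σ : Fin m → Fin n × Fin n) (s : Multiset (Fin m)) : Prop :=
  ∀ a b, mergeEnds σ ((List.finRange m).filter (· ∉ s)) a =
    mergeEnds σ ((List.finRange m).filter (· ∉ s)) b

theorem connOn_ofEnds_sdiff_iff {T : Finset (ofEnds σ).E} :
    (ofEnds σ).ConnOn (univ \ T) ↔ ConnectedWithout σ (Finset.val T) :=
  connOn_ofEnds_iff fun e => by
    have hcompl (D : Multigraph) (S : Finset D.E) (f : D.E) : f ∈ univ \ S ↔ f ∉ S := by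
      rw [mem_sdiff, and_iff_right (mem_univ f)]
    exact (hcompl (ofEnds σ) T e).trans (by
      simp only [List.mem_filter, List.mem_finRange, true_and, decide_eq_true_eq]
      exact Iff.rfl)

section Semiring

variable {R : Type*} [CommSemiring R]

/-- The polynomial of the chain lengths `x` that counts the `i`-sets of edges whose deletion leaves
a weak subdivision of the shape `σ` connected; a computable form of `coindepPoly`. -/
def shapePoly (σ : Fin m → Fin n × Fin n) (i : ℕ) (x : Fin m → R) : R :=
  ∑ T ∈ powersetCard i univ with ConnectedWithout σ T.val, ∏ e ∈ T, x e

theorem coindepPoly_ofEnds (i : ℕ) (x : Fin m → R) :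
    (ofEnds σ).coindepPoly i x = shapePoly σ i x := by
  refine sum_congr (ext fun T : Finset (Fin m) => ?_) fun _ _ => rfl
  have hT : T ∈ ({T ∈ powersetCard i univ | ConnectedWithout σ T.val} : Finset (Finset (Fin m))) ↔
      #T = i ∧ ConnectedWithout σ T.val := by
    rw [mem_filter, mem_powersetCard_univ]
  exact mem_coindep.trans ((and_congr_right' connOn_ofEnds_sdiff_iff).trans hT.symm)

theorem shapePoly_eq_of_map {π : Fin m → Fin m'}
    (h : ∀ T : Finset (Fin m), ConnectedWithout σ T.val ↔
      Set.InjOn π (T : Set (Fin m)) ∧ ConnectedWithout σ' (T.image π).val)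
    (i : ℕ) (x : Fin m → R) :
    shapePoly σ i x = shapePoly σ' i fun f => ∑ e with π e = f, x e := by
  refine sum_prod_eq_sum_prod_of_mem_iff_image_mem (fun F => ?_) x
  simp only [mem_filter, mem_powersetCard_univ, h, and_left_comm (b := Set.InjOn π F)]
  exact and_congr_right fun hF => by rw [card_image_of_injOn hF]

theorem shapePoly_comp {π : Fin m → Fin m} {θ : Fin n → Fin n} (hπ : π.Bijective)
    (hθ : θ.Bijective) (h : ∀ e, σ (π e) = ((σ e).map θ θ) ∨ σ (π e) = ((σ e).map θ θ).swap)
    (i : ℕ) (x : Fin m → R) : shapePoly σ i (x ∘ π) = shapePoly σ i x := by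
  let f : MGIso (ofEnds σ) (ofEnds σ) :=
    ⟨.ofBijective θ hθ, .ofBijective π hπ, fun e => (h e).imp Prod.ext_iff.1 Prod.ext_iff.1⟩
  rw [← coindepPoly_ofEnds, ← coindepPoly_ofEnds]
  exact coindepPoly_comp_eMap f i x

theorem sum_filter_powersetCard (p : Multiset (Fin m) → Prop) [DecidablePred p] (i : ℕ)
    (x : Fin m → R) :
    ∑ T ∈ powersetCard i univ with p T.val, ∏ e ∈ T, x e =
      ((((List.finRange m).sublistsLen i).filter fun l : List (Fin m) => p l).map
        fun l : List (Fin m) => (l.map x).prod).sum := by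
  have h : ((univ : Finset (Fin m)).powersetCard i).val.map Finset.val =
      (((List.finRange m).sublistsLen i).map Multiset.ofList : List (Multiset (Fin m))) :=
    (map_val_val_powersetCard univ i).trans (Multiset.powersetCard_coe i _)
  have h' := congrArg (fun s => ((s.filter p).map fun t => (t.map x).prod).sum) h
  simp only [Multiset.filter_map, Multiset.map_map, Function.comp_def, Multiset.filter_coe,
    Multiset.map_coe, Multiset.sum_coe, Multiset.prod_coe, List.filter_map, List.map_map] at h'
  exact h'

theorem shapePoly_add_sum_of_perm {i : ℕ} {cuts : List (List (Fin m))} (x : Fin m → R)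
    (h : (((List.finRange m).sublistsLen i).filter
      fun l : List (Fin m) => ¬ConnectedWithout σ l).Perm cuts) :
    shapePoly σ i x + (cuts.map fun l => (l.map x).prod).sum = (univ.val.map x).esymm i := by
  rw [esymm_map_val, ← sum_filter_add_sum_filter_not _ fun T => ConnectedWithout σ T.val,
    ← (h.map _).sum_eq, ← sum_filter_powersetCard fun s => ¬ConnectedWithout σ s, shapePoly]

end Semiring

end ShapePoly

theorem esymm_zero_eq_one {R : Type*} [CommSemiring R] (s : Multiset R) : s.esymm 0 = 1 := by
  rw [Multiset.esymm, Multiset.powersetCard_zero_left, Multiset.map_singleton, Multiset.prod_zero,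
    Multiset.sum_singleton]

theorem esymm_cons_succ {R : Type*} [CommSemiring R] (a : R) (s : Multiset R) (n : ℕ) :
    (a ::ₘ s).esymm (n + 1) = s.esymm (n + 1) + a * s.esymm n := by
  simp only [Multiset.esymm, Multiset.powersetCard_cons, Multiset.map_add, Multiset.sum_add,
    Multiset.map_map, Function.comp_def, Multiset.prod_cons, Multiset.sum_map_mul_left]

theorem esymm_nil_succ {R : Type*} [CommSemiring R] (n : ℕ) :
    (0 : Multiset R).esymm (n + 1) = 0 := by
  rw [Multiset.esymm, Multiset.powersetCard_zero_right, Multiset.map_zero, Multiset.sum_zero]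

section CutLists

variable {m n i : ℕ} {σ : Fin m → Fin n × Fin n} {R : Type*} [CommRing R]

theorem shapePoly_eq_esymm_sub {cuts : List (List (Fin m))}
    (h : (((List.finRange m).sublistsLen i).filter
      fun l : List (Fin m) => ¬ConnectedWithout σ l).Perm cuts) (x : Fin m → R) :
    shapePoly σ i x = (univ.val.map x).esymm i - (cuts.map fun l => (l.map x).prod).sum :=
  eq_sub_of_add_eq (shapePoly_add_sum_of_perm x h)

/-- The lists obtained from `l` by adding one more edge. -/
abbrev extensions (l : List (Fin m)) : List (List (Fin m)) :=
  ((List.finRange m).filter (· ∉ l)).map fun e => l.orderedInsert (· ≤ ·) e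

theorem sum_filter_notMem {l : List (Fin m)} (hl : l.Nodup) (x : Fin m → R) :
    (((List.finRange m).filter (· ∉ l)).map x).sum = ∑ e, x e - (l.map x).sum := by
  have hcompl : ((List.finRange m).filter (· ∉ l)).toFinset = l.toFinsetᶜ := by
    ext e
    simp only [List.mem_toFinset, List.mem_filter, List.mem_finRange, true_and,
      decide_eq_true_eq, mem_compl]
  rw [← List.sum_toFinset x hl, ← sum_compl_add_sum l.toFinset x, add_sub_cancel_right, ← hcompl,
    List.sum_toFinset x ((List.nodup_finRange m).filter _)]

theorem shapePoly_succ_eq_esymm_sub {cuts extra : List (List (Fin m))}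
    (hcuts : ∀ l ∈ cuts, l.Nodup)
    (h : (((List.finRange m).sublistsLen (i + 1)).filter
      fun l : List (Fin m) => ¬ConnectedWithout σ l).Perm (cuts.flatMap extensions ++ extra))
    (x : Fin m → R) :
    shapePoly σ (i + 1) x = (univ.val.map x).esymm (i + 1) -
      ((cuts.map fun l => (l.map x).prod * (∑ e, x e - (l.map x).sum)).sum +
        (extra.map fun l => (l.map x).prod).sum) := by
  have hprod : ∀ l ∈ cuts, ((extensions l).map fun l => (l.map x).prod).sum =
      (l.map x).prod * (∑ e, x e - (l.map x).sum) := fun l hl => by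
    simp only [extensions, List.map_map, Function.comp_def,
      ((List.perm_orderedInsert (· ≤ ·) _ l).map x).prod_eq, List.map_cons, List.prod_cons,
      List.sum_map_mul_right, ← sum_filter_notMem (hcuts l hl), mul_comm]
  rw [shapePoly_eq_esymm_sub h, List.map_append, List.sum_append, List.map_flatMap, List.flatMap,
    List.sum_flatten, List.map_map]
  exact congrArg (fun l : List R => _ - (l.sum + _)) (List.map_congr_left hprod)

end CutLists

section Contractions

variable {R : Type*} [CommSemiring R] (i : ℕ) (x : Fin 9 → R)

theorem shapePoly_k4Digon : shapePoly k4DigonShape i x =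
    shapePoly prismShape i ![0, x 2, x 1, x 8, x 5, x 4, x 0 + x 3, x 6, x 7] := by
  rw [shapePoly_eq_of_map (σ' := prismShape) (π := ![6, 2, 1, 6, 5, 4, 7, 8, 3])
    (by simp only [Set.InjOn, mem_coe]; decide +kernel)]
  refine congrArg _ (funext fun f => ?_)
  rw [sum_filter]
  fin_cases f <;> simp [Fin.sum_univ_succ]

theorem shapePoly_necklace3 : shapePoly necklace3Shape i x =
    shapePoly prismShape i ![0, x 7, x 6, 0, x 1, x 0, x 2 + (x 5 + x 8), x 3, x 4] := by
  rw [shapePoly_eq_of_map (σ' := prismShape) (π := ![5, 4, 6, 7, 8, 6, 2, 1, 6])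
    (by simp only [Set.InjOn, mem_coe]; decide +kernel)]
  refine congrArg _ (funext fun f => ?_)
  rw [sum_filter]
  fin_cases f <;> simp [Fin.sum_univ_succ]

theorem shapePoly_thetaDigons : shapePoly thetaDigonsShape i x =
    shapePoly prismShape i ![0, x 6, x 5, x 1, x 2, 0, x 4 + x 7, x 8, x 0 + x 3] := by
  rw [shapePoly_eq_of_map (σ' := prismShape) (π := ![8, 3, 4, 8, 6, 2, 1, 6, 7])
    (by simp only [Set.InjOn, mem_coe]; decide +kernel)]
  refine congrArg _ (funext fun f => ?_)
  rw [sum_filter]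
  fin_cases f <;> simp [Fin.sum_univ_succ]

end Contractions

section MinimalCuts

/-- The 3-edge cuts of `K₃,₃`: the stars of its vertices. -/
def k33Stars : List (List (Fin 9)) :=
  [[0, 1, 2], [3, 4, 5], [6, 7, 8], [0, 3, 6], [1, 4, 7], [2, 5, 8]]

/-- The 4-edge cuts of `K₃,₃` without smaller cuts inside: each isolates the two ends of an edge. -/
def k33EdgeCuts : List (List (Fin 9)) :=
  [[1, 2, 3, 6], [0, 2, 4, 7], [0, 1, 5, 8], [0, 4, 5, 6], [1, 3, 5, 7], [2, 3, 4, 8],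
    [0, 3, 7, 8], [1, 4, 6, 8], [2, 5, 6, 7]]

/-- The 3-edge cuts of the prism: the stars of its vertices and the set of rungs. -/
def prismCuts : List (List (Fin 9)) :=
  [[1, 2, 6], [0, 2, 7], [0, 1, 8], [4, 5, 6], [3, 5, 7], [3, 4, 8], [6, 7, 8]]

/-- The 4-edge cuts of the prism without smaller cuts inside: each isolates the two ends of an
edge. -/
def prismEdgeCuts : List (List (Fin 9)) :=
  [[1, 2, 4, 5], [0, 2, 3, 5], [0, 1, 3, 4], [1, 2, 7, 8], [0, 2, 6, 8], [0, 1, 6, 7],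
    [4, 5, 7, 8], [3, 5, 6, 8], [3, 4, 6, 7]]

variable {R : Type*} [CommRing R]
  (x₀ x₁ x₂ x₃ x₄ x₅ x₆ x₇ x₈ : R)
  (a₁ a₂ a₃ b₁ b₂ b₃ r₁ r₂ r₃ : R)

theorem shapePoly_two_k33 : shapePoly k33Shape 2 ![x₀, x₁, x₂, x₃, x₄, x₅, x₆, x₇, x₈] =
    ({x₀, x₁, x₂, x₃, x₄, x₅, x₆, x₇, x₈} : Multiset R).esymm 2 := by
  rw [shapePoly_eq_esymm_sub (cuts := []) (by decide +kernel), List.map_nil, List.sum_nil, sub_zero]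
  rfl

theorem shapePoly_three_k33 : shapePoly k33Shape 3 ![x₀, x₁, x₂, x₃, x₄, x₅, x₆, x₇, x₈] =
    ({x₀, x₁, x₂, x₃, x₄, x₅, x₆, x₇, x₈} : Multiset R).esymm 3 -
      (x₀ * x₁ * x₂ + x₃ * x₄ * x₅ + x₆ * x₇ * x₈ + x₀ * x₃ * x₆ + x₁ * x₄ * x₇ +
        x₂ * x₅ * x₈) := by
  rw [shapePoly_eq_esymm_sub (cuts := k33Stars) (by decide +kernel)]
  simp only [k33Stars, List.map_cons, List.map_nil, List.prod_cons, List.prod_nil, List.sum_cons,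
    List.sum_nil, mul_one, add_zero, ← mul_assoc, ← add_assoc]
  rfl

theorem shapePoly_four_k33 : shapePoly k33Shape 4 ![x₀, x₁, x₂, x₃, x₄, x₅, x₆, x₇, x₈] =
    ({x₀, x₁, x₂, x₃, x₄, x₅, x₆, x₇, x₈} : Multiset R).esymm 4 -
      (x₀ * x₁ * x₂ * (x₃ + x₄ + x₅ + x₆ + x₇ + x₈) +
      x₃ * x₄ * x₅ * (x₀ + x₁ + x₂ + x₆ + x₇ + x₈) +
      x₆ * x₇ * x₈ * (x₀ + x₁ + x₂ + x₃ + x₄ + x₅) +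
      x₀ * x₃ * x₆ * (x₁ + x₂ + x₄ + x₅ + x₇ + x₈) +
      x₁ * x₄ * x₇ * (x₀ + x₂ + x₃ + x₅ + x₆ + x₈) +
      x₂ * x₅ * x₈ * (x₀ + x₁ + x₃ + x₄ + x₆ + x₇) + x₁ * x₂ * x₃ * x₆ + x₀ * x₂ * x₄ * x₇ +
      x₀ * x₁ * x₅ * x₈ + x₀ * x₄ * x₅ * x₆ + x₁ * x₃ * x₅ * x₇ + x₂ * x₃ * x₄ * x₈ +
      x₀ * x₃ * x₇ * x₈ + x₁ * x₄ * x₆ * x₈ + x₂ * x₅ * x₆ * x₇) := by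
  rw [shapePoly_succ_eq_esymm_sub (cuts := k33Stars) (extra := k33EdgeCuts) (by decide)
    (by decide +kernel)]
  refine congrArg (_ - ·) ?_
  simp only [k33Stars, k33EdgeCuts, List.map_cons, List.map_nil, List.prod_cons, List.prod_nil,
    List.sum_cons, List.sum_nil, Fin.sum_univ_succ, Fin.sum_univ_zero]
  ring!

theorem shapePoly_two_prism : shapePoly prismShape 2 ![a₁, a₂, a₃, b₁, b₂, b₃, r₁, r₂, r₃] =
    ({a₁, a₂, a₃, b₁, b₂, b₃, r₁, r₂, r₃} : Multiset R).esymm 2 := by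
  rw [shapePoly_eq_esymm_sub (cuts := []) (by decide +kernel), List.map_nil, List.sum_nil, sub_zero]
  rfl

theorem shapePoly_three_prism : shapePoly prismShape 3 ![a₁, a₂, a₃, b₁, b₂, b₃, r₁, r₂, r₃] =
    ({a₁, a₂, a₃, b₁, b₂, b₃, r₁, r₂, r₃} : Multiset R).esymm 3 -
      (a₂ * a₃ * r₁ + a₁ * a₃ * r₂ + a₁ * a₂ * r₃ + b₂ * b₃ * r₁ + b₁ * b₃ * r₂ + b₁ * b₂ * r₃ +
      r₁ * r₂ * r₃) := by
  rw [shapePoly_eq_esymm_sub (cuts := prismCuts) (by decide +kernel)]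
  simp only [prismCuts, List.map_cons, List.map_nil, List.prod_cons, List.prod_nil, List.sum_cons,
    List.sum_nil, mul_one, add_zero, ← mul_assoc, ← add_assoc]
  rfl

theorem shapePoly_four_prism : shapePoly prismShape 4 ![a₁, a₂, a₃, b₁, b₂, b₃, r₁, r₂, r₃] =
    ({a₁, a₂, a₃, b₁, b₂, b₃, r₁, r₂, r₃} : Multiset R).esymm 4 -
      (a₂ * a₃ * r₁ * (a₁ + b₁ + b₂ + b₃ + r₂ + r₃) +
      a₁ * a₃ * r₂ * (a₂ + b₁ + b₂ + b₃ + r₁ + r₃) +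
      a₁ * a₂ * r₃ * (a₃ + b₁ + b₂ + b₃ + r₁ + r₂) +
      b₂ * b₃ * r₁ * (a₁ + a₂ + a₃ + b₁ + r₂ + r₃) +
      b₁ * b₃ * r₂ * (a₁ + a₂ + a₃ + b₂ + r₁ + r₃) +
      b₁ * b₂ * r₃ * (a₁ + a₂ + a₃ + b₃ + r₁ + r₂) +
      r₁ * r₂ * r₃ * (a₁ + a₂ + a₃ + b₁ + b₂ + b₃) + a₂ * a₃ * b₂ * b₃ + a₁ * a₃ * b₁ * b₃ +
      a₁ * a₂ * b₁ * b₂ + a₂ * a₃ * r₂ * r₃ + a₁ * a₃ * r₁ * r₃ + a₁ * a₂ * r₁ * r₂ +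
      b₂ * b₃ * r₂ * r₃ + b₁ * b₃ * r₁ * r₃ + b₁ * b₂ * r₁ * r₂) := by
  rw [shapePoly_succ_eq_esymm_sub (cuts := prismCuts) (extra := prismEdgeCuts) (by decide)
    (by decide +kernel)]
  refine congrArg (_ - ·) ?_
  simp only [prismCuts, prismEdgeCuts, List.map_cons, List.map_nil, List.prod_cons, List.prod_nil,
    List.sum_cons, List.sum_nil, Fin.sum_univ_succ, Fin.sum_univ_zero]
  ring!

end MinimalCuts

/-! ### Domination of prisms -/

/-- Some weighting of `K₃,₃` with the same total length as the weighting `x` of `σ` is better: the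
multigraph it subdivides into has at least as many coindependent 2-sets, and more coindependent
3-sets and 4-sets. -/
def Dominated {m n : ℕ} (σ : Fin m → Fin n × Fin n) (x : Fin m → ℤ) : Prop :=
  ∃ y : Fin 9 → ℤ, 0 ≤ y ∧ ∑ i, y i = ∑ i, x i ∧ shapePoly σ 2 x ≤ shapePoly k33Shape 2 y ∧
    shapePoly σ 3 x < shapePoly k33Shape 3 y ∧ shapePoly σ 4 x < shapePoly k33Shape 4 y

theorem Dominated.of_le {m n m' n' : ℕ} {σ : Fin m → Fin n × Fin n} {x : Fin m → ℤ}
    {σ' : Fin m' → Fin n' × Fin n'} {x' : Fin m' → ℤ} (h : Dominated σ' x')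
    (hsum : ∑ i, x' i = ∑ i, x i) (h₂ : shapePoly σ 2 x ≤ shapePoly σ' 2 x')
    (h₃ : shapePoly σ 3 x ≤ shapePoly σ' 3 x') (h₄ : shapePoly σ 4 x ≤ shapePoly σ' 4 x') :
    Dominated σ x := by
  obtain ⟨y, hy, hys, hy₂, hy₃, hy₄⟩ := h
  exact ⟨y, hy, hys.trans hsum, h₂.trans hy₂, h₃.trans_lt hy₃, h₄.trans_lt hy₄⟩

section PrismMoves

variable {a₁ a₂ a₃ b₁ b₂ b₃ r₁ r₂ r₃ : ℤ}

theorem sum_vec_nine (x₀ x₁ x₂ x₃ x₄ x₅ x₆ x₇ x₈ : ℤ) :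
    ∑ i, ![x₀, x₁, x₂, x₃, x₄, x₅, x₆, x₇, x₈] i =
      x₀ + x₁ + x₂ + x₃ + x₄ + x₅ + x₆ + x₇ + x₈ := by
  simp only [Fin.sum_univ_castSucc, Finset.univ_eq_empty, Finset.sum_empty, zero_add]
  rfl

theorem shapePoly_prism_cycle (i : ℕ) (a₁ a₂ a₃ b₁ b₂ b₃ r₁ r₂ r₃ : ℤ) :
    shapePoly prismShape i ![a₂, a₃, a₁, b₂, b₃, b₁, r₂, r₃, r₁] =
      shapePoly prismShape i ![a₁, a₂, a₃, b₁, b₂, b₃, r₁, r₂, r₃] := by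
  refine (congrArg _ (funext ?_)).trans (shapePoly_comp (π := ![1, 2, 0, 4, 5, 3, 7, 8, 6])
    (θ := ![1, 2, 0, 4, 5, 3]) (by decide) (by decide) (by decide) i _)
  simp [Fin.forall_fin_succ]

theorem Dominated.prism_cycle
    (h : Dominated prismShape ![a₂, a₃, a₁, b₂, b₃, b₁, r₂, r₃, r₁]) :
    Dominated prismShape ![a₁, a₂, a₃, b₁, b₂, b₃, r₁, r₂, r₃] :=
  h.of_le (by simp only [sum_vec_nine]; ring) (shapePoly_prism_cycle ..).ge
    (shapePoly_prism_cycle ..).ge (shapePoly_prism_cycle ..).ge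

theorem shapePoly_prism_swap (i : ℕ) (a₁ a₂ a₃ b₁ b₂ b₃ r₁ r₂ r₃ : ℤ) :
    shapePoly prismShape i ![a₂, a₁, a₃, b₂, b₁, b₃, r₂, r₁, r₃] =
      shapePoly prismShape i ![a₁, a₂, a₃, b₁, b₂, b₃, r₁, r₂, r₃] := by
  refine (congrArg _ (funext ?_)).trans (shapePoly_comp (π := ![1, 0, 2, 4, 3, 5, 7, 6, 8])
    (θ := ![1, 0, 2, 4, 3, 5]) (by decide) (by decide) (by decide) i _)
  simp [Fin.forall_fin_succ]

theorem Dominated.prism_swap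
    (h : Dominated prismShape ![a₂, a₁, a₃, b₂, b₁, b₃, r₂, r₁, r₃]) :
    Dominated prismShape ![a₁, a₂, a₃, b₁, b₂, b₃, r₁, r₂, r₃] :=
  h.of_le (by simp only [sum_vec_nine]; ring) (shapePoly_prism_swap ..).ge
    (shapePoly_prism_swap ..).ge (shapePoly_prism_swap ..).ge

theorem shapePoly_prism_flip (i : ℕ) (a₁ a₂ a₃ b₁ b₂ b₃ r₁ r₂ r₃ : ℤ) :
    shapePoly prismShape i ![b₁, b₂, b₃, a₁, a₂, a₃, r₁, r₂, r₃] =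
      shapePoly prismShape i ![a₁, a₂, a₃, b₁, b₂, b₃, r₁, r₂, r₃] := by
  refine (congrArg _ (funext ?_)).trans (shapePoly_comp (π := ![3, 4, 5, 0, 1, 2, 6, 7, 8])
    (θ := ![3, 4, 5, 0, 1, 2]) (by decide) (by decide) (by decide) i _)
  simp [Fin.forall_fin_succ]

theorem Dominated.prism_flip
    (h : Dominated prismShape ![b₁, b₂, b₃, a₁, a₂, a₃, r₁, r₂, r₃]) :
    Dominated prismShape ![a₁, a₂, a₃, b₁, b₂, b₃, r₁, r₂, r₃] :=
  h.of_le (by simp only [sum_vec_nine]; ring) (shapePoly_prism_flip ..).ge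
    (shapePoly_prism_flip ..).ge (shapePoly_prism_flip ..).ge

theorem Dominated.prism_shift
    (h : Dominated prismShape ![a₁, a₂, a₃ + 1, b₁, b₂, b₃ - 1, r₁, r₂, r₃])
    (h₂ : 0 ≤ b₃ - a₃ - 1)
    (h₃ : 0 ≤ (b₃ - a₃ - 1) * (a₁ + b₁ + a₂ + b₂ + r₁ + r₂ + r₃) -
      r₂ * (a₁ - b₁) - r₁ * (a₂ - b₂))
    (h₄ : 0 ≤ (b₃ - a₃ - 1) * ((a₂ + b₂ + r₁) * (a₁ + b₁ + r₂) +
        r₃ * (a₁ + b₁ + a₂ + b₂ + r₁ + r₂)) -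
      r₁ * (a₂ - b₂) * (a₁ + b₁) - r₂ * (a₁ - b₁) * (a₂ + b₂) -
      (r₁ * r₂ + r₃ * (r₁ + r₂)) * (a₁ - b₁ + (a₂ - b₂))) :
    Dominated prismShape ![a₁, a₂, a₃, b₁, b₂, b₃, r₁, r₂, r₃] := by
  refine h.of_le ?_ (sub_nonneg.1 (h₂.trans_eq ?_)) (sub_nonneg.1 (h₃.trans_eq ?_))
    (sub_nonneg.1 (h₄.trans_eq ?_)) <;>
  simp only [sum_vec_nine, shapePoly_two_prism, shapePoly_three_prism, shapePoly_four_prism,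
    Multiset.insert_eq_cons, ← Multiset.cons_zero, esymm_cons_succ, esymm_nil_succ,
    esymm_zero_eq_one] <;>
  ring

/-- Exchanging the ends of the chains `a₁` and `b₁` at the third rung turns the prism into
`K₃,₃`. -/
theorem dominated_prism_of_twist (ha₁ : 0 ≤ a₁) (ha₂ : 0 ≤ a₂) (ha₃ : 0 ≤ a₃) (hb₁ : 0 ≤ b₁)
    (hb₂ : 0 ≤ b₂) (hb₃ : 0 ≤ b₃) (hr₁ : 0 ≤ r₁) (hr₂ : 0 ≤ r₂) (hr₃ : 0 < r₃)
    (h₃ : 0 < r₁ * r₂ + (a₁ - b₁) * (a₂ - b₂))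
    (h₄ : 0 < (a₁ - b₁) * (a₂ - b₂) * (r₁ + r₂ + a₃ + b₃) +
      r₁ * r₂ * (a₁ + b₁ + a₂ + b₂ + a₃ + b₃) +
      r₁ * (a₁ - b₁) * (a₃ - b₃) + r₂ * (a₂ - b₂) * (a₃ - b₃)) :
    Dominated prismShape ![a₁, a₂, a₃, b₁, b₂, b₃, r₁, r₂, r₃] := by
  refine ⟨![r₁, a₃, a₂, b₃, r₂, b₁, b₂, a₁, r₃], ?_, ?_, le_of_eq ?_,
    sub_pos.1 ((mul_pos hr₃ h₃).trans_eq ?_), sub_pos.1 ((mul_pos hr₃ h₄).trans_eq ?_)⟩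
  · simp only [Pi.le_def, Fin.forall_fin_succ]
    simp [*, hr₃.le]
  all_goals
    simp only [sum_vec_nine, shapePoly_two_k33, shapePoly_three_k33, shapePoly_four_k33,
      shapePoly_two_prism, shapePoly_three_prism, shapePoly_four_prism, Multiset.insert_eq_cons,
      ← Multiset.cons_zero, esymm_cons_succ, esymm_nil_succ, esymm_zero_eq_one]
    ring

end PrismMoves

/-- The chain lengths of a prism with rungs of positive length and triangles not all of whose chains
are empty: `aᵢ` and `bᵢ` are the lengths of the triangle chains that avoid the rung `rᵢ`. -/
structure IsLadder (a₁ a₂ a₃ b₁ b₂ b₃ r₁ r₂ r₃ : ℤ) : Prop where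
  a₁_nonneg : 0 ≤ a₁
  a₂_nonneg : 0 ≤ a₂
  a₃_nonneg : 0 ≤ a₃
  b₁_nonneg : 0 ≤ b₁
  b₂_nonneg : 0 ≤ b₂
  b₃_nonneg : 0 ≤ b₃
  r₁_pos : 0 < r₁
  r₂_pos : 0 < r₂
  r₃_pos : 0 < r₃
  sum_pos : 0 < a₁ + a₂ + a₃ + b₁ + b₂ + b₃

section Arithmetic

theorem mul_le_add_mul_of_mul_le {x y c d e t : ℤ} (hx : 0 < x) (hy : 0 < y) (he : 0 ≤ e)
    (ht : 0 ≤ t) (hc : e ≤ 2 * c) (hd : t ≤ 2 * d) (h : x * y ≤ e * t) :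
    x * y ≤ x * c + y * d := by
  have hxy : 0 < x * y := mul_pos hx hy
  have hsum : 0 ≤ x * c + y * d :=
    add_nonneg (mul_nonneg hx.le (by linarith)) (mul_nonneg hy.le (by linarith))
  have hprod : x * y ≤ 2 * c * (2 * d) := h.trans (mul_le_mul hc hd ht (by linarith))
  refine le_of_sq_le_sq ?_ hsum
  nlinarith [mul_le_mul_of_nonneg_left hprod hxy.le, sq_nonneg (x * c - y * d)]

theorem mul_le_add_mul_add_mul_of_le {x y z c d f e t : ℤ} (hx : 0 < x) (hy : 0 < y) (hz : 0 ≤ z)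
    (he : 0 < e) (het : e ≤ t) (hc : e ≤ 2 * c) (hd : t ≤ 2 * d) (hf : e ≤ 2 * f)
    (h : x * y * (2 * t) ≤ x * (e * e) + y * (t * t) + e * t * z) :
    x * y ≤ x * c + y * d + z * f := by
  have hxc : x * (e * e) ≤ x * (2 * c * t) :=
    mul_le_mul_of_nonneg_left (mul_le_mul hc het he.le (by linarith)) hx.le
  have hyd : y * (t * t) ≤ y * (2 * d * t) :=
    mul_le_mul_of_nonneg_left (mul_le_mul_of_nonneg_right hd (by linarith)) hy.le
  have hzf : z * (e * t) ≤ z * (2 * f * t) :=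
    mul_le_mul_of_nonneg_left (mul_le_mul_of_nonneg_right hf (by linarith)) hz
  refine le_of_mul_le_mul_right ?_ (by linarith : 0 < 2 * t)
  linarith

/-- Here `Aᵢ` and `eᵢ` stand for `aᵢ + bᵢ` and `aᵢ - bᵢ`: the conclusion is the gain of a shift
along the third chains when `b₃ - a₃ = e₁ + e₂`. -/
theorem shift_gain_nonneg {A₁ A₂ e₁ e₂ r₁ r₂ r₃ : ℤ} (hA₁ : e₁ ≤ A₁) (hA₂ : e₂ ≤ A₂)
    (he₂ : 0 ≤ e₂) (hr₁ : 0 < r₁) (hr₂ : 0 < r₂) (hr₃ : 0 < r₃) (h₁ : r₂ < e₁)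
    (h : r₁ * r₃ ≤ e₁ * (e₁ + e₂) ∨ r₁ * r₃ * (2 * (e₁ + e₂)) ≤
      r₁ * (e₁ * e₁) + r₃ * ((e₁ + e₂) * (e₁ + e₂)) + e₁ * (e₁ + e₂) * A₂) :
    0 ≤ (e₁ + e₂ - 1) * ((A₂ + r₁) * (A₁ + r₂) + r₃ * (A₁ + A₂ + r₁ + r₂)) -
      r₁ * e₂ * A₁ - r₂ * e₁ * A₂ - (r₁ * r₂ + r₃ * (r₁ + r₂)) * (e₁ + e₂) := by
  have hc : e₁ ≤ 2 * (e₁ * (e₁ - 1) - r₂) := by nlinarith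
  have hd : e₁ + e₂ ≤ 2 * ((e₁ + e₂ - 1) * (e₁ + e₂) - r₂) := by nlinarith
  have hf : e₁ ≤ 2 * ((e₁ + e₂ - 1) * e₁ - r₂) := by nlinarith
  have hA₂f : 0 ≤ A₂ * ((e₁ + e₂ - 1) * e₁ - r₂) := mul_nonneg (by linarith) (by linarith)
  have key : r₁ * r₃ ≤ r₁ * (e₁ * (e₁ - 1) - r₂) + r₃ * ((e₁ + e₂ - 1) * (e₁ + e₂) - r₂) +
      A₂ * ((e₁ + e₂ - 1) * e₁ - r₂) := by
    rcases h with h | h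
    · linarith [mul_le_add_mul_of_mul_le hr₁ hr₃ (by linarith) (by linarith) hc hd h]
    · exact mul_le_add_mul_add_mul_of_le hr₁ hr₃ (by linarith) (by linarith) (by linarith)
        hc hd hf h
  have hA₁ : 0 ≤ (A₁ - e₁) * ((e₁ + e₂ - 1) * A₂ + r₁ * (e₁ - 1) + r₃ * (e₁ + e₂ - 1)) :=
    mul_nonneg (by linarith) (add_nonneg (add_nonneg (mul_nonneg (by linarith) (by linarith))
      (mul_nonneg hr₁.le (by linarith))) (mul_nonneg hr₃.le (by linarith)))
  have hA₂ : 0 ≤ r₃ * ((e₁ + e₂ - 1) * (A₂ - e₂)) :=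
    mul_nonneg hr₃.le (mul_nonneg (by linarith) (by linarith))
  have hA₂e₂ : 0 ≤ r₂ * (A₂ * e₂) := mul_nonneg hr₂.le (mul_nonneg (by linarith) he₂)
  nlinarith

end Arithmetic

namespace IsLadder

variable {a₁ a₂ a₃ b₁ b₂ b₃ r₁ r₂ r₃ : ℤ} (h : IsLadder a₁ a₂ a₃ b₁ b₂ b₃ r₁ r₂ r₃)
include h

theorem cycle : IsLadder a₂ a₃ a₁ b₂ b₃ b₁ r₂ r₃ r₁ := by
  cases h; constructor <;> omega

theorem swap : IsLadder a₂ a₁ a₃ b₂ b₁ b₃ r₂ r₁ r₃ := by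
  cases h; constructor <;> omega

theorem flip : IsLadder b₁ b₂ b₃ a₁ a₂ a₃ r₁ r₂ r₃ := by
  cases h; constructor <;> omega

theorem dominated_of_lt (h₁ : r₂ < a₁ - b₁) (h₂ : 0 ≤ a₂ - b₂) (h₃ : 0 < b₃ - a₃)
    (hlt : b₃ - a₃ < a₁ - b₁ + (a₂ - b₂))
    (s₁ : Dominated prismShape ![a₁ - 1, a₂, a₃, b₁ + 1, b₂, b₃, r₁, r₂, r₃]) :
    Dominated prismShape ![a₁, a₂, a₃, b₁, b₂, b₃, r₁, r₂, r₃] := by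
  obtain ⟨-, ha₂, ha₃, -, hb₂, hb₃, hr₁, hr₂, hr₃, -⟩ := h
  have hr₂' : r₂ ≤ a₁ - b₁ - 1 := by linarith
  have hgap : b₃ - a₃ - (a₂ - b₂) ≤ a₁ - b₁ - 1 := by linarith
  have hpos : 0 ≤ a₁ - b₁ - 1 := by linarith
  have hmul : r₂ * (b₃ - a₃) ≤ (a₁ - b₁ - 1) * (b₃ + a₃) :=
    mul_le_mul hr₂' (by linarith) h₃.le hpos
  refine Dominated.prism_flip (Dominated.prism_cycle (Dominated.prism_shift
    s₁.prism_cycle.prism_cycle.prism_flip hpos ?_ ?_))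
  · have := mul_nonneg hr₃.le h₂
    have : 0 ≤ (a₁ - b₁ - 1) * (b₂ + a₂ + r₂ + r₃ + r₁) := mul_nonneg hpos (by linarith)
    nlinarith
  · have := mul_le_mul_of_nonneg_right hmul (by linarith : 0 ≤ b₂ + a₂)
    have := mul_le_mul_of_nonneg_left hgap (mul_nonneg hr₂.le hr₃.le)
    have := mul_le_mul_of_nonneg_left hgap (mul_nonneg hr₁.le (by linarith : 0 ≤ r₂ + r₃))
    have := mul_nonneg (mul_nonneg hr₃.le h₂) (by linarith : 0 ≤ b₃ + a₃)
    have : 0 ≤ (a₁ - b₁ - 1) * ((b₃ + a₃) * r₃ + r₂ * (b₂ + a₂) + r₁ * (b₂ + a₂ + b₃ + a₃)) :=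
      mul_nonneg hpos (by positivity)
    nlinarith

theorem dominated_of_gt (h₁ : 0 < a₁ - b₁) (h₂ : 0 ≤ a₂ - b₂)
    (hgt : a₁ - b₁ + (a₂ - b₂) < b₃ - a₃)
    (s₃ : Dominated prismShape ![a₁, a₂, a₃ + 1, b₁, b₂, b₃ - 1, r₁, r₂, r₃]) :
    Dominated prismShape ![a₁, a₂, a₃, b₁, b₂, b₃, r₁, r₂, r₃] := by
  obtain ⟨ha₁, ha₂, -, hb₁, hb₂, -, hr₁, hr₂, hr₃, -⟩ := h
  have hsum : a₁ - b₁ + (a₂ - b₂) ≤ b₃ - a₃ - 1 := by linarith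
  have hle₁ : a₁ - b₁ ≤ b₃ - a₃ - 1 := by linarith
  have hle₂ : a₂ - b₂ ≤ b₃ - a₃ - 1 := by linarith
  have hpos : 0 ≤ b₃ - a₃ - 1 := by linarith
  refine s₃.prism_shift hpos ?_ ?_
  · have := mul_le_mul_of_nonneg_left hle₁ hr₂.le
    have := mul_le_mul_of_nonneg_left hle₂ hr₁.le
    have : 0 ≤ (b₃ - a₃ - 1) * (a₁ + b₁ + a₂ + b₂ + r₃) := mul_nonneg hpos (by linarith)
    nlinarith
  · have := mul_le_mul_of_nonneg_left hle₁ (mul_nonneg hr₂.le (by linarith : 0 ≤ a₂ + b₂))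
    have := mul_le_mul_of_nonneg_left hle₂ (mul_nonneg hr₁.le (by linarith : 0 ≤ a₁ + b₁))
    have := mul_le_mul_of_nonneg_left hsum (mul_nonneg hr₁.le hr₂.le)
    have := mul_le_mul_of_nonneg_left hsum (mul_nonneg hr₃.le (by linarith : 0 ≤ r₁ + r₂))
    have : 0 ≤ (b₃ - a₃ - 1) * ((a₂ + b₂) * (a₁ + b₁) + r₃ * (a₁ + b₁ + a₂ + b₂)) :=
      mul_nonneg hpos (by positivity)
    nlinarith

theorem dominated_of_eq (h₁ : r₂ < a₁ - b₁) (h₂ : 0 ≤ a₂ - b₂)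
    (heq : b₃ - a₃ = a₁ - b₁ + (a₂ - b₂))
    (s₃ : Dominated prismShape ![a₁, a₂, a₃ + 1, b₁, b₂, b₃ - 1, r₁, r₂, r₃]) :
    Dominated prismShape ![a₁, a₂, a₃, b₁, b₂, b₃, r₁, r₂, r₃] := by
  obtain ⟨ha₁, ha₂, ha₃, hb₁, hb₂, hb₃, hr₁, hr₂, hr₃, -⟩ := h
  have heq' : a₃ - b₃ = -(a₁ - b₁ + (a₂ - b₂)) := by linarith
  have dominated_of_cond := fun hc => s₃.prism_shift (by linarith) ?_ (by
    rw [heq]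
    exact shift_gain_nonneg (by linarith : a₁ - b₁ ≤ a₁ + b₁) (by linarith : a₂ - b₂ ≤ a₂ + b₂)
      h₂ hr₁ hr₂ hr₃ h₁ hc |>.trans_eq (by ring))
  · by_cases h₃ : 0 < r₃ * r₁ + (a₃ - b₃) * (a₁ - b₁)
    · by_cases h₄ : 0 < (a₃ - b₃) * (a₁ - b₁) * (r₃ + r₁ + a₂ + b₂) +
          r₃ * r₁ * (a₃ + b₃ + a₁ + b₁ + a₂ + b₂) + r₃ * (a₃ - b₃) * (a₂ - b₂) +
          r₁ * (a₁ - b₁) * (a₂ - b₂)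
      · exact (dominated_prism_of_twist ha₃ ha₁ ha₂ hb₃ hb₁ hb₂ hr₃.le hr₁.le hr₂ h₃
          h₄).prism_cycle.prism_cycle
      · refine dominated_of_cond (Or.inr ?_)
        have : 2 * (a₁ - b₁ + (a₂ - b₂)) ≤ a₃ + b₃ + a₁ + b₁ + a₂ + b₂ := by linarith
        have := mul_le_mul_of_nonneg_left this (mul_nonneg hr₃.le hr₁.le)
        rw [heq'] at h₄
        nlinarith
    · refine dominated_of_cond (Or.inl ?_)
      rw [heq'] at h₃
      nlinarith
  · rw [heq]
    have : r₂ * (a₁ - b₁) ≤ (a₁ - b₁ + (a₂ - b₂) - 1) * (a₁ + b₁) :=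
      mul_le_mul (by linarith) (by linarith) (by linarith) (by linarith)
    have : (a₂ - b₂) * r₁ ≤ (a₁ - b₁ + (a₂ - b₂) - 1) * r₁ :=
      mul_le_mul_of_nonneg_right (by linarith) hr₁.le
    have : 0 ≤ (a₁ - b₁ + (a₂ - b₂) - 1) * (a₂ + b₂ + r₂ + r₃) :=
      mul_nonneg (by linarith) (by linarith)
    nlinarith

theorem dominated_of_rung_lt (h₁ : r₂ < a₁ - b₁) (h₂ : 0 ≤ a₂ - b₂) (h₃ : 0 < b₃ - a₃)
    (s₁ : 2 ≤ a₁ - b₁ →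
      Dominated prismShape ![a₁ - 1, a₂, a₃, b₁ + 1, b₂, b₃, r₁, r₂, r₃])
    (s₃ : 2 ≤ b₃ - a₃ →
      Dominated prismShape ![a₁, a₂, a₃ + 1, b₁, b₂, b₃ - 1, r₁, r₂, r₃]) :
    Dominated prismShape ![a₁, a₂, a₃, b₁, b₂, b₃, r₁, r₂, r₃] := by
  have hr₂ := h.r₂_pos
  rcases lt_trichotomy (b₃ - a₃) (a₁ - b₁ + (a₂ - b₂)) with hlt | heq | hgt
  · exact h.dominated_of_lt h₁ h₂ h₃ hlt (s₁ (by linarith))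
  · exact h.dominated_of_eq h₁ h₂ heq (s₃ (by linarith))
  · exact h.dominated_of_gt (by linarith) h₂ hgt (s₃ (by linarith))

theorem rung_lt_or_rung_lt (h₁ : 0 ≤ a₁ - b₁) (h₂ : 0 ≤ a₂ - b₂)
    (h₄ : (a₁ - b₁) * (a₂ - b₂) * (r₁ + r₂ + a₃ + b₃) +
      r₁ * r₂ * (a₁ + b₁ + a₂ + b₂ + a₃ + b₃) +
      r₁ * (a₁ - b₁) * (a₃ - b₃) + r₂ * (a₂ - b₂) * (a₃ - b₃) ≤ 0) :
    0 < b₃ - a₃ ∧ (r₂ < a₁ - b₁ ∨ r₁ < a₂ - b₂) := by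
  obtain ⟨ha₁, ha₂, ha₃, hb₁, hb₂, hb₃, hr₁, hr₂, hr₃, hsum⟩ := h
  have hδ := mul_nonneg h₁ h₂
  have hr := mul_pos hr₁ hr₂
  have h₃ : 0 < b₃ - a₃ := by
    by_contra! h₃
    have := mul_nonneg hδ (by linarith : 0 ≤ r₁ + r₂ + a₃ + b₃)
    have := mul_pos hr (by linarith : 0 < a₁ + b₁ + a₂ + b₂ + a₃ + b₃)
    have := mul_nonneg (mul_nonneg hr₁.le h₁) (by linarith : 0 ≤ a₃ - b₃)
    have := mul_nonneg (mul_nonneg hr₂.le h₂) (by linarith : 0 ≤ a₃ - b₃)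
    linarith
  refine ⟨h₃, ?_⟩
  by_contra! hle
  have hprod : 0 ≤ (b₃ - a₃) * ((r₂ - (a₁ - b₁)) * (r₁ - (a₂ - b₂))) :=
    mul_nonneg h₃.le (mul_nonneg (by linarith) (by linarith))
  have hδ' : 0 ≤ (a₁ - b₁) * (a₂ - b₂) * (r₁ + r₂ + 2 * a₃) := mul_nonneg hδ (by linarith)
  have hempty : a₁ + b₁ + a₂ + b₂ + 2 * a₃ ≤ 0 :=
    nonpos_of_mul_nonpos_right (by linarith : r₁ * r₂ * (a₁ + b₁ + a₂ + b₂ + 2 * a₃) ≤ 0) hr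
  rw [(by linarith : a₁ = 0), (by linarith : a₂ = 0), (by linarith : b₁ = 0),
    (by linarith : b₂ = 0)] at h₄
  linarith [mul_pos hr (by linarith : 0 < a₃ + b₃)]

theorem dominated_of_nonneg (h₁ : 0 ≤ a₁ - b₁) (h₂ : 0 ≤ a₂ - b₂)
    (s₁ : 2 ≤ a₁ - b₁ →
      Dominated prismShape ![a₁ - 1, a₂, a₃, b₁ + 1, b₂, b₃, r₁, r₂, r₃])
    (s₂ : 2 ≤ a₂ - b₂ →
      Dominated prismShape ![a₁, a₂ - 1, a₃, b₁, b₂ + 1, b₃, r₁, r₂, r₃])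
    (s₃ : 2 ≤ b₃ - a₃ →
      Dominated prismShape ![a₁, a₂, a₃ + 1, b₁, b₂, b₃ - 1, r₁, r₂, r₃]) :
    Dominated prismShape ![a₁, a₂, a₃, b₁, b₂, b₃, r₁, r₂, r₃] := by
  by_cases h₄ : 0 < (a₁ - b₁) * (a₂ - b₂) * (r₁ + r₂ + a₃ + b₃) +
      r₁ * r₂ * (a₁ + b₁ + a₂ + b₂ + a₃ + b₃) +
      r₁ * (a₁ - b₁) * (a₃ - b₃) + r₂ * (a₂ - b₂) * (a₃ - b₃)
  · obtain ⟨ha₁, ha₂, ha₃, hb₁, hb₂, hb₃, hr₁, hr₂, hr₃, -⟩ := h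
    exact dominated_prism_of_twist ha₁ ha₂ ha₃ hb₁ hb₂ hb₃ hr₁.le hr₂.le hr₃
      (add_pos_of_pos_of_nonneg (mul_pos hr₁ hr₂) (mul_nonneg h₁ h₂)) h₄
  · obtain ⟨h₃, hlt | hlt⟩ := h.rung_lt_or_rung_lt h₁ h₂ (not_lt.1 h₄)
    · exact h.dominated_of_rung_lt hlt h₂ h₃ s₁ s₃
    · exact (h.swap.dominated_of_rung_lt hlt h₁ h₃ (fun h => (s₂ h).prism_swap)
        fun h => (s₃ h).prism_swap).prism_swap

omit h in
theorem dominated_of_natAbs_le {N : ℕ} : ∀ {a₁ a₂ a₃ b₁ b₂ b₃ r₁ r₂ r₃ : ℤ},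
    IsLadder a₁ a₂ a₃ b₁ b₂ b₃ r₁ r₂ r₃ →
    (a₁ - b₁).natAbs + (a₂ - b₂).natAbs + (a₃ - b₃).natAbs ≤ N →
    Dominated prismShape ![a₁, a₂, a₃, b₁, b₂, b₃, r₁, r₂, r₃] := by
  induction N using Nat.strong_induction_on with | _ N ih =>
  have adjacent : ∀ {a₁ a₂ a₃ b₁ b₂ b₃ r₁ r₂ r₃ : ℤ}, IsLadder a₁ a₂ a₃ b₁ b₂ b₃ r₁ r₂ r₃ →
      (a₁ - b₁).natAbs + (a₂ - b₂).natAbs + (a₃ - b₃).natAbs ≤ N → 0 ≤ a₁ - b₁ → 0 ≤ a₂ - b₂ →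
      Dominated prismShape ![a₁, a₂, a₃, b₁, b₂, b₃, r₁, r₂, r₃] := fun h hN h₁ h₂ =>
    h.dominated_of_nonneg h₁ h₂
      (fun hδ => ih (N - 1) (by omega) (by cases h; constructor <;> omega) (by omega))
      (fun hδ => ih (N - 1) (by omega) (by cases h; constructor <;> omega) (by omega))
      fun hδ => ih (N - 1) (by omega) (by cases h; constructor <;> omega) (by omega)
  intro a₁ a₂ a₃ b₁ b₂ b₃ r₁ r₂ r₃ h hN
  obtain ⟨h₁, h₂⟩ | ⟨h₂, h₃⟩ | ⟨h₃, h₁⟩ | ⟨h₁, h₂⟩ | ⟨h₂, h₃⟩ | ⟨h₃, h₁⟩ :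
      (0 ≤ a₁ - b₁ ∧ 0 ≤ a₂ - b₂) ∨ (0 ≤ a₂ - b₂ ∧ 0 ≤ a₃ - b₃) ∨ (0 ≤ a₃ - b₃ ∧ 0 ≤ a₁ - b₁) ∨
      (0 ≤ b₁ - a₁ ∧ 0 ≤ b₂ - a₂) ∨ (0 ≤ b₂ - a₂ ∧ 0 ≤ b₃ - a₃) ∨ (0 ≤ b₃ - a₃ ∧ 0 ≤ b₁ - a₁) := by
    omega
  · exact adjacent h hN h₁ h₂
  · exact (adjacent h.cycle (by omega) h₂ h₃).prism_cycle
  · exact (adjacent h.cycle.cycle (by omega) h₃ h₁).prism_cycle.prism_cycle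
  · exact (adjacent h.flip (by omega) h₁ h₂).prism_flip
  · exact (adjacent h.flip.cycle (by omega) h₂ h₃).prism_cycle.prism_flip
  · exact (adjacent h.flip.cycle.cycle (by omega) h₃ h₁).prism_cycle.prism_cycle.prism_flip

end IsLadder

/-! ### Domination of degenerate shapes -/

section Balancing

theorem shapePoly_k33_swapColumns (i : ℕ) (x₀ x₁ x₂ x₃ x₄ x₅ x₆ x₇ x₈ : ℤ) :
    shapePoly k33Shape i ![x₁, x₀, x₂, x₄, x₃, x₅, x₇, x₆, x₈] =
      shapePoly k33Shape i ![x₀, x₁, x₂, x₃, x₄, x₅, x₆, x₇, x₈] := by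
  refine (congrArg _ (funext ?_)).trans (shapePoly_comp (π := ![1, 0, 2, 4, 3, 5, 7, 6, 8])
    (θ := ![0, 1, 2, 4, 3, 5]) (by decide) (by decide) (by decide) i _)
  simp [Fin.forall_fin_succ]

theorem shapePoly_k33_swapRows (i : ℕ) (x₀ x₁ x₂ x₃ x₄ x₅ x₆ x₇ x₈ : ℤ) :
    shapePoly k33Shape i ![x₆, x₇, x₈, x₃, x₄, x₅, x₀, x₁, x₂] =
      shapePoly k33Shape i ![x₀, x₁, x₂, x₃, x₄, x₅, x₆, x₇, x₈] := by
  refine (congrArg _ (funext ?_)).trans (shapePoly_comp (π := ![6, 7, 8, 3, 4, 5, 0, 1, 2])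
    (θ := ![2, 1, 0, 3, 4, 5]) (by decide) (by decide) (by decide) i _)
  simp [Fin.forall_fin_succ]

variable {x₀ x₁ x₂ x₃ x₄ x₅ x₆ x₇ x₈ : ℤ}

theorem Dominated.k33_swapColumns
    (h : Dominated k33Shape ![x₁, x₀, x₂, x₄, x₃, x₅, x₇, x₆, x₈]) :
    Dominated k33Shape ![x₀, x₁, x₂, x₃, x₄, x₅, x₆, x₇, x₈] :=
  h.of_le (by simp only [sum_vec_nine]; ring) (shapePoly_k33_swapColumns ..).ge
    (shapePoly_k33_swapColumns ..).ge (shapePoly_k33_swapColumns ..).ge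

theorem Dominated.k33_swapRows
    (h : Dominated k33Shape ![x₆, x₇, x₈, x₃, x₄, x₅, x₀, x₁, x₂]) :
    Dominated k33Shape ![x₀, x₁, x₂, x₃, x₄, x₅, x₆, x₇, x₈] :=
  h.of_le (by simp only [sum_vec_nine]; ring) (shapePoly_k33_swapRows ..).ge
    (shapePoly_k33_swapRows ..).ge (shapePoly_k33_swapRows ..).ge

theorem shapePoly_four_k33_of_zero :
    shapePoly k33Shape 4 ![x₀, x₁, 0, x₃, x₄, x₅, x₆, x₇, 0] =
      (x₃ * x₄ + x₃ * x₅ + x₄ * x₅) * (x₀ + x₆) * (x₁ + x₇) + x₃ * x₇ * x₁ * (x₀ + x₆) +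
      x₄ * x₆ * x₀ * (x₁ + x₇) + x₅ * x₆ * (x₀ * x₁ + x₀ * x₇ + x₁ * x₇) + x₅ * x₇ * x₀ * x₁ +
      x₆ * x₇ * x₀ * x₁ := by
  simp only [shapePoly_four_k33, Multiset.insert_eq_cons, ← Multiset.cons_zero, esymm_cons_succ,
    esymm_nil_succ, esymm_zero_eq_one]
  ring

theorem sum_pairs_pos_of_shapePoly_four_pos (h₃ : 0 ≤ x₃) (h₄ : 0 ≤ x₄) (h₅ : 0 ≤ x₅)
    (h₆ : 0 ≤ x₆) (h₇ : 0 ≤ x₇)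
    (h : 0 < shapePoly k33Shape 4 ![x₀, x₁, 0, x₃, x₄, x₅, x₆, x₇, 0]) :
    0 < x₃ * x₄ + x₃ * x₅ + x₃ * x₇ + x₄ * x₅ + x₄ * x₆ + x₅ * x₆ + x₅ * x₇ + x₆ * x₇ := by
  by_contra! hle
  have h₃₄ := mul_nonneg h₃ h₄
  have h₃₅ := mul_nonneg h₃ h₅
  have h₃₇ := mul_nonneg h₃ h₇
  have h₄₅ := mul_nonneg h₄ h₅
  have h₄₆ := mul_nonneg h₄ h₆
  have h₅₆ := mul_nonneg h₅ h₆
  have h₅₇ := mul_nonneg h₅ h₇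
  have h₆₇ := mul_nonneg h₆ h₇
  rw [shapePoly_four_k33_of_zero, (by linarith : x₃ * x₄ = 0), (by linarith : x₃ * x₅ = 0),
    (by linarith : x₃ * x₇ = 0), (by linarith : x₄ * x₅ = 0), (by linarith : x₄ * x₆ = 0),
    (by linarith : x₅ * x₆ = 0), (by linarith : x₅ * x₇ = 0), (by linarith : x₆ * x₇ = 0)] at h
  linarith

/-- The gain in the last coefficient when one unit of `x₀` is moved to an empty edge of its row. -/
theorem corner_gain_pos (hx₀ : 2 ≤ x₀) (h₃ : 0 ≤ x₃) (h₄ : 0 ≤ x₄) (h₅ : 0 ≤ x₅) (h₆ : 0 ≤ x₆)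
    (h₇ : 0 ≤ x₇) (h₆₀ : x₆ ≤ x₀) (h₇₀ : x₇ ≤ x₀)
    (h : 0 < x₃ * x₄ + x₃ * x₅ + x₃ * x₇ + x₄ * x₅ + x₄ * x₆ + x₅ * x₆ + x₅ * x₇ + x₆ * x₇) :
    0 < x₃ * x₆ * (x₄ + x₅ + x₇) + x₄ * x₅ * x₆ - x₅ * x₆ * x₇ + (x₀ - 1) *
      (x₃ * x₄ + x₃ * x₅ + x₃ * x₇ + x₄ * x₅ + x₄ * x₆ + x₅ * x₆ + x₅ * x₇ + x₆ * x₇) := by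
  have hM : 0 ≤ x₀ - 1 := by linarith
  have hmono : 0 ≤ x₃ * x₆ * (x₄ + x₅ + x₇) + x₄ * x₅ * x₆ := by positivity
  have hbound : x₆ * x₇ ≤ (x₀ - 1) * (x₆ + x₇) := by
    have := mul_le_mul_of_nonneg_right h₆₀ h₇
    have := mul_le_mul_of_nonneg_right h₇₀ h₆
    have := mul_nonneg (by linarith : 0 ≤ x₀ - 2) (by linarith : 0 ≤ x₆ + x₇)
    linarith
  have hx₅ := mul_nonneg h₅ (sub_nonneg.2 hbound)
  rcases (mul_nonneg h₆ h₇).eq_or_lt with h₆₇ | h₆₇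
  · have := mul_pos (by linarith : 0 < x₀ - 1) h
    rw [mul_assoc x₅, ← h₆₇] at *
    linarith
  · have := mul_pos (by linarith : 0 < x₀ - 1) h₆₇
    have : 0 ≤ (x₀ - 1) * (x₃ * x₄ + x₃ * x₅ + x₃ * x₇ + x₄ * x₅ + x₄ * x₆) := by positivity
    linarith

theorem dominated_k33_of_corner (hx₀ : 2 ≤ x₀) (h₁ : 0 ≤ x₁) (h₃ : 0 ≤ x₃) (h₄ : 0 ≤ x₄)
    (h₅ : 0 ≤ x₅) (h₆ : 0 ≤ x₆) (h₇ : 0 ≤ x₇) (h₆₀ : x₆ ≤ x₀) (h₇₀ : x₇ ≤ x₀)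
    (h₃₄ : 0 < x₃ + x₄) (h : 0 < shapePoly k33Shape 4 ![x₀, x₁, 0, x₃, x₄, x₅, x₆, x₇, 0]) :
    Dominated k33Shape ![x₀, x₁, 0, x₃, x₄, x₅, x₆, x₇, 0] := by
  have gain₂ : 0 ≤ x₀ - 1 := by linarith
  have gain₃ : 0 < x₃ * x₆ + (x₀ - 1) * (x₃ + x₄ + x₅ + x₆ + x₇) :=
    add_pos_of_nonneg_of_pos (mul_nonneg h₃ h₆) (mul_pos (by linarith) (by linarith))
  have gain₄ := corner_gain_pos hx₀ h₃ h₄ h₅ h₆ h₇ h₆₀ h₇₀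
    (sum_pairs_pos_of_shapePoly_four_pos h₃ h₄ h₅ h₆ h₇ h)
  refine ⟨![x₀ - 1, x₁, 1, x₃, x₄, x₅, x₆, x₇, 0], ?_, ?_, sub_nonneg.1 (gain₂.trans_eq ?_),
    sub_pos.1 (gain₃.trans_eq ?_), sub_pos.1 (gain₄.trans_eq ?_)⟩
  · simp only [Pi.le_def, Fin.forall_fin_succ]
    simp [*, (by linarith : 1 ≤ x₀)]
  all_goals
    simp only [sum_vec_nine, shapePoly_two_k33, shapePoly_three_k33, shapePoly_four_k33,
      Multiset.insert_eq_cons, ← Multiset.cons_zero, esymm_cons_succ, esymm_nil_succ,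
      esymm_zero_eq_one]
    ring

theorem center_gain_three_pos (hx₄ : 2 ≤ x₄) (h₀ : 0 ≤ x₀) (h₁ : 0 ≤ x₁) (h₃ : 0 ≤ x₃)
    (h₅ : 0 ≤ x₅) (h₆ : 0 ≤ x₆) (h₇ : 0 ≤ x₇) (h₁' : x₁ ≤ 1)
    (h : 0 < shapePoly k33Shape 4 ![x₀, x₁, 0, x₃, x₄, x₅, x₆, x₇, 0]) :
    0 < x₃ * x₅ + x₁ * x₇ - x₀ * x₁ + (x₄ - 1) * (x₀ + x₁ + x₃ + x₅ + x₆ + x₇) := by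
  have hmono : 0 ≤ x₃ * x₅ + x₁ * x₇ := by positivity
  have hx₀₁ := mul_le_of_le_one_right h₀ h₁'
  have hsum : 0 < x₀ + x₁ + x₃ + x₅ + x₆ + x₇ := by
    by_contra! hle
    rw [shapePoly_four_k33_of_zero, (by linarith : x₀ = 0), (by linarith : x₁ = 0),
      (by linarith : x₆ = 0), (by linarith : x₇ = 0)] at h
    linarith
  have hgain := mul_nonneg (by linarith : 0 ≤ x₄ - 2) hsum.le
  rcases h₁.eq_or_lt with rfl | h₁
  · linarith
  · linarith

theorem cross_pairs_pos_of_shapePoly_four_pos (h₀ : 0 ≤ x₀) (h₁ : 0 ≤ x₁) (h₃ : 0 ≤ x₃)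
    (h₅ : 0 ≤ x₅) (h₆ : 0 ≤ x₆) (h₇ : 0 ≤ x₇)
    (h : 0 < shapePoly k33Shape 4 ![x₀, x₁, 0, x₃, x₄, x₅, x₆, x₇, 0]) :
    0 < (x₀ + x₁) * (x₃ + x₅ + x₆) + (x₃ + x₅) * (x₆ + x₇) + x₆ * x₇ := by
  by_contra! hle
  have h₀₃ := mul_nonneg h₀ h₃
  have h₀₅ := mul_nonneg h₀ h₅
  have h₀₆ := mul_nonneg h₀ h₆
  have h₁₃ := mul_nonneg h₁ h₃
  have h₁₅ := mul_nonneg h₁ h₅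
  have h₁₆ := mul_nonneg h₁ h₆
  have h₃₆ := mul_nonneg h₃ h₆
  have h₅₆ := mul_nonneg h₅ h₆
  have hrest : 0 ≤ x₃ * x₇ + x₅ * x₇ + x₆ * x₇ := by positivity
  refine h.ne' ?_
  rw [shapePoly_four_k33_of_zero]
  linear_combination
    (x₁ * x₅ + x₁ * x₇ + x₁ * x₄ + x₅ * x₇ + x₇ * x₄) * (by linarith : x₀ * x₃ = 0) +
    (x₁ * x₆ + x₁ * x₇ + x₁ * x₄ + x₆ * x₇ + x₇ * x₄) * (by linarith : x₀ * x₅ = 0) +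
    (x₁ * x₇ + x₁ * x₄ + x₇ * x₄) * (by linarith : x₀ * x₆ = 0) +
    (x₅ * x₆ + x₆ * x₇ + x₆ * x₄) * (by linarith : x₁ * x₃ = 0) +
    (x₆ * x₇ + x₆ * x₄) * (by linarith : x₁ * x₅ = 0) +
    (x₅ * x₇ + x₇ * x₄) * (by linarith : x₃ * x₆ = 0) +
    x₇ * x₄ * (by linarith : x₅ * x₆ = 0)

/-- The gain in the last coefficient when one unit of `x₄` is moved to the empty edge `2`. -/
theorem center_gain_four_pos (hx₄ : 2 ≤ x₄) (h₀ : 0 ≤ x₀) (h₁ : 0 ≤ x₁) (h₃ : 0 ≤ x₃)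
    (h₅ : 0 ≤ x₅) (h₆ : 0 ≤ x₆) (h₇ : 0 ≤ x₇) (h₀' : x₀ ≤ 1) (h₁' : x₁ ≤ 1) (h₆' : x₆ ≤ 1)
    (h₇' : x₇ ≤ 1) (h : 0 < shapePoly k33Shape 4 ![x₀, x₁, 0, x₃, x₄, x₅, x₆, x₇, 0]) :
    0 < x₃ * x₅ * (x₀ + x₁ + x₆ + x₇) + x₁ * x₇ * (x₀ + x₃ + x₅ + x₆) + x₀ * x₅ * x₆ -
      x₀ * x₁ * (x₃ + x₅ + x₆ + x₇) - x₁ * x₃ * x₆ - x₅ * x₆ * x₇ + (x₄ - 1) *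
      ((x₀ + x₁) * (x₃ + x₅ + x₆) + (x₃ + x₅) * (x₆ + x₇) + x₆ * x₇) := by
  have hpairs := cross_pairs_pos_of_shapePoly_four_pos h₀ h₁ h₃ h₅ h₆ h₇ h
  have hgain := mul_nonneg (by linarith : 0 ≤ x₄ - 2) hpairs.le
  have h₀₁ := mul_le_of_le_one_right h₀ h₁'
  have h₀₁' := mul_le_of_le_one_left h₁ h₀'
  have h₁₆ := mul_le_of_le_one_left h₆ h₁'
  have h₁₆' := mul_le_of_le_one_right h₁ h₆'
  have h₆₇ := mul_le_of_le_one_right h₆ h₇'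
  have h₆₇' := mul_le_of_le_one_left h₇ h₆'
  have h₁₇ := mul_nonneg h₁ h₇
  have h₀₆ := mul_nonneg h₀ h₆
  have coeff₃ : 0 ≤ x₃ * (2 * (x₀ + x₁ + x₆ + x₇) + 3 * (x₁ * x₇ - x₀ * x₁ - x₁ * x₆)) :=
    mul_nonneg h₃ (by linarith)
  have coeff₅ : 0 ≤ x₅ * (2 * (x₀ + x₁ + x₆ + x₇) +
      3 * (x₁ * x₇ + x₀ * x₆ - x₀ * x₁ - x₆ * x₇)) :=
    mul_nonneg h₅ (by linarith)
  have coeff₆ : 0 ≤ x₆ * (2 * (x₀ + x₁ + x₇) + 3 * (x₁ * x₇ - x₀ * x₁)) :=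
    mul_nonneg h₆ (by linarith)
  have : 0 ≤ x₃ * x₅ * (x₀ + x₁ + x₆ + x₇) := by positivity
  linarith

theorem dominated_k33_of_center (hx₄ : 2 ≤ x₄) (h₀ : 0 ≤ x₀) (h₁ : 0 ≤ x₁) (h₃ : 0 ≤ x₃)
    (h₅ : 0 ≤ x₅) (h₆ : 0 ≤ x₆) (h₇ : 0 ≤ x₇) (h₀' : x₀ ≤ 1) (h₁' : x₁ ≤ 1) (h₆' : x₆ ≤ 1)
    (h₇' : x₇ ≤ 1) (h : 0 < shapePoly k33Shape 4 ![x₀, x₁, 0, x₃, x₄, x₅, x₆, x₇, 0]) :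
    Dominated k33Shape ![x₀, x₁, 0, x₃, x₄, x₅, x₆, x₇, 0] := by
  have gain₂ : 0 ≤ x₄ - 1 := by linarith
  have gain₃ := center_gain_three_pos hx₄ h₀ h₁ h₃ h₅ h₆ h₇ h₁' h
  have gain₄ := center_gain_four_pos hx₄ h₀ h₁ h₃ h₅ h₆ h₇ h₀' h₁' h₆' h₇' h
  refine ⟨![x₀, x₁, 1, x₃, x₄ - 1, x₅, x₆, x₇, 0], ?_, ?_, sub_nonneg.1 (gain₂.trans_eq ?_),
    sub_pos.1 (gain₃.trans_eq ?_), sub_pos.1 (gain₄.trans_eq ?_)⟩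
  · simp only [Pi.le_def, Fin.forall_fin_succ]
    simp [*, (by linarith : 1 ≤ x₄)]
  all_goals
    simp only [sum_vec_nine, shapePoly_two_k33, shapePoly_three_k33, shapePoly_four_k33,
      Multiset.insert_eq_cons, ← Multiset.cons_zero, esymm_cons_succ, esymm_nil_succ,
      esymm_zero_eq_one]
    ring

theorem dominated_k33_of_empty_edges (hx₄ : 2 ≤ x₄) (h₀ : 0 ≤ x₀) (h₁ : 0 ≤ x₁) (h₃ : 0 ≤ x₃)
    (h₅ : 0 ≤ x₅) (h₆ : 0 ≤ x₆) (h₇ : 0 ≤ x₇)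
    (h : 0 < shapePoly k33Shape 4 ![x₀, x₁, 0, x₃, x₄, x₅, x₆, x₇, 0]) :
    Dominated k33Shape ![x₀, x₁, 0, x₃, x₄, x₅, x₆, x₇, 0] := by
  have columns := shapePoly_k33_swapColumns 4 x₀ x₁ 0 x₃ x₄ x₅ x₆ x₇ 0
  have rows := shapePoly_k33_swapRows 4 x₀ x₁ 0 x₃ x₄ x₅ x₆ x₇ 0
  have both := shapePoly_k33_swapRows 4 x₁ x₀ 0 x₄ x₃ x₅ x₇ x₆ 0
  obtain ⟨h₀', h₆', h₇'⟩ | ⟨h₁', h₆', h₇'⟩ | ⟨h₆', h₀', h₁'⟩ | ⟨h₇', h₀', h₁'⟩ |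
      ⟨h₀', h₁', h₆', h₇'⟩ : (2 ≤ x₀ ∧ x₆ ≤ x₀ ∧ x₇ ≤ x₀) ∨ (2 ≤ x₁ ∧ x₆ ≤ x₁ ∧ x₇ ≤ x₁) ∨
      (2 ≤ x₆ ∧ x₀ ≤ x₆ ∧ x₁ ≤ x₆) ∨ (2 ≤ x₇ ∧ x₀ ≤ x₇ ∧ x₁ ≤ x₇) ∨
      (x₀ ≤ 1 ∧ x₁ ≤ 1 ∧ x₆ ≤ 1 ∧ x₇ ≤ 1) := by
    omega
  · exact dominated_k33_of_corner h₀' h₁ h₃ (by linarith) h₅ h₆ h₇ h₆' h₇' (by linarith) h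
  · exact (dominated_k33_of_corner h₁' h₀ (by linarith) h₃ h₅ h₇ h₆ h₇' h₆' (by linarith)
      (columns ▸ h)).k33_swapColumns
  · exact (dominated_k33_of_corner h₆' h₇ h₃ (by linarith) h₅ h₀ h₁ h₀' h₁' (by linarith)
      (rows ▸ h)).k33_swapRows
  · exact (dominated_k33_of_corner h₇' h₆ (by linarith) h₃ h₅ h₁ h₀ h₁' h₀' (by linarith)
      ((both.trans columns) ▸ h)).k33_swapRows.k33_swapColumns
  · exact dominated_k33_of_center hx₄ h₀ h₁ h₃ h₅ h₆ h₇ h₀' h₁' h₆' h₇' h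

end Balancing

section Domination

variable {a₁ a₂ a₃ b₁ b₂ b₃ r₁ r₂ r₃ : ℤ}

theorem dominated_prism_of_pos (ha₁ : 0 ≤ a₁) (ha₂ : 0 ≤ a₂) (ha₃ : 0 ≤ a₃) (hb₁ : 0 ≤ b₁)
    (hb₂ : 0 ≤ b₂) (hb₃ : 0 ≤ b₃) (hr₁ : 0 < r₁) (hr₂ : 0 < r₂) (hr₃ : 0 < r₃)
    (h : 0 < shapePoly prismShape 4 ![a₁, a₂, a₃, b₁, b₂, b₃, r₁, r₂, r₃]) :
    Dominated prismShape ![a₁, a₂, a₃, b₁, b₂, b₃, r₁, r₂, r₃] := by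
  have hsum : 0 < a₁ + a₂ + a₃ + b₁ + b₂ + b₃ := by
    by_contra! hle
    rw [(by linarith : a₁ = 0), (by linarith : a₂ = 0), (by linarith : a₃ = 0),
      (by linarith : b₁ = 0), (by linarith : b₂ = 0), (by linarith : b₃ = 0)] at h
    refine h.ne' ?_
    simp only [shapePoly_four_prism, Multiset.insert_eq_cons, ← Multiset.cons_zero,
      esymm_cons_succ, esymm_nil_succ, esymm_zero_eq_one]
    ring
  exact IsLadder.dominated_of_natAbs_le ⟨ha₁, ha₂, ha₃, hb₁, hb₂, hb₃, hr₁, hr₂, hr₃, hsum⟩ le_rfl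

/-- With an empty rung the prism degenerates to the same graph as `K₃,₃` with an empty edge. -/
theorem dominated_prism_of_empty_rung (ha₂ : 0 ≤ a₂) (ha₃ : 0 ≤ a₃) (hb₁ : 0 ≤ b₁)
    (hb₂ : 0 ≤ b₂) (hb₃ : 0 ≤ b₃) (hr₁ : 2 ≤ r₁) (hr₂ : 0 ≤ r₂)
    (h : 0 < shapePoly prismShape 4 ![0, a₂, a₃, b₁, b₂, b₃, r₁, r₂, 0]) :
    Dominated prismShape ![0, a₂, a₃, b₁, b₂, b₃, r₁, r₂, 0] := by
  obtain ⟨hsum, h₂, h₃, h₄⟩ :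
      ∑ i, ![r₂, a₃, 0, b₃, r₁, b₂, b₁, a₂, 0] i = ∑ i, ![0, a₂, a₃, b₁, b₂, b₃, r₁, r₂, 0] i ∧
      shapePoly prismShape 2 ![0, a₂, a₃, b₁, b₂, b₃, r₁, r₂, 0] =
        shapePoly k33Shape 2 ![r₂, a₃, 0, b₃, r₁, b₂, b₁, a₂, 0] ∧
      shapePoly prismShape 3 ![0, a₂, a₃, b₁, b₂, b₃, r₁, r₂, 0] =
        shapePoly k33Shape 3 ![r₂, a₃, 0, b₃, r₁, b₂, b₁, a₂, 0] ∧
      shapePoly prismShape 4 ![0, a₂, a₃, b₁, b₂, b₃, r₁, r₂, 0] =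
        shapePoly k33Shape 4 ![r₂, a₃, 0, b₃, r₁, b₂, b₁, a₂, 0] := by
    refine ⟨?_, ?_, ?_, ?_⟩ <;>
    simp only [sum_vec_nine, shapePoly_two_prism, shapePoly_three_prism, shapePoly_four_prism,
      shapePoly_two_k33, shapePoly_three_k33, shapePoly_four_k33, Multiset.insert_eq_cons,
      ← Multiset.cons_zero, esymm_cons_succ, esymm_nil_succ, esymm_zero_eq_one] <;>
    ring
  exact (dominated_k33_of_empty_edges hr₁ hr₂ ha₃ hb₃ hb₂ hb₁ ha₂ (h₄ ▸ h)).of_le hsum h₂.le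
    h₃.le h₄.le

theorem dominated_prism_of_empty_side (ha₂ : 0 ≤ a₂) (ha₃ : 0 ≤ a₃) (hb₁ : 0 ≤ b₁)
    (hb₂ : 0 ≤ b₂) (hb₃ : 0 ≤ b₃) (hr₁ : 2 ≤ r₁) (hr₂ : 0 ≤ r₂) (hr₃ : 0 ≤ r₃)
    (h : 0 < shapePoly prismShape 4 ![0, a₂, a₃, b₁, b₂, b₃, r₁, r₂, r₃]) :
    Dominated prismShape ![0, a₂, a₃, b₁, b₂, b₃, r₁, r₂, r₃] := by
  rcases hr₃.eq_or_lt with rfl | hr₃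
  · exact dominated_prism_of_empty_rung ha₂ ha₃ hb₁ hb₂ hb₃ hr₁ hr₂ h
  rcases hr₂.eq_or_lt with rfl | hr₂
  · rw [← shapePoly_prism_cycle, ← shapePoly_prism_cycle, ← shapePoly_prism_swap] at h
    exact (dominated_prism_of_empty_rung ha₃ ha₂ hb₁ hb₃ hb₂ hr₁ hr₃.le
      h).prism_swap.prism_cycle.prism_cycle
  · exact dominated_prism_of_pos le_rfl ha₂ ha₃ hb₁ hb₂ hb₃ (by linarith) hr₂ hr₃ h

section Shapes

variable {x : Fin 9 → ℤ}

theorem eq_vec_nine (x : Fin 9 → ℤ) :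
    x = ![x 0, x 1, x 2, x 3, x 4, x 5, x 6, x 7, x 8] := by
  ext i
  fin_cases i <;> rfl

theorem sum_fin_nine (x : Fin 9 → ℤ) :
    ∑ i, x i = x 0 + x 1 + x 2 + x 3 + x 4 + x 5 + x 6 + x 7 + x 8 := by
  rw [eq_vec_nine x]
  exact sum_vec_nine ..

theorem dominated_prism (hx : 0 ≤ x) (h₆ : 0 < x 6) (h₇ : 0 < x 7) (h₈ : 0 < x 8)
    (h : 0 < shapePoly prismShape 4 x) : Dominated prismShape x := by
  rw [eq_vec_nine x] at h ⊢
  exact dominated_prism_of_pos (hx 0) (hx 1) (hx 2) (hx 3) (hx 4) (hx 5) h₆ h₇ h₈ h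

theorem dominated_k4Digon (hx : 0 ≤ x) (h₀ : 0 < x 0) (h₃ : 0 < x 3)
    (h : 0 < shapePoly k4DigonShape 4 x) : Dominated k4DigonShape x := by
  refine (dominated_prism_of_empty_side (hx 2) (hx 1) (hx 8) (hx 5) (hx 4) (by linarith) (hx 6)
    (hx 7) (h.trans_eq (shapePoly_k4Digon 4 x))).of_le ?_ (shapePoly_k4Digon 2 x).le
    (shapePoly_k4Digon 3 x).le (shapePoly_k4Digon 4 x).le
  rw [sum_vec_nine, sum_fin_nine]
  ring

theorem dominated_necklace3 (hx : 0 ≤ x) (h₂ : 0 < x 2) (h₅ : 0 < x 5)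
    (h : 0 < shapePoly necklace3Shape 4 x) : Dominated necklace3Shape x := by
  have h₈ : 0 ≤ x 8 := hx 8
  refine (dominated_prism_of_empty_side (hx 7) (hx 6) le_rfl (hx 1) (hx 0) (by linarith) (hx 3)
    (hx 4) (h.trans_eq (shapePoly_necklace3 4 x))).of_le ?_ (shapePoly_necklace3 2 x).le
    (shapePoly_necklace3 3 x).le (shapePoly_necklace3 4 x).le
  rw [sum_vec_nine, sum_fin_nine]
  ring

theorem dominated_thetaDigons (hx : 0 ≤ x) (h₄ : 0 < x 4) (h₇ : 0 < x 7)
    (h : 0 < shapePoly thetaDigonsShape 4 x) : Dominated thetaDigonsShape x := by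
  refine (dominated_prism_of_empty_side (hx 6) (hx 5) (hx 1) (hx 2) le_rfl (by linarith) (hx 8)
    (add_nonneg (hx 0) (hx 3)) (h.trans_eq (shapePoly_thetaDigons 4 x))).of_le ?_
    (shapePoly_thetaDigons 2 x).le (shapePoly_thetaDigons 3 x).le (shapePoly_thetaDigons 4 x).le
  rw [sum_vec_nine, sum_fin_nine]
  ring

end Shapes

end Domination

/-! ### Improvements -/

/-- `H` is a bridgeless connected multigraph with as many vertices and edges as `G`, with at least
as many coindependent 2-sets, and with more coindependent 3-sets and 4-sets. -/
structure Improves (H G : Multigraph) : Prop where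
  nV_eq : H.nV = G.nV
  nE_eq : H.nE = G.nE
  connected : H.Connected
  bridgeless : H.Bridgeless
  two_le : #(G.coindep 2) ≤ #(H.coindep 2)
  three_lt : #(G.coindep 3) < #(H.coindep 3)
  four_lt : #(G.coindep 4) < #(H.coindep 4)

theorem Improves.rel_lt [Nonempty G.V] {p : ℝ} (h : H.Improves G) (hr : G.nE = G.nV + 3)
    (hp : 0 < p) (hp1 : p < 1) : G.rel p < H.rel p := by
  refine rel_lt_rel_of_card_coindep hp hp1 h.nE_eq (fun i => ?_) (by omega : 3 ≤ G.nE) h.three_lt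
  obtain hi | rfl | rfl | rfl | hi : i ≤ 1 ∨ i = 2 ∨ i = 3 ∨ i = 4 ∨ 5 ≤ i := by omega
  · exact card_coindep_le_of_le_one h.connected h.bridgeless h.nE_eq.symm hi
  · exact h.two_le
  · exact h.three_lt.le
  · exact h.four_lt.le
  · have hempty : G.coindep i = ∅ := eq_empty_of_forall_notMem fun F hF => by
      have := card_add_nV_le_of_mem_coindep hF
      omega
    rw [hempty, card_empty]
    exact Nat.zero_le _

section Subdivisions

variable {m n : ℕ} {σ : Fin m → Fin n × Fin n} {w : Fin m → ℕ}

theorem shapePoly_natCast (i : ℕ) :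
    shapePoly σ i (fun e => (w e : ℤ)) = (shapePoly σ i w : ℕ) := by
  simp only [shapePoly, Nat.cast_sum, Nat.cast_prod]

theorem card_coindep_subdivide_ofEnds (i : ℕ) :
    (#((subdivide (ofEnds σ) w).coindep i) : ℤ) = shapePoly σ i fun e => (w e : ℤ) :=
  (congrArg Nat.cast ((card_coindep_subdivide (ofEnds σ) w i).trans
    (coindepPoly_ofEnds i w))).trans (shapePoly_natCast i).symm

theorem card_coindep_of_isWeakSubdivision (h : IsWeakSubdivision G (ofEnds σ) w) (i : ℕ) :
    (#(G.coindep i) : ℤ) = shapePoly σ i fun e => (w e : ℤ) := by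
  obtain ⟨-, ⟨f⟩⟩ := h
  rw [card_coindep_eq_of_iso f, card_coindep_subdivide_ofEnds]

theorem nE_of_isWeakSubdivision (h : IsWeakSubdivision G (ofEnds σ) w) : G.nE = ∑ e, w e := by
  obtain ⟨-, ⟨f⟩⟩ := h
  exact (Fintype.card_congr f.eMap).trans (nE_subdivide (ofEnds σ) w)

theorem zeroAcyclic_of_coindep_pos {D : Multigraph} [Nonempty D.V] {w : D.E → ℕ} {i : ℕ}
    (hi : D.nE + 1 = D.nV + i) (h : 0 < #((subdivide D w).coindep i)) : ZeroAcyclic D w := by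
  obtain ⟨F, hF⟩ := card_pos.1 h
  obtain ⟨hcard, hconn⟩ := mem_coindep.1 hF
  obtain ⟨hinj, hconn⟩ := connOn_subdivide_iff.1 hconn
  refine zeroAcyclic_of_mem_coindep hi
    (mem_coindep.2 ⟨(card_image_of_injOn hinj).trans hcard, hconn⟩) fun e he => ?_
  obtain ⟨x, -, rfl⟩ := mem_image.1 he
  exact x.2.pos.ne'

theorem bridgeless_subdivide {D : Multigraph} {w : D.E → ℕ}
    (hD : ∀ e, D.ConnOn (univ \ {e})) : (subdivide D w).Bridgeless := fun x hx =>
  hx (connOn_subdivide (by simp) (by simpa using hD (chainOf D w x)))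

theorem connOn_k33_compl_singleton (e : (ofEnds k33Shape).E) :
    (ofEnds k33Shape).ConnOn (univ \ {e}) :=
  connOn_ofEnds_sdiff_iff.2
    ((by decide +kernel : ∀ e : Fin 9, ConnectedWithout k33Shape {e}) e)

theorem connected_k33 : (ofEnds k33Shape).Connected :=
  (connOn_k33_compl_singleton (0 : Fin 9)).mono (subset_univ _)

theorem exists_improves_of_dominated (hr : G.nE = G.nV + 3)
    (h : IsWeakSubdivision G (ofEnds σ) w) (hd : Dominated σ fun e => (w e : ℤ)) :
    ∃ H : Multigraph, H.Improves G := by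
  obtain ⟨y, hy, hsum, h₂, h₃, h₄⟩ := hd
  lift y to Fin 9 → ℕ using hy
  let H := subdivide (ofEnds k33Shape) y
  have hcount (i : ℕ) : (#(H.coindep i) : ℤ) = shapePoly k33Shape i fun e => (y e : ℤ) :=
    card_coindep_subdivide_ofEnds i
  simp only [← card_coindep_of_isWeakSubdivision h, ← hcount, Nat.cast_le, Nat.cast_lt] at h₂ h₃ h₄
  have : Nonempty (ofEnds k33Shape).V := ⟨(0 : Fin 6)⟩
  have hsum : ∑ e, y e = G.nE := by
    rw [nE_of_isWeakSubdivision h]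
    exact_mod_cast (show ∑ e, (y e : ℤ) = ∑ e, (w e : ℤ) from hsum)
  have hE : H.nE = G.nE := (nE_subdivide (ofEnds k33Shape) y).trans hsum
  have hV : H.nV + 9 = 6 + G.nE :=
    (nV_subdivide (zeroAcyclic_of_coindep_pos rfl ((Nat.zero_le _).trans_lt h₄))).trans
      (congrArg _ hsum)
  exact ⟨H, by omega, hE, connected_subdivide connected_k33,
    bridgeless_subdivide connOn_k33_compl_singleton, h₂, h₃, h₄⟩

end Subdivisions

theorem coindep_four_pos [Nonempty G.V] (hG : G.Connected) (hr : G.nE = G.nV + 3) :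
    0 < #(G.coindep 4) :=
  have ⟨F, hF, _⟩ := hG.exists_mem_coindep (r := 4) (by omega)
  card_pos.2 ⟨F, hF⟩

/-- The number of edges of each chain of a model. -/
def ChainModel.length {α ι : Type} [Fintype ι] {σ : ι → α × α} {S : Finset G.E}
    (M : G.ChainModel σ S) (i : ι) : ℤ := (M.chain i).length

theorem ChainModel.exists_improves {σ : Fin 9 → Fin 6 × Fin 6} [Nonempty G.V]
    (M : G.ChainModel σ univ) (hG : G.Connected) (hr : G.nE = G.nV + 3)
    (hd : 0 ≤ M.length → 0 < shapePoly σ 4 M.length → Dominated σ M.length) :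
    ∃ H : Multigraph, H.Improves G := by
  have h := M.isWeakSubdivision hG (by rw [hr, add_assoc]; rfl)
  refine exists_improves_of_dominated hr h (hd (fun _ => Nat.cast_nonneg _) ?_)
  have := coindep_four_pos hG hr
  rw [← Nat.cast_pos (α := ℤ), card_coindep_of_isWeakSubdivision h] at this
  exact this

theorem ChainModel.length_pos {α ι : Type} [Fintype ι] {σ : ι → α × α}
    {S : Finset G.E} (M : G.ChainModel σ S) {i : ι} (h : M.chain i ≠ []) : 0 < M.length i :=
  Nat.cast_pos.2 (List.length_pos_iff.2 h)

theorem Bridgeless.exists_improves [Nonempty G.V] (hb : G.Bridgeless) (hG : G.Connected)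
    (hr : G.nE = G.nV + 3) (hK : ¬ ∃ w, IsWeakSubdivision G K33 w) :
    ∃ H : Multigraph, H.Improves G := by
  obtain ⟨M, h₆, h₇, h₈⟩ | ⟨M, h₀, h₃⟩ | ⟨M, h₂, h₅⟩ | ⟨M, h₄, h₇⟩ :=
    exists_reducedModel hG hb hr hK
  · exact M.exists_improves hG hr fun h =>
      dominated_prism h (M.length_pos h₆) (M.length_pos h₇) (M.length_pos h₈)
  · exact M.exists_improves hG hr fun h => dominated_k4Digon h (M.length_pos h₀) (M.length_pos h₃)
  · exact M.exists_improves hG hr fun h => dominated_necklace3 h (M.length_pos h₂) (M.length_pos h₅)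
  · exact M.exists_improves hG hr fun h =>
      dominated_thetaDigons h (M.length_pos h₄) (M.length_pos h₇)

theorem exists_improves [Nonempty G.V] (hG : G.Connected) (hr : G.nE = G.nV + 3)
    (hK : ¬ ∃ w, IsWeakSubdivision G K33 w) : ∃ H : Multigraph, H.Improves G := by
  by_cases hb : G.Bridgeless
  · exact hb.exists_improves hG hr hK
  · obtain ⟨H, hV, hE, hconn, hbH, hlt⟩ :=
      exists_bridgeless_improvement (r := 4) (by norm_num) G hG (by omega) Fintype.card_pos hb
    exact ⟨H, hV, hE, hconn, hbH, (hlt 2 (by norm_num) (by norm_num)).le,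
      hlt 3 (by norm_num) (by norm_num), hlt 4 (by norm_num) le_rfl⟩

end Multigraph

/-- if G ∈ 𝒢_{n,n+3} is not a weak K_{3,3}-subdivision, some bridgeless
H ∈ 𝒢_{n,n+3} has d₂(H) ≤ d₂(G), d₃(H) < d₃(G), d₄(H) < d₄(G); hence every
p-optimal (n,n+3)-graph is a weak K_{3,3}-subdivision. -/
theorem p_optimal_k3_is_K33_subdivision (n : ℕ) (hn : 1 ≤ n) :
    (∀ G : Multigraph, memG G n (n + 3) →
      (¬ ∃ w : K33.E → ℕ, IsWeakSubdivision G K33 w) →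
      ∃ H : Multigraph, memG H n (n + 3) ∧ H.Bridgeless ∧
        H.d 2 ≤ G.d 2 ∧ H.d 3 < G.d 3 ∧ H.d 4 < G.d 4) ∧
    (∀ p : ℝ, 0 < p → p < 1 → ∀ G : Multigraph, pOptimal G n (n + 3) p →
      ∃ w : K33.E → ℕ, IsWeakSubdivision G K33 w) := by
  have nonempty {G : Multigraph} (hG : memG G n (n + 3)) : Nonempty G.V :=
    Fintype.card_pos_iff.1 (hn.trans_eq hG.1.symm)
  have exceedance {G : Multigraph} (hG : memG G n (n + 3)) : G.nE = G.nV + 3 := by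
    rw [hG.1, hG.2.1]
  have memG_of_improves {G H : Multigraph} (h : H.Improves G) (hG : memG G n (n + 3)) :
      memG H n (n + 3) :=
    ⟨h.nV_eq.trans hG.1, h.nE_eq.trans hG.2.1, h.connected⟩
  refine ⟨fun G hG hK => ?_, fun p hp hp1 G ⟨hG, hopt⟩ => by_contra fun hK => ?_⟩
  all_goals
    have := nonempty hG
    obtain ⟨H, h⟩ := Multigraph.exists_improves hG.2.2 (exceedance hG) hK
  · exact ⟨H, memG_of_improves h hG, h.bridgeless,
      Multigraph.d_le_d_of_card_coindep_le h.nE_eq h.two_le,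
      Multigraph.d_lt_d_of_card_coindep_lt h.nE_eq h.three_lt,
      Multigraph.d_lt_d_of_card_coindep_lt h.nE_eq h.four_lt⟩
  · exact (h.rel_lt (exceedance hG) hp hp1).not_ge (hopt H (memG_of_improves h hG))
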